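/- arXiv:1304.6917 — 2 statements merged into one kernel-verified Lean document; each statement's English description precedes it below -/
import Mathlib

section
/- Suppose that k, r and t are positive integers with k ≥ 2, max{2, (k−1)/2} ≤ t ≤ k, 1 ≤ r ≤ k and r + t ≥ k. Define κ = r(t+1) − (1/2)(t+r−k)(t+r−k−1 + (2r−2)/(t−1)). Then for each ε > 0 there exists a constant C = C(k,r,t,ε) > 0 such that for all real X ≥ 1 one has J_{r(t+1),k}(X) ≤ C·X^{2r(t+1) − κ + ε}. -/
/-- Number of integral solutions of the Vinogradov system
of degree k in 2s variables, all lying in [1, X]. -/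
noncomputable def Jcount (s k : ℕ) (X : ℝ) : ℕ :=
  Set.ncard {xy : (Fin s → ℤ) × (Fin s → ℤ) |
    (∀ i, 1 ≤ xy.1 i ∧ (xy.1 i : ℝ) ≤ X) ∧
    (∀ i, 1 ≤ xy.2 i ∧ (xy.2 i : ℝ) ≤ X) ∧
    ∀ j ∈ Finset.Icc 1 k, ∑ i, ((xy.1 i) ^ j - (xy.2 i) ^ j) = 0}

/-- The exponent kappa = r(t+1) - (1/2)(t+r-k)(t+r-k-1+(2r-2)/(t-1)). -/
noncomputable def kappa (k r t : ℕ) : ℝ :=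
  (r : ℝ) * ((t : ℝ) + 1) -
    (1/2) * ((t : ℝ) + r - k) * ((t : ℝ) + r - k - 1 + (2*(r:ℝ) - 2)/((t:ℝ) - 1))

/-!
The bound is Vinogradov's mean value theorem, `J_{s,k}(X) ≪ X ^ (2s - min(s, k(k+1)/2) + ε)`,
combined with the inequality `κ ≤ min(s, k(k+1)/2)` for `s = r(t+1)`.

The mean value theorem is proved by `ℓ²` decoupling over `ℤ / p ^ N` with `p > k` prime, by
induction on `k`. Near a point of the moment curve there are directions of the frequency group in
which the pieces of one residue class move along a moment curve of degree `l`, while a shorter piece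
at a distance prime to `p` does not move at all: this gives, from decoupling of degree `l < k`, a
bilinear inequality for transversal pieces. Interpolating these inequalities by Hölder's inequality
and iterating them gains a power of the number of residue classes. Splitting a sum into one
dominant residue class modulo `p` and transversal pairs of classes then allows induction on the
scale, as the dominant class becomes a sum over a curve close to the moment curve after affine
rescaling.
-/

namespace Vinogradov

open Finset Polynomial

/-! ### Residue classes -/

section ResidueClasses

variable {ι : Type*} {x : ι → ℤ} {q : ℤ} {S B : Finset ι}

/-- All points `x i` with `i ∈ S` lie in a single residue class modulo `q`. -/
def CongruentOn (x : ι → ℤ) (q : ℤ) (S : Finset ι) : Prop :=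
  ∀ i ∈ S, ∀ j ∈ S, x i ≡ x j [ZMOD q]

/-- No point `x i` with `i ∈ S` is congruent modulo `q` to a point `x j` with `j ∈ T`. -/
def Transversal (x : ι → ℤ) (q : ℤ) (S T : Finset ι) : Prop :=
  ∀ i ∈ S, ∀ j ∈ T, ¬ x i ≡ x j [ZMOD q]

theorem Transversal.symm {T : Finset ι} (h : Transversal x q S T) : Transversal x q T S :=
  fun i hi j hj hij => h j hj i hi hij.symm

theorem Transversal.mono {S' T T' : Finset ι} (h : Transversal x q S T) (hS : S' ⊆ S)
    (hT : T' ⊆ T) : Transversal x q S' T' :=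
  fun i hi j hj => h i (hS hi) j (hT hj)

theorem Transversal.exists_centers {T : Finset ι} {r₁ r₂ : ℤ} (hST : Transversal x q S T)
    (hS : CongruentOn x r₁ S) (hT : CongruentOn x r₂ T) (hq : ¬ q ∣ 1) :
    ∃ ξ η : ℤ, (∀ i ∈ S, r₁ ∣ x i - ξ) ∧ (∀ j ∈ T, r₂ ∣ x j - η) ∧ ¬ q ∣ ξ - η := by
  rcases S.eq_empty_or_nonempty with rfl | ⟨i, hi⟩
  · rcases T.eq_empty_or_nonempty with rfl | ⟨j, hj⟩
    · exact ⟨1, 0, by simp, by simp, by simpa using hq⟩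
    · exact ⟨x j + 1, x j, by simp, fun j' hj' => (hT j hj j' hj').dvd, by simpa using hq⟩
  · rcases T.eq_empty_or_nonempty with rfl | ⟨j, hj⟩
    · exact ⟨x i, x i - 1, fun i' hi' => (hS i hi i' hi').dvd, by simp, by simpa using hq⟩
    · exact ⟨x i, x j, fun i' hi' => (hS i hi i' hi').dvd, fun j' hj' => (hT j hj j' hj').dvd,
        fun h => hST i hi j hj (Int.modEq_iff_dvd.2 h).symm⟩

variable [DecidableEq ι]

/-- The partition of the finite index set `S` according to the residue class of `x i` modulo `q`. -/
def residueClasses (x : ι → ℤ) (q : ℤ) (S : Finset ι) : Finpartition S :=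
  haveI : DecidableRel (Setoid.ker fun i => x i % q) :=
    fun i j => inferInstanceAs (Decidable (x i % q = x j % q))
  .ofSetSetoid (Setoid.ker fun i => x i % q) S

theorem mem_residueClasses :
    B ∈ (residueClasses x q S).parts ↔ ∃ i ∈ S, {j ∈ S | x i ≡ x j [ZMOD q]} = B := by
  simp only [residueClasses, Finpartition.ofSetSetoid_parts, mem_image]
  rfl

theorem congruentOn_of_mem_residueClasses (hB : B ∈ (residueClasses x q S).parts) :
    CongruentOn x q B := by
  obtain ⟨c, -, rfl⟩ := mem_residueClasses.1 hB
  exact fun i hi j hj => (mem_filter.1 hi).2.symm.trans (mem_filter.1 hj).2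

theorem mem_of_modEq (hB : B ∈ (residueClasses x q S).parts) {i j : ι} (hi : i ∈ B) (hj : j ∈ S)
    (h : x i ≡ x j [ZMOD q]) : j ∈ B := by
  obtain ⟨c, -, rfl⟩ := mem_residueClasses.1 hB
  exact mem_filter.2 ⟨hj, (mem_filter.1 hi).2.trans h⟩

theorem transversal_of_mem_residueClasses {C : Finset ι} (hB : B ∈ (residueClasses x q S).parts)
    (hC : C ∈ (residueClasses x q S).parts) (hBC : B ≠ C) : Transversal x q B C := by
  intro i hi j hj hij
  have hjB : j ∈ B := mem_of_modEq hB hi ((residueClasses x q S).subset hC hj) hij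
  exact hBC ((residueClasses x q S).eq_of_mem_parts hB hC hjB hj)

theorem sum_parts {M : Type*} [AddCommMonoid M] (𝓟 : Finpartition S) (h : ι → M) :
    ∑ B ∈ 𝓟.parts, ∑ i ∈ B, h i = ∑ i ∈ S, h i := by
  conv_rhs => rw [← 𝓟.biUnion_parts, sum_biUnion 𝓟.disjoint]
  rfl

theorem card_residueClasses_le (x : ι → ℤ) {q : ℕ} (hq : 0 < q) (S : Finset ι) :
    #(residueClasses x q S).parts ≤ q := by
  have hq' : (0 : ℤ) < q := by exact_mod_cast hq
  calc #(residueClasses x q S).parts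
      ≤ #((Ico (0 : ℤ) q).image fun c => {j ∈ S | c ≡ x j [ZMOD q]}) := by
        refine card_le_card fun B hB => ?_
        obtain ⟨i, -, rfl⟩ := mem_residueClasses.1 hB
        refine mem_image.2 ⟨x i % q,
          mem_Ico.2 ⟨Int.emod_nonneg _ hq'.ne', Int.emod_lt_of_pos _ hq'⟩,
          filter_congr fun j _ => ?_⟩
        rw [Int.ModEq, Int.emod_emod, Int.ModEq]
    _ ≤ #(Ico (0 : ℤ) q) := card_image_le
    _ = q := by simp

theorem residueClasses_parts_subset {q' : ℤ} (h : q ∣ q')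
    (hB : B ∈ (residueClasses x q S).parts) :
    (residueClasses x q' B).parts ⊆ (residueClasses x q' S).parts := by
  intro J hJ
  obtain ⟨i, hi, rfl⟩ := mem_residueClasses.1 hJ
  refine mem_residueClasses.2 ⟨i, (residueClasses x q S).subset hB hi, ?_⟩
  ext j
  simp only [mem_filter]
  exact ⟨fun ⟨hj, hij⟩ => ⟨mem_of_modEq hB hi hj (hij.of_dvd h), hij⟩,
    fun ⟨hj, hij⟩ => ⟨(residueClasses x q S).subset hB hj, hij⟩⟩

theorem sum_residueClasses_residueClasses {M : Type*} [AddCommMonoid M] {q' : ℤ} (h : q ∣ q')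
    (F : Finset ι → M) :
    ∑ B ∈ (residueClasses x q S).parts, ∑ J ∈ (residueClasses x q' B).parts, F J =
      ∑ J ∈ (residueClasses x q' S).parts, F J := by
  set 𝓑 := residueClasses x q S
  have hrefine : (residueClasses x q' S).parts =
      𝓑.parts.biUnion fun B => (residueClasses x q' B).parts := by
    ext J
    simp only [mem_biUnion]
    refine ⟨fun hJ => ?_, fun ⟨B, hB, hJ⟩ => residueClasses_parts_subset h hB hJ⟩
    obtain ⟨i, hi⟩ := (residueClasses x q' S).nonempty_of_mem_parts hJ
    obtain ⟨B, hB, hiB⟩ := 𝓑.exists_mem ((residueClasses x q' S).subset hJ hi)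
    obtain ⟨J', hJ', hiJ'⟩ := (residueClasses x q' B).exists_mem hiB
    have hJJ' := (residueClasses x q' S).eq_of_mem_parts hJ
      (residueClasses_parts_subset h hB hJ') hi hiJ'
    exact ⟨B, hB, hJJ' ▸ hJ'⟩
  rw [hrefine, sum_biUnion]
  intro B hB B' hB' hne
  refine Finset.disjoint_left.2 fun J hJ hJ' => hne ?_
  obtain ⟨i, hi⟩ := (residueClasses x q' B).nonempty_of_mem_parts hJ
  exact 𝓑.eq_of_mem_parts hB hB' ((residueClasses x q' B).subset hJ hi)
    ((residueClasses x q' B').subset hJ' hi)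

theorem residueClasses_congr {y : ι → ℤ} {q' : ℤ}
    (h : ∀ i ∈ S, ∀ j ∈ S, x i ≡ x j [ZMOD q] ↔ y i ≡ y j [ZMOD q']) :
    residueClasses x q S = residueClasses y q' S := by
  ext B
  rw [mem_residueClasses, mem_residueClasses]
  exact exists_congr fun i => and_congr_right fun hi => by rw [filter_congr (h i hi)]

theorem residueClasses_of_eq_add_mul {y : ι → ℤ} {ξ r : ℤ} (hq : q ≠ 0)
    (h : ∀ i ∈ S, x i = ξ + q * y i) : residueClasses x (q * r) S = residueClasses y r S := by
  refine residueClasses_congr fun i hi j hj => ?_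
  rw [h i hi, h j hj, Int.modEq_iff_dvd, Int.modEq_iff_dvd, add_sub_add_left_eq_sub, ← mul_sub,
    mul_dvd_mul_iff_left hq]

end ResidueClasses

/-! ### Inequalities for finite sums -/

section FiniteSums

variable {V κ : Type*}

theorem sum_rpow_mul_rpow_le (s : Finset V) {F G : V → ℝ} (hF : 0 ≤ F) (hG : 0 ≤ G) {θ : ℝ}
    (h0 : 0 < θ) (h1 : θ < 1) :
    ∑ v ∈ s, F v ^ θ * G v ^ (1 - θ) ≤ (∑ v ∈ s, F v) ^ θ * (∑ v ∈ s, G v) ^ (1 - θ) := by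
  have h1' : 0 < 1 - θ := by linarith
  have hc : Real.HolderConjugate θ⁻¹ (1 - θ)⁻¹ :=
    Real.holderConjugate_iff.2 ⟨one_lt_inv_iff₀.2 ⟨h0, h1⟩, by simp⟩
  simpa only [one_div, inv_inv, Real.rpow_rpow_inv (hF _) h0.ne',
    Real.rpow_rpow_inv (hG _) h1'.ne'] using
    Real.inner_le_Lp_mul_Lq_of_nonneg s hc (f := fun v => F v ^ θ) (g := fun v => G v ^ (1 - θ))
      (fun v _ => Real.rpow_nonneg (hF v) _) (fun v _ => Real.rpow_nonneg (hG v) _)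

theorem weighted_Lp_add_le (s : Finset V) {r : ℝ} (hr : 1 ≤ r) {W f g : V → ℝ} (hW : 0 ≤ W)
    (hf : 0 ≤ f) (hg : 0 ≤ g) :
    (∑ v ∈ s, W v * (f v + g v) ^ r) ^ r⁻¹ ≤
      (∑ v ∈ s, W v * f v ^ r) ^ r⁻¹ + (∑ v ∈ s, W v * g v ^ r) ^ r⁻¹ := by
  have hr0 : r ≠ 0 := by linarith
  have hpow : ∀ {c : V → ℝ}, 0 ≤ c → ∀ v, (W v ^ r⁻¹ * c v) ^ r = W v * c v ^ r := fun hc v => by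
    rw [Real.mul_rpow (Real.rpow_nonneg (hW v) _) (hc v), Real.rpow_inv_rpow (hW v) hr0]
  have h := Real.Lp_add_le_of_nonneg s hr (f := fun v => W v ^ r⁻¹ * f v)
    (g := fun v => W v ^ r⁻¹ * g v)
    (fun v _ => mul_nonneg (Real.rpow_nonneg (hW v) _) (hf v))
    (fun v _ => mul_nonneg (Real.rpow_nonneg (hW v) _) (hg v))
  simpa only [← mul_add, one_div, hpow hf, hpow hg, ← Pi.add_apply f g,
    hpow (add_nonneg hf hg)] using h

theorem minkowski (s : Finset V) (t : Finset κ) {r : ℝ} (hr : 1 ≤ r) {W : V → ℝ} (hW : 0 ≤ W)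
    {u : κ → V → ℝ} (hu : 0 ≤ u) :
    ∑ v ∈ s, W v * (∑ b ∈ t, u b v) ^ r ≤ (∑ b ∈ t, (∑ v ∈ s, W v * u b v ^ r) ^ r⁻¹) ^ r := by
  have hr0 : 0 < r := by linarith
  have hnonneg : 0 ≤ ∑ v ∈ s, W v * (∑ b ∈ t, u b v) ^ r := sum_nonneg fun v _ =>
    mul_nonneg (hW v) (Real.rpow_nonneg (sum_nonneg fun b _ => hu b v) _)
  rw [← Real.rpow_inv_le_iff_of_pos hnonneg (sum_nonneg fun b _ => Real.rpow_nonneg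
    (sum_nonneg fun v _ => mul_nonneg (hW v) (Real.rpow_nonneg (hu b v) _)) _) hr0]
  simpa only [Finset.sum_apply] using le_sum_of_subadditive_on_pred
    (fun f : V → ℝ => (∑ v ∈ s, W v * f v ^ r) ^ r⁻¹) (0 ≤ ·)
    (by simp [hr0.ne']) (fun f g hf hg => weighted_Lp_add_le s hr hW hf hg)
    (fun f g hf hg => add_nonneg hf hg) u (s := t) fun b _ => hu b

theorem sum_rpow_le_rpow_sum (t : Finset κ) {u : κ → ℝ} (hu : 0 ≤ u) {r : ℝ} (hr : 1 ≤ r) :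
    ∑ b ∈ t, u b ^ r ≤ (∑ b ∈ t, u b) ^ r := by
  have hr0 : 0 < r := by linarith
  rw [← Real.rpow_inv_le_iff_of_pos (sum_nonneg fun b _ => Real.rpow_nonneg (hu b) _)
    (sum_nonneg fun b _ => hu b) hr0]
  simpa only [Real.rpow_rpow_inv (hu _) hr0.ne'] using le_sum_of_subadditive_on_pred
    (fun a : ℝ => a ^ r⁻¹) (0 ≤ ·) (by simp [hr0.ne'])
    (fun a b ha hb => Real.rpow_add_le_add_rpow ha hb (by positivity) (inv_le_one_of_one_le₀ hr))
    (fun a b => add_nonneg) (fun b => u b ^ r) (s := t) fun b _ => Real.rpow_nonneg (hu b) r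

theorem norm_sum_le_card_mul (t : Finset κ) {z : κ → ℂ} {M q : ℝ} (hM : ∀ b ∈ t, ‖z b‖ ≤ M)
    (hM0 : 0 ≤ M) (hq : #t ≤ q) : ‖∑ b ∈ t, z b‖ ≤ q * M :=
  calc ‖∑ b ∈ t, z b‖ ≤ #t * M := by
        simpa using (norm_sum_le t z).trans (sum_le_card_nsmul t _ M hM)
    _ ≤ q * M := by gcongr

theorem norm_sum_pow_le (t : Finset κ) (z : κ → ℂ) {m : ℕ} (hm : m ≠ 0) :
    ‖∑ b ∈ t, z b‖ ^ m ≤ (#t : ℝ) ^ m * ∑ b ∈ t, ‖z b‖ ^ m := by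
  rcases t.eq_empty_or_nonempty with rfl | ht
  · simp [hm]
  obtain ⟨c, hc, hmax⟩ := exists_max_image t (fun b => ‖z b‖) ht
  calc ‖∑ b ∈ t, z b‖ ^ m ≤ (#t * ‖z c‖) ^ m := by
        gcongr; exact norm_sum_le_card_mul t hmax (norm_nonneg _) le_rfl
    _ = (#t : ℝ) ^ m * ‖z c‖ ^ m := mul_pow ..
    _ ≤ _ := by
        gcongr
        exact single_le_sum (f := fun b => ‖z b‖ ^ m) (fun b _ => by positivity) hc

theorem norm_sum_le_of_dominant [DecidableEq κ] {t : Finset κ} {z : κ → ℂ} {q τ : ℝ} {b : κ}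
    (hb : b ∈ t) (hq : #t ≤ q) (h0 : 0 ≤ τ) (h : ∀ c ∈ t.erase b, ‖z c‖ ≤ τ * ‖z b‖) :
    ‖∑ b ∈ t, z b‖ ≤ (1 + q * τ) * ‖z b‖ := by
  have hq' : #(t.erase b) ≤ q := (Nat.cast_le.2 card_erase_le).trans hq
  calc ‖∑ b ∈ t, z b‖ = ‖z b + ∑ c ∈ t.erase b, z c‖ := by rw [add_sum_erase t _ hb]
    _ ≤ ‖z b‖ + q * (τ * ‖z b‖) :=
        norm_add_le_of_le le_rfl (norm_sum_le_card_mul _ h (by positivity) hq')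
    _ = (1 + q * τ) * ‖z b‖ := by ring

/-- Either one summand dominates, or two different summands are of comparable size. -/
theorem norm_sum_pow_le_narrow_add_broad [DecidableEq κ] (t : Finset κ) (z : κ → ℂ)
    {q τ : ℝ} (hq : #t ≤ q) (h0 : 0 < τ) {d m : ℕ} (hm : m ≠ 0) :
    ‖∑ b ∈ t, z b‖ ^ (d + m) ≤ (1 + q * τ) ^ (d + m) * ∑ b ∈ t, ‖z b‖ ^ (d + m) +
      q ^ (d + m) * (τ ^ d)⁻¹ * ∑ b ∈ t, ∑ c ∈ t.erase b, ‖z c‖ ^ d * ‖z b‖ ^ m := by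
  have hq0 : 0 ≤ q := (Nat.cast_nonneg _).trans hq
  rcases t.eq_empty_or_nonempty with rfl | ht
  · simp [hm]
  obtain ⟨b, hb, hmax⟩ := exists_max_image t (fun b => ‖z b‖) ht
  by_cases h : ∀ c ∈ t.erase b, ‖z c‖ ≤ τ * ‖z b‖
  · refine le_add_of_le_of_nonneg ?_ (by positivity)
    calc ‖∑ b ∈ t, z b‖ ^ (d + m) ≤ ((1 + q * τ) * ‖z b‖) ^ (d + m) := by
          gcongr; exact norm_sum_le_of_dominant hb hq h0.le h
      _ = (1 + q * τ) ^ (d + m) * ‖z b‖ ^ (d + m) := mul_pow ..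
      _ ≤ _ := by
        gcongr
        exact single_le_sum (f := fun b => ‖z b‖ ^ (d + m)) (fun b _ => by positivity) hb
  · push Not at h
    obtain ⟨c, hc, hcb⟩ := h
    refine le_add_of_nonneg_of_le (by positivity) ?_
    have hcomparable : ‖z b‖ ^ d ≤ (τ ^ d)⁻¹ * ‖z c‖ ^ d := by
      rw [le_inv_mul_iff₀ (by positivity), ← mul_pow]
      gcongr
    calc ‖∑ b ∈ t, z b‖ ^ (d + m) ≤ (q * ‖z b‖) ^ (d + m) := by
          gcongr; exact norm_sum_le_card_mul t hmax (norm_nonneg _) hq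
      _ = q ^ (d + m) * (‖z b‖ ^ d * ‖z b‖ ^ m) := by ring
      _ ≤ q ^ (d + m) * ((τ ^ d)⁻¹ * ‖z c‖ ^ d * ‖z b‖ ^ m) := by gcongr
      _ = q ^ (d + m) * (τ ^ d)⁻¹ * (‖z c‖ ^ d * ‖z b‖ ^ m) := by ring
      _ ≤ _ := by
        gcongr
        refine (single_le_sum (f := fun c => ‖z c‖ ^ d * ‖z b‖ ^ m)
          (fun c _ => by positivity) hc).trans ?_
        exact single_le_sum (f := fun b => ∑ c ∈ t.erase b, ‖z c‖ ^ d * ‖z b‖ ^ m)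
          (fun b _ => by positivity) hb

end FiniteSums

/-! ### Normal forms of curves close to the moment curve -/

section NormalForm

variable {R F : Type*} [CommRing R] {d k l : ℕ}

/-- The curve `φ` agrees with the moment curve `(X, X ^ 2, …, X ^ k)` modulo `π`. -/
def NearMoment (π : R) (φ : Fin k → R[X]) : Prop :=
  ∀ j, ∃ ψ : R[X], φ j = X ^ ((j : ℕ) + 1) + C π * ψ

/-- The matrix whose columns are the Taylor coefficients of orders `1, …, l` at `z` of the
polynomials `Q j`. -/
noncomputable def taylorMatrix (Q : Fin l → R[X]) (z : R) : Matrix (Fin l) (Fin l) R :=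
  .of fun i j => (taylor z (Q j)).coeff ((i : ℕ) + 1)

theorem map_taylorMatrix [CommRing F] (f : R →+* F) (Q : Fin l → R[X]) (z : R) :
    f.mapMatrix (taylorMatrix Q z) = taylorMatrix (fun j => (Q j).map f) (f z) := by
  ext i j
  simp [taylorMatrix, ← map_taylor]

theorem taylorMatrix_mulVec (Q : Fin l → R[X]) (z : R) (v : Fin l → R) (i : Fin l) :
    (taylorMatrix Q z).mulVec v i = (taylor z (∑ j, C (v j) * Q j)).coeff ((i : ℕ) + 1) := by
  rw [map_sum, finsetSum_coeff, Matrix.mulVec, dotProduct]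
  refine sum_congr rfl fun j _ => ?_
  rw [taylor_mul, taylor_C, coeff_C_mul, mul_comm]
  rfl

theorem X_sub_C_pow_dvd_derivative {P : R[X]} {z : R}
    (h : ∀ i < l, (taylor z P).coeff (i + 1) = 0) : (X - C z) ^ l ∣ derivative P := by
  have hderiv : taylor z (derivative P) = derivative (taylor z P) := by
    simp [taylor_apply, derivative_comp]
  rw [X_sub_C_pow_dvd_iff, ← taylor_apply, hderiv, X_pow_dvd_iff]
  intro i hi
  rw [coeff_derivative, h i hi, zero_mul]

theorem eq_zero_of_pow_dvd_of_degree_lt [Field F] {P : F[X]} {z : F} (hz : z ≠ 0 ∨ d = 0)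
    (hl : (X - C z) ^ l ∣ P) (hd : X ^ d ∣ P) (hdeg : P.degree < (d + l : ℕ)) : P = 0 := by
  have hcop : IsCoprime ((X - C z) ^ l) ((X : F[X]) ^ d) := by
    rcases hz with hz | rfl
    · refine IsCoprime.pow ?_
      simpa using isCoprime_X_sub_C_of_isUnit_sub (a := z) (b := (0 : F)) (by simpa using hz)
    · simp [isCoprime_one_right]
  refine eq_zero_of_dvd_of_degree_lt (hcop.mul_dvd hl hd) (hdeg.trans_eq ?_)
  rw [degree_mul, degree_pow, degree_X_sub_C, degree_X_pow, nsmul_one, Nat.cast_add, add_comm]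

theorem derivative_sum_C_mul {Q : Fin l → R[X]} {c : Fin l → R}
    (hQ : ∀ j, Q j = C (c j) + X ^ (d + j + 1)) (v : Fin l → R) :
    derivative (∑ j, C (v j) * Q j) =
      ∑ j : Fin l, C (v j * ((d + j + 1 : ℕ) : R)) * X ^ (d + (j : ℕ)) := by
  rw [derivative_sum]
  refine sum_congr rfl fun j _ => ?_
  rw [derivative_C_mul, hQ]
  simp only [derivative_add, derivative_C, derivative_X_pow, zero_add, C_mul,
    Nat.add_sub_cancel, mul_assoc]

theorem det_taylorMatrix_ne_zero [Field F] (hF : ∀ m : ℕ, 1 ≤ m → m ≤ d + l → (m : F) ≠ 0)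
    {z : F} (hz : z ≠ 0 ∨ d = 0) {Q : Fin l → F[X]} {c : Fin l → F}
    (hQ : ∀ j, Q j = C (c j) + X ^ (d + j + 1)) : (taylorMatrix Q z).det ≠ 0 := by
  intro h0
  obtain ⟨v, hv, hv0⟩ := Matrix.exists_mulVec_eq_zero_iff.2 h0
  have hP := derivative_sum_C_mul hQ v
  have hzero : derivative (∑ j, C (v j) * Q j) = 0 := by
    refine eq_zero_of_pow_dvd_of_degree_lt (l := l) hz (X_sub_C_pow_dvd_derivative fun i hi => ?_)
      ?_ ?_
    · rw [← taylorMatrix_mulVec Q z v ⟨i, hi⟩, hv0, Pi.zero_apply]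
    · rw [hP]
      exact dvd_sum fun j _ => (pow_dvd_pow _ (Nat.le_add_right _ _)).mul_left _
    · rw [hP]
      refine (degree_sum_le _ _).trans_lt ((Finset.sup_lt_iff (WithBot.bot_lt_coe _)).2 fun j _ =>
        (degree_C_mul_X_pow_le _ _).trans_lt ?_)
      exact_mod_cast Nat.add_lt_add_left j.2 d
  refine hv (funext fun j => ?_)
  have hcoeff : (derivative (∑ j, C (v j) * Q j)).coeff (d + j) =
      v j * ((d + j + 1 : ℕ) : F) := by
    simp only [hP, finsetSum_coeff, coeff_C_mul_X_pow, Nat.add_left_cancel_iff, Fin.val_inj,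
      sum_ite_eq, mem_univ, if_true]
  rw [hzero, coeff_zero, eq_comm] at hcoeff
  exact (mul_eq_zero.1 hcoeff).resolve_right (hF _ (by omega) (by omega))

theorem exists_taylor_normal_form {Q : Fin l → R[X]} {z : R}
    (h : IsUnit (taylorMatrix Q z).det) :
    ∃ T : Matrix (Fin l) (Fin l) R, ∃ c : Fin l → R, ∃ H : Fin l → R[X],
      ∀ i, ∑ j, C (T j i) * taylor z (Q j) =
        C (c i) + X ^ ((i : ℕ) + 1) + X ^ (l + 1) * H i := by
  set T := (taylorMatrix Q z)⁻¹
  have hT : taylorMatrix Q z * T = 1 := Matrix.mul_nonsing_inv _ h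
  set q : Fin l → R[X] := fun i => ∑ j, C (T j i) * taylor z (Q j)
  have hcoeff : ∀ m i : Fin l, (q i).coeff ((m : ℕ) + 1) = (1 : Matrix (Fin l) (Fin l) R) m i := by
    intro m i
    rw [← hT, finsetSum_coeff, Matrix.mul_apply]
    exact sum_congr rfl fun j _ => by rw [coeff_C_mul, mul_comm]; rfl
  have hdvd : ∀ i, X ^ (l + 1) ∣ q i - (C ((q i).coeff 0) + X ^ ((i : ℕ) + 1)) := by
    intro i
    refine X_pow_dvd_iff.2 fun m hm => ?_
    rcases m with _ | m
    · simp
    · rw [coeff_sub, hcoeff ⟨m, by omega⟩ i, coeff_add, coeff_C_succ, coeff_X_pow,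
        Matrix.one_apply]
      simp [Fin.ext_iff]
  choose H hH using hdvd
  exact ⟨T, fun i => (q i).coeff 0, H, fun i => by rw [← hH]; ring⟩

theorem NearMoment.map_eq [CommRing F] {f : R →+* F} {π : R} (hπ : f π = 0) {φ : Fin k → R[X]}
    (hφ : NearMoment π φ) (j : Fin k) : (φ j).map f = X ^ ((j : ℕ) + 1) := by
  obtain ⟨ψ, hψ⟩ := hφ j
  simp [hψ, hπ]

theorem exists_rescaled_monomial (π e : R) (G : R[X]) {a i : ℕ} (ha : 1 ≤ a) (hi : i < l) :
    ∃ ψ : R[X], ∀ y, π ^ (a * (l - 1 - i)) *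
        (C e + X ^ (i + 1) + X ^ (l + 1) * G).eval (π ^ a * y) =
      π ^ (a * (l - 1 - i)) * e + π ^ (a * l) * (X ^ (i + 1) + C π * ψ).eval y := by
  obtain ⟨u, rfl⟩ : ∃ u, l = i + 1 + u := Nat.exists_eq_add_of_lt hi |>.imp fun u hu => by omega
  obtain ⟨b, rfl⟩ : ∃ b, a = b + 1 := ⟨a - 1, by omega⟩
  refine ⟨C (π ^ ((b + 1) * u + b)) * (X ^ (i + 1 + u + 1) * G.comp (C (π ^ (b + 1)) * X)),
    fun y => ?_⟩
  have hsub : i + 1 + u - 1 - i = u := by omega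
  simp only [eval_add, eval_pow, eval_X, eval_mul, eval_C, eval_comp, hsub]
  ring

variable [Field F] {f : R →+* F} [IsLocalHom f] {π : R}

theorem isUnit_det_taylorMatrix (hF : ∀ m : ℕ, 1 ≤ m → m ≤ d + l → (m : F) ≠ 0) {z : R}
    (hz : f z ≠ 0 ∨ d = 0) {Q : Fin l → R[X]} {c : Fin l → F}
    (hQ : ∀ j, (Q j).map f = C (c j) + X ^ (d + j + 1)) : IsUnit (taylorMatrix Q z).det := by
  refine isUnit_of_map_unit f _ (isUnit_iff_ne_zero.2 ?_)
  rw [RingHom.map_det, map_taylorMatrix]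
  exact det_taylorMatrix_ne_zero hF hz hQ

theorem NearMoment.exists_normal_form (hπ : f π = 0) (hF : ∀ m : ℕ, 1 ≤ m → m ≤ k → (m : F) ≠ 0)
    {φ : Fin k → R[X]} (hφ : NearMoment π φ) (η : R) :
    ∃ S : Matrix (Fin k) (Fin k) R, ∃ c : Fin k → R, ∃ H : Fin k → R[X],
      (∀ i, ∑ j, C (S j i) * taylor η (φ j) =
        C (c i) + X ^ ((i : ℕ) + 1) + X ^ (k + 1) * H i) ∧ ∀ i, (H i).map f = 0 := by
  obtain ⟨S, c, H, hS⟩ := exists_taylor_normal_form <|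
    isUnit_det_taylorMatrix (f := f) (d := 0) (by simpa using hF) (z := η) (Or.inr rfl) (c := 0)
      (Q := φ) fun j => by simp [hφ.map_eq hπ j]
  refine ⟨S, c, H, hS, fun i => ?_⟩
  have hmap := congrArg (Polynomial.map f) (hS i)
  simp only [Polynomial.map_add, Polynomial.map_mul, Polynomial.map_pow, map_X, map_C,
    Polynomial.map_sum, map_taylor, hφ.map_eq hπ, ← sub_eq_iff_eq_add'] at hmap
  have hdeg : X ^ (k + 1) * (H i).map f ∈ degreeLT F (k + 1) := by
    have hpow : ∀ j ≤ k, (X : F[X]) ^ j ∈ degreeLT F (k + 1) := fun j hj =>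
      mem_degreeLT.2 ((degree_X_pow_le j).trans_lt (by exact_mod_cast Nat.lt_succ_of_le hj))
    have hconst : ∀ b : F, C b ∈ degreeLT F (k + 1) := fun b =>
      mem_degreeLT.2 (degree_C_le.trans_lt (by exact_mod_cast k.succ_pos))
    rw [← hmap]
    refine sub_mem (sum_mem fun j _ => ?_) (add_mem (hconst _) (hpow _ i.2))
    rw [← smul_eq_C_mul]
    refine Submodule.smul_mem _ _ (mem_degreeLT.2 ?_)
    rw [degree_taylor]
    exact mem_degreeLT.1 (hpow _ j.2)
  have hzero := eq_zero_of_dvd_of_degree_lt (dvd_mul_right (X ^ (k + 1)) ((H i).map f))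
    (by simpa only [degree_X_pow] using mem_degreeLT.1 hdeg)
  exact (mul_eq_zero.1 hzero).resolve_left (pow_ne_zero _ X_ne_zero)

theorem NearMoment.exists_transversal_normal_form (hπ : f π = 0)
    (hF : ∀ m : ℕ, 1 ≤ m → m ≤ d + l → (m : F) ≠ 0) {φ : Fin (d + l) → R[X]}
    (hφ : NearMoment π φ) {ξ η : R} (hξη : f (ξ - η) ≠ 0) :
    ∃ Θ : Matrix (Fin (d + l)) (Fin l) R,
      (∃ (e : Fin l → R) (G : Fin l → R[X]), ∀ i, ∑ j, C (Θ j i) * taylor ξ (φ j) =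
        C (e i) + X ^ ((i : ℕ) + 1) + X ^ (l + 1) * G i) ∧
      ∃ (c : Fin l → R) (P : Fin l → R[X]), ∀ i, ∑ j, C (Θ j i) * taylor η (φ j) =
        C (c i) + X ^ (d + 1) * P i := by
  obtain ⟨S, c, H, hS, hH⟩ := hφ.exists_normal_form hπ hF η
  set Q : Fin l → R[X] := fun j => ∑ j', C (S j' (Fin.natAdd d j)) * taylor η (φ j')
  have hQ : ∀ j, Q j = C (c (Fin.natAdd d j)) + X ^ (d + j + 1) +
      X ^ (d + l + 1) * H (Fin.natAdd d j) := fun j => hS _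
  have hdet : IsUnit (taylorMatrix Q (ξ - η)).det :=
    isUnit_det_taylorMatrix hF (Or.inl hξη) (c := fun j => f (c (Fin.natAdd d j))) fun j => by
      simp [hQ, hH]
  obtain ⟨T, e, G, hT⟩ := exists_taylor_normal_form hdet
  have hΘ : ∀ (p : Fin (d + l) → R[X]) (i : Fin l),
      ∑ j', C ((S.submatrix id (Fin.natAdd d) * T) j' i) * p j' =
        ∑ j, C (T j i) * ∑ j', C (S j' (Fin.natAdd d j)) * p j' := by
    intro p i
    simp only [Matrix.mul_apply, Matrix.submatrix_apply, id, map_sum, C_mul, sum_mul, mul_sum]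
    rw [sum_comm]
    exact sum_congr rfl fun j _ => sum_congr rfl fun j' _ => by ring
  refine ⟨S.submatrix id (Fin.natAdd d) * T, ⟨e, G, fun i => ?_⟩,
    fun i => ∑ j, T j i * c (Fin.natAdd d j),
    fun i => ∑ j, C (T j i) * (X ^ (j : ℕ) + X ^ l * H (Fin.natAdd d j)), fun i => ?_⟩
  · rw [hΘ, ← hT]
    refine sum_congr rfl fun j _ => ?_
    simp only [Q, map_sum, taylor_mul, taylor_C, taylor_taylor, sub_add_cancel]
  · rw [hΘ, map_sum, mul_sum, ← sum_add_distrib]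
    refine sum_congr rfl fun j _ => ?_
    rw [show ∑ j', C (S j' (Fin.natAdd d j)) * taylor η (φ j') = Q j from rfl, hQ, C_mul]
    ring

/-- A family of directions along which a piece of the curve near `ξ` moves like a curve of the
same type in dimension `l`, whereas the pieces near `η` hardly move at all. -/
theorem NearMoment.exists_directions (hπ : f π = 0)
    (hF : ∀ m : ℕ, 1 ≤ m → m ≤ d + l → (m : F) ≠ 0)
    {φ : Fin (d + l) → R[X]} (hφ : NearMoment π φ) {ξ η : R} (hξη : f (ξ - η) ≠ 0)
    {a : ℕ} (ha : 1 ≤ a) :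
    ∃ θ : (Fin l → R) → (Fin (d + l) → R), ∃ φ' : Fin l → R[X], NearMoment π φ' ∧
      (∃ c : (Fin l → R) → R, ∀ β y, ∑ j, θ β j * (φ j).eval (ξ + π ^ a * y) =
        c β + π ^ (a * l) * ∑ i, β i * (φ' i).eval y) ∧
      (∃ c : (Fin l → R) → R, ∀ β b y, ∃ w, ∑ j, θ β j * (φ j).eval (η + π ^ b * y) =
        c β + π ^ (b * (d + 1)) * w) := by
  obtain ⟨Θ, ⟨e, G, hξ⟩, c, P, hη⟩ := hφ.exists_transversal_normal_form hπ hF hξη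
  choose ψ hψ using fun i : Fin l => exists_rescaled_monomial π (e i) (G i) ha i.2
  set ρ : Fin l → R := fun i => π ^ (a * (l - 1 - i))
  have heval : ∀ (β : Fin l → R) (z y : R), ∑ j, (∑ i, Θ j i * (ρ i * β i)) * (φ j).eval (z + y) =
      ∑ i, β i * (ρ i * (∑ j, C (Θ j i) * taylor z (φ j)).eval y) := by
    intro β z y
    simp only [eval_finsetSum, eval_mul, eval_C, taylor_eval, mul_sum, sum_mul, add_comm z y]
    rw [sum_comm]
    exact sum_congr rfl fun i _ => sum_congr rfl fun j _ => by ring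
  refine ⟨fun β j => ∑ i, Θ j i * (ρ i * β i), fun i => X ^ ((i : ℕ) + 1) + C π * ψ i,
    fun i => ⟨_, rfl⟩, ⟨fun β => ∑ i, β i * (ρ i * e i), fun β y => ?_⟩,
    fun β => ∑ i, β i * (ρ i * c i), fun β b y =>
      ⟨∑ i, β i * (ρ i * (y ^ (d + 1) * (P i).eval (π ^ b * y))), ?_⟩⟩
  · simp only [heval, hξ, ρ, hψ, mul_add, sum_add_distrib, mul_sum, mul_left_comm]
  · simp only [heval, hη, eval_add, eval_mul, eval_C, eval_pow, eval_X, mul_add, sum_add_distrib,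
      mul_sum, mul_pow, ← pow_mul, mul_left_comm, mul_assoc]

end NormalForm

theorem isLocalHom_castHom {p N : ℕ} (hp : p.Prime) (hN : N ≠ 0) :
    IsLocalHom (ZMod.castHom (dvd_pow_self p hN) (ZMod p)) := by
  have : NeZero (p ^ N) := ⟨pow_ne_zero _ hp.ne_zero⟩
  refine ⟨fun x hx => ?_⟩
  obtain ⟨m, rfl⟩ := ZMod.natCast_zmod_surjective x
  rw [map_natCast, ZMod.isUnit_iff_coprime] at hx
  rw [ZMod.isUnit_iff_coprime]
  exact Nat.Coprime.pow_right N hx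

/-! ### Decoupling inequalities -/

section Moments

variable {V U ι : Type*} [Fintype V] [Fintype U]

/-- The moment of order `P`, with weight `W`, of the sum of the functions `g i` over `i ∈ S`. -/
noncomputable def moment (P : ℕ) (W : V → ℝ) (g : ι → V → ℂ) (S : Finset ι) : ℝ :=
  ∑ α, W α * ‖∑ i ∈ S, g i α‖ ^ P

variable {P : ℕ} {W : V → ℝ} {g : ι → V → ℂ} {S B : Finset ι} {D D' : ℝ}

theorem moment_nonneg (hW : 0 ≤ W) (S : Finset ι) : 0 ≤ moment P W g S :=
  sum_nonneg fun α _ => mul_nonneg (hW α) (by positivity)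

theorem card_mul_moment [AddCommGroup V] {θ : U → V} (hWθ : ∀ α β, W (α + θ β) = W α)
    {h : ι → U → ℂ} {c : U → ℂ} (hc : ∀ β, ‖c β‖ = 1)
    (hg : ∀ i ∈ B, ∀ α β, g i (α + θ β) = g i α * (c β * h i β)) :
    Fintype.card U * moment P W g B = ∑ α, W α * moment P 1 (fun i β => g i α * h i β) B := by
  have htranslate : ∀ β, moment P W g B = ∑ α, W α * ‖∑ i ∈ B, g i α * h i β‖ ^ P := by
    intro β
    rw [moment, ← Equiv.sum_comp (Equiv.addRight (θ β))]
    refine sum_congr rfl fun α _ => ?_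
    have hsum : ∑ i ∈ B, g i (α + θ β) = c β * ∑ i ∈ B, g i α * h i β := by
      rw [mul_sum]
      exact sum_congr rfl fun i hi => by rw [hg i hi]; ring
    rw [Equiv.coe_addRight, hWθ, hsum, norm_mul, hc, one_mul]
  calc Fintype.card U * moment P W g B = ∑ _β : U, moment P W g B := by simp
    _ = ∑ β, ∑ α, W α * ‖∑ i ∈ B, g i α * h i β‖ ^ P := sum_congr rfl fun β _ => htranslate β
    _ = ∑ α, W α * moment P 1 (fun i β => g i α * h i β) B := by
      rw [sum_comm]
      simp only [moment, Pi.one_apply, one_mul, mul_sum]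

variable [DecidableEq ι]

/-- The square of the `ℓ² L^P` norm, with weight `W`, of the pieces of the sum of the functions
`g i` over `i ∈ S` that belong to the parts of a partition of `S`. -/
noncomputable def sqNormSum (P : ℕ) (W : V → ℝ) (g : ι → V → ℂ) (𝓟 : Finpartition S) : ℝ :=
  ∑ B ∈ 𝓟.parts, moment P W g B ^ (2 / (P : ℝ))

/-- The `ℓ²` decoupling inequality of order `P` with constant `D`, both sides being raised to the
power `P`. -/
def HasDecoupling (P : ℕ) (W : V → ℝ) (g : ι → V → ℂ) (𝓟 : Finpartition S) (D : ℝ) : Prop :=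
  moment P W g S ≤ D ^ P * sqNormSum P W g 𝓟 ^ ((P : ℝ) / 2)

variable {𝓟 : Finpartition S}

theorem sqNormSum_nonneg (hW : 0 ≤ W) (𝓟 : Finpartition S) : 0 ≤ sqNormSum P W g 𝓟 :=
  sum_nonneg fun _ _ => Real.rpow_nonneg (moment_nonneg hW _) _

theorem HasDecoupling.mono (h : HasDecoupling P W g 𝓟 D) (hW : 0 ≤ W) (hD : 0 ≤ D)
    (hDD' : D ≤ D') : HasDecoupling P W g 𝓟 D' :=
  h.trans <| mul_le_mul_of_nonneg_right (pow_le_pow_left₀ hD hDD' P)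
    (Real.rpow_nonneg (sqNormSum_nonneg hW 𝓟) _)

theorem rpow_two_div_rpow (hP : P ≠ 0) {y : ℝ} (hy : 0 ≤ y) :
    (y ^ (2 / (P : ℝ))) ^ ((P : ℝ) / 2) = y := by
  rw [← inv_div, Real.rpow_inv_rpow hy (by positivity)]

theorem sum_mul_sqNormSum_rpow_le (hP : 2 ≤ P) (hW : 0 ≤ W) (G : V → ι → U → ℂ)
    (𝓟 : Finpartition S) :
    ∑ α, W α * sqNormSum P 1 (G α) 𝓟 ^ ((P : ℝ) / 2) ≤
      (∑ B ∈ 𝓟.parts, (∑ α, W α * moment P 1 (G α) B) ^ (2 / (P : ℝ))) ^ ((P : ℝ) / 2) := by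
  have hP' : 1 ≤ (P : ℝ) / 2 := by rw [one_le_div two_pos]; exact_mod_cast hP
  have hm : ∀ B α, 0 ≤ moment P 1 (G α) B := fun B α => moment_nonneg zero_le_one B
  simpa only [sqNormSum, inv_div, rpow_two_div_rpow (P := P) (by omega) (hm _ _)] using
    minkowski univ 𝓟.parts hP' hW (u := fun B α => moment P 1 (G α) B ^ (2 / (P : ℝ)))
      fun B α => Real.rpow_nonneg (hm B α) _

theorem HasDecoupling.of_translates [Nonempty U] [AddCommGroup V] (hP : 2 ≤ P) (hW : 0 ≤ W)
    {θ : U → V} (hWθ : ∀ α β, W (α + θ β) = W α) {h : ι → U → ℂ} {c : U → ℂ} (hc : ∀ β, ‖c β‖ = 1)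
    (hg : ∀ i ∈ S, ∀ α β, g i (α + θ β) = g i α * (c β * h i β)) (hD : 0 ≤ D)
    (hdec : ∀ α, HasDecoupling P 1 (fun i β => g i α * h i β) 𝓟 D) : HasDecoupling P W g 𝓟 D := by
  set K : ℝ := (Fintype.card U : ℝ)
  have hK : 0 < K := by simp only [K]; exact_mod_cast Fintype.card_pos
  have haverage : ∀ B ⊆ S,
      K * moment P W g B = ∑ α, W α * moment P 1 (fun i β => g i α * h i β) B :=
    fun B hB => card_mul_moment hWθ hc fun i hi => hg i (hB hi)
  refine le_of_mul_le_mul_left ?_ hK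
  calc K * moment P W g S = ∑ α, W α * moment P 1 (fun i β => g i α * h i β) S :=
        haverage S subset_rfl
    _ ≤ ∑ α, W α * (D ^ P * sqNormSum P 1 (fun i β => g i α * h i β) 𝓟 ^ ((P : ℝ) / 2)) :=
        sum_le_sum fun α _ => mul_le_mul_of_nonneg_left (hdec α) (hW α)
    _ = D ^ P * ∑ α, W α * sqNormSum P 1 (fun i β => g i α * h i β) 𝓟 ^ ((P : ℝ) / 2) := by
        simp only [mul_sum, mul_left_comm]
    _ ≤ D ^ P * (∑ B ∈ 𝓟.parts, (∑ α, W α * moment P 1 (fun i β => g i α * h i β) B) ^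
          (2 / (P : ℝ))) ^ ((P : ℝ) / 2) := by
        gcongr
        exact sum_mul_sqNormSum_rpow_le hP hW _ 𝓟
    _ = D ^ P * (K ^ (2 / (P : ℝ)) * sqNormSum P W g 𝓟) ^ ((P : ℝ) / 2) := by
        congr 2
        rw [sqNormSum, mul_sum]
        refine sum_congr rfl fun B hB => ?_
        rw [← haverage B (𝓟.subset hB), Real.mul_rpow hK.le (moment_nonneg hW B)]
    _ = K * (D ^ P * sqNormSum P W g 𝓟 ^ ((P : ℝ) / 2)) := by
        rw [Real.mul_rpow (by positivity) (sqNormSum_nonneg hW 𝓟),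
          rpow_two_div_rpow (by omega) hK.le, mul_left_comm]

end Moments

section Waves

variable {ι : Type*} {p N k d l m m' r : ℕ} [Fact p.Prime]

/-- The character of `(ZMod (p ^ N)) ^ k` attached to the point `φ t`, scaled by `p ^ m`. -/
noncomputable def wave (φ : Fin k → (ZMod (p ^ N))[X]) (m : ℕ) (t : ℤ)
    (α : Fin k → ZMod (p ^ N)) : ℂ :=
  ZMod.stdAddChar ((p : ZMod (p ^ N)) ^ m * ∑ j, α j * (φ j).eval (t : ZMod (p ^ N)))

/-- The waves at the points `x i`, with amplitudes `A i`. -/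
noncomputable def waveFamily (φ : Fin k → (ZMod (p ^ N))[X]) (m : ℕ) (x : ι → ℤ) (A : ι → ℂ) (i : ι)
    (α : Fin k → ZMod (p ^ N)) : ℂ :=
  A i * wave φ m (x i) α

theorem wave_add_smul {φ : Fin k → (ZMod (p ^ N))[X]} {t : ℤ} {γ : Fin k → ZMod (p ^ N)}
    {c w : ZMod (p ^ N)} (h : ∑ j, γ j * (φ j).eval (t : ZMod (p ^ N)) = c + p ^ r * w)
    (α : Fin k → ZMod (p ^ N)) :
    wave φ m t (α + (p : ZMod (p ^ N)) ^ m' • γ) = wave φ m t α *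
      (ZMod.stdAddChar ((p : ZMod (p ^ N)) ^ (m + m') * c) *
        ZMod.stdAddChar ((p : ZMod (p ^ N)) ^ (m + m' + r) * w)) := by
  rw [wave, wave, ← AddChar.map_add_eq_mul, ← AddChar.map_add_eq_mul]
  congr 1
  have hshift : ∑ j, (α + (p : ZMod (p ^ N)) ^ m' • γ) j * (φ j).eval (t : ZMod (p ^ N)) =
      ∑ j, α j * (φ j).eval (t : ZMod (p ^ N)) + (p : ZMod (p ^ N)) ^ m' * (c + p ^ r * w) := by
    simp only [← h, Pi.add_apply, Pi.smul_apply, smul_eq_mul, add_mul, sum_add_distrib, mul_sum,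
      mul_assoc]
  rw [hshift]
  ring

theorem norm_sum_waveFamily_add_smul {φ : Fin k → (ZMod (p ^ N))[X]} {x : ι → ℤ} {A : ι → ℂ}
    {T : Finset ι} {γ : Fin k → ZMod (p ^ N)} {c : ZMod (p ^ N)} (hr : N ≤ m + m' + r)
    (h : ∀ i ∈ T, ∃ w, ∑ j, γ j * (φ j).eval (x i : ZMod (p ^ N)) = c + p ^ r * w)
    (α : Fin k → ZMod (p ^ N)) :
    ‖∑ i ∈ T, waveFamily φ m x A i (α + (p : ZMod (p ^ N)) ^ m' • γ)‖ =
      ‖∑ i ∈ T, waveFamily φ m x A i α‖ := by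
  have hzero : (p : ZMod (p ^ N)) ^ N = 0 := by exact_mod_cast ZMod.natCast_self (p ^ N)
  have hphase : ∑ i ∈ T, waveFamily φ m x A i (α + (p : ZMod (p ^ N)) ^ m' • γ) =
      ZMod.stdAddChar ((p : ZMod (p ^ N)) ^ (m + m') * c) * ∑ i ∈ T, waveFamily φ m x A i α := by
    rw [mul_sum]
    refine sum_congr rfl fun i hi => ?_
    obtain ⟨w, hw⟩ := h i hi
    rw [waveFamily, waveFamily, wave_add_smul hw, pow_eq_zero_of_le hr hzero, zero_mul,
      AddChar.map_zero_eq_one]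
    ring
  rw [hphase, norm_mul, AddChar.norm_apply, one_mul]

theorem NearMoment.exists_directions_zmod (hp : d + l < p) (hN : N ≠ 0)
    {φ : Fin (d + l) → (ZMod (p ^ N))[X]} (hφ : NearMoment (p : ZMod (p ^ N)) φ) {ξ η : ℤ}
    (hξη : ¬ (p : ℤ) ∣ ξ - η) {a : ℕ} (ha : 1 ≤ a) :
    ∃ θ : (Fin l → ZMod (p ^ N)) → (Fin (d + l) → ZMod (p ^ N)),
      ∃ φ' : Fin l → (ZMod (p ^ N))[X], NearMoment (p : ZMod (p ^ N)) φ' ∧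
      (∃ c : (Fin l → ZMod (p ^ N)) → ZMod (p ^ N), ∀ β (y : ℤ),
        ∑ j, θ β j * (φ j).eval ((ξ + p ^ a * y : ℤ) : ZMod (p ^ N)) =
          c β + p ^ (a * l) * ∑ i, β i * (φ' i).eval (y : ZMod (p ^ N))) ∧
      (∃ c : (Fin l → ZMod (p ^ N)) → ZMod (p ^ N), ∀ β b (y : ℤ), ∃ w,
        ∑ j, θ β j * (φ j).eval ((η + p ^ b * y : ℤ) : ZMod (p ^ N)) =
          c β + p ^ (b * (d + 1)) * w) := by
  set f := ZMod.castHom (dvd_pow_self p hN) (ZMod p)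
  have hf : IsLocalHom f := isLocalHom_castHom Fact.out hN
  have hF : ∀ m : ℕ, 1 ≤ m → m ≤ d + l → (m : ZMod p) ≠ 0 := fun m h1 h2 h =>
    absurd (Nat.le_of_dvd h1 ((ZMod.natCast_eq_zero_iff _ _).1 h)) (by omega)
  have hfξη : f ((ξ : ZMod (p ^ N)) - (η : ZMod (p ^ N))) ≠ 0 := by
    rwa [← Int.cast_sub, map_intCast, Ne, ZMod.intCast_zmod_eq_zero_iff_dvd]
  obtain ⟨θ, φ', hφ', ⟨c, hc⟩, c', hc'⟩ := hφ.exists_directions (by simp) hF hfξη ha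
  exact ⟨θ, φ', hφ', ⟨c, fun β y => by push_cast; exact hc β y⟩, c',
    fun β b y => by push_cast; exact hc' β b y⟩

variable (ι p k) in
/-- Exponential sums along curves close to the moment curve of degree `k`, in mean of order
`k (k + 1)` over a group of exponent `p ^ (n k)`, decouple with constant `D` into the pieces
coming from the residue classes modulo `p ^ n`. The integer `N` is only a level at which the
curve is defined. -/
def Decouples [DecidableEq ι] (n : ℕ) (D : ℝ) : Prop :=
  ∀ N, 0 < N → n * k ≤ N → ∀ φ : Fin k → (ZMod (p ^ N))[X], NearMoment (p : ZMod (p ^ N)) φ →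
    ∀ (x : ι → ℤ) (A : ι → ℂ) (S : Finset ι), HasDecoupling (k * (k + 1)) 1
      (waveFamily φ (N - n * k) x A) (residueClasses x ((p : ℤ) ^ n) S) D

variable [DecidableEq ι] {n a a' b : ℕ} {D D' : ℝ}

theorem Decouples.mono (h : Decouples ι p k n D) (hD : 0 ≤ D) (hDD' : D ≤ D') :
    Decouples ι p k n D' := fun N hN hnN φ hφ x A S =>
  (h N hN hnN φ hφ x A S).mono zero_le_one hD hDD'

theorem Decouples.weighted (hD : Decouples ι p l (a' - a) D) (hD0 : 0 ≤ D) (hl : l ≠ 0)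
    (hk : k = d + l) (hp : k < p) (hN : 0 < N) (hnN : n * k ≤ N)
    {φ : Fin k → (ZMod (p ^ N))[X]} (hφ : NearMoment (p : ZMod (p ^ N)) φ)
    (ha : 1 ≤ a) (haa' : a ≤ a') (ha' : a' * l ≤ n * k) (hb : a' * l ≤ b * (d + 1))
    {x : ι → ℤ} {A : ι → ℂ} {S T : Finset ι} (hS : CongruentOn x ((p : ℤ) ^ a) S)
    (hT : CongruentOn x ((p : ℤ) ^ b) T) (hST : Transversal x p S T) (e : ℕ) :
    HasDecoupling (l * (l + 1)) (fun α => ‖∑ i ∈ T, waveFamily φ (N - n * k) x A i α‖ ^ e)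
      (waveFamily φ (N - n * k) x A) (residueClasses x ((p : ℤ) ^ a') S) D := by
  subst hk
  have hpp : p.Prime := Fact.out
  have hpZ : (p : ℤ) ^ a ≠ 0 := pow_ne_zero _ (by exact_mod_cast hpp.ne_zero)
  have haN : a' * l ≤ N := ha'.trans hnN
  have hsplit : a' * l = (a' - a) * l + a * l := by rw [← add_mul, Nat.sub_add_cancel haa']
  obtain ⟨ξ, η, hξ, hη, hξη⟩ := hST.exists_centers hS hT (Nat.prime_iff_prime_int.1 hpp).not_dvd_one
  obtain ⟨θ, φ', hφ', ⟨c, hc⟩, c', hc'⟩ := hφ.exists_directions_zmod hp hN.ne' hξη ha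
  choose! y hy using hξ
  have hxS : ∀ i ∈ S, x i = ξ + (p : ℤ) ^ a * y i := fun i hi => by linear_combination hy i hi
  rw [← Nat.add_sub_cancel' haa', pow_add, residueClasses_of_eq_add_mul hpZ hxS]
  have hexp : N - n * (d + l) + (n * (d + l) - a' * l) = N - a' * l := by omega
  refine HasDecoupling.of_translates (by nlinarith [Nat.pos_of_ne_zero hl])
    (fun α => by positivity)
    (θ := fun β => (p : ZMod (p ^ N)) ^ (n * (d + l) - a' * l) • θ β)
    (h := fun i => wave φ' (N - (a' - a) * l) (y i))
    (c := fun β => ZMod.stdAddChar ((p : ZMod (p ^ N)) ^ (N - a' * l) * c β))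
    (fun α β => ?_) (fun β => AddChar.norm_apply _ _) (fun i hi α β => ?_) hD0 fun α => ?_
  · have hphase : ∀ j ∈ T, ∃ w, ∑ i, θ β i * (φ i).eval (x j : ZMod (p ^ N)) =
        c' β + p ^ (b * (d + 1)) * w := by
      intro j hj
      obtain ⟨z, hz⟩ := hη j hj
      rw [eq_add_of_sub_eq' hz]
      exact hc' β b z
    exact congrArg (· ^ e) (norm_sum_waveFamily_add_smul (by omega) hphase α)
  · have hxi : ∑ j, θ β j * (φ j).eval (x i : ZMod (p ^ N)) =
        c β + p ^ (a * l) * ∑ i', β i' * (φ' i').eval (y i : ZMod (p ^ N)) := by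
      rw [hxS i hi, hc]
    have hexp' : N - a' * l + a * l = N - (a' - a) * l := by omega
    rw [waveFamily, waveFamily, wave_add_smul hxi, hexp, hexp', ← mul_assoc]
    rfl
  · exact hD N hN (by omega) φ' hφ' y (fun i => waveFamily φ (N - n * (d + l)) x A i α) S

end Waves

/-! ### Orthogonality -/

section Orthogonality

variable {V ι : Type*} [Fintype V]

theorem sum_stdAddChar_sum_mul {q k : ℕ} [NeZero q] (b : Fin k → ZMod q) :
    ∑ α : Fin k → ZMod q, ZMod.stdAddChar (∑ j, α j * b j) =
      if b = 0 then (Fintype.card (Fin k → ZMod q) : ℂ) else 0 := by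
  have hprod : ∑ α : Fin k → ZMod q, ZMod.stdAddChar (∑ j, α j * b j) =
      ∏ j, ∑ y : ZMod q, ZMod.stdAddChar (y * b j) := by
    rw [prod_univ_sum, Fintype.piFinset_univ]
    exact sum_congr rfl fun α _ =>
      map_prod ZMod.stdAddChar.toMonoidHom (fun j => Multiplicative.ofAdd (α j * b j)) univ
  simp_rw [hprod, AddChar.sum_mulShift _ (ZMod.isPrimitive_stdAddChar q)]
  split_ifs with h
  · simp [h]
  · obtain ⟨j, hj⟩ := Function.ne_iff.1 h
    exact prod_eq_zero (mem_univ j) (by rw [if_neg (show b j ≠ 0 from hj), Nat.cast_zero])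

theorem sum_norm_sum_sq_of_orthogonal (t : Finset ι) (F : ι → V → ℂ)
    (hF : ∀ b ∈ t, ∀ c ∈ t, b ≠ c → ∑ α, F b α * (starRingEnd ℂ) (F c α) = 0) :
    ∑ α, ‖∑ b ∈ t, F b α‖ ^ 2 = ∑ b ∈ t, ∑ α, ‖F b α‖ ^ 2 := by
  have h : ((∑ α, ‖∑ b ∈ t, F b α‖ ^ 2 : ℝ) : ℂ) = ((∑ b ∈ t, ∑ α, ‖F b α‖ ^ 2 : ℝ) : ℂ) := by
    push_cast
    simp_rw [← Complex.mul_conj', map_sum, sum_mul_sum]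
    rw [sum_comm]
    refine sum_congr rfl fun b hb => ?_
    rw [sum_comm, sum_eq_single b (fun c hc hcb => hF b hb c hc hcb.symm) (absurd hb)]
  exact_mod_cast h

variable [DecidableEq ι] {P : ℕ} {W : V → ℝ} {g : ι → V → ℂ} {S : Finset ι} {𝓟 : Finpartition S}

theorem hasDecoupling_two_of_orthogonal
    (hg : ∀ B ∈ 𝓟.parts, ∀ C ∈ 𝓟.parts, B ≠ C → ∀ i ∈ B, ∀ j ∈ C,
      ∑ α, g i α * (starRingEnd ℂ) (g j α) = 0) : HasDecoupling 2 1 g 𝓟 1 := by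
  have h := sum_norm_sum_sq_of_orthogonal 𝓟.parts (fun B α => ∑ i ∈ B, g i α) ?_
  · simp only [sum_parts] at h
    simp [HasDecoupling, sqNormSum, moment, h]
  · intro B hB C hC hBC
    simp only [map_sum, sum_mul_sum]
    rw [sum_comm]
    refine sum_eq_zero fun i hi => ?_
    rw [sum_comm]
    exact sum_eq_zero fun j hj => hg B hB C hC hBC i hi j hj

theorem hasDecoupling_of_card_le (hP : 2 ≤ P) (hW : 0 ≤ W) {D : ℝ} (hD : #𝓟.parts ≤ D) :
    HasDecoupling P W g 𝓟 D := by
  have hP' : 1 ≤ (P : ℝ) / 2 := by rw [one_le_div two_pos]; exact_mod_cast hP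
  have hD0 : 0 ≤ D := (Nat.cast_nonneg _).trans hD
  calc moment P W g S ≤ ∑ α, W α * (D ^ P * ∑ B ∈ 𝓟.parts, ‖∑ i ∈ B, g i α‖ ^ P) := by
        refine sum_le_sum fun α _ => mul_le_mul_of_nonneg_left ?_ (hW α)
        rw [← sum_parts 𝓟]
        refine (norm_sum_pow_le _ _ (by omega)).trans ?_
        gcongr
    _ = D ^ P * ∑ B ∈ 𝓟.parts, moment P W g B := by
        simp only [moment, mul_sum, mul_left_comm]
        exact sum_comm
    _ = D ^ P * ∑ B ∈ 𝓟.parts, (moment P W g B ^ (2 / (P : ℝ))) ^ ((P : ℝ) / 2) := by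
        simp only [rpow_two_div_rpow (P := P) (by omega) (moment_nonneg hW _)]
    _ ≤ D ^ P * sqNormSum P W g 𝓟 ^ ((P : ℝ) / 2) := by
        gcongr
        exact sum_rpow_le_rpow_sum _ (fun B => Real.rpow_nonneg (moment_nonneg hW _) _) hP'

end Orthogonality

section BaseCases

variable {ι : Type*} {p N k n m : ℕ} [Fact p.Prime]

theorem wave_mul_conj (φ : Fin k → (ZMod (p ^ N))[X]) (s t : ℤ) (α : Fin k → ZMod (p ^ N)) :
    wave φ m s α * (starRingEnd ℂ) (wave φ m t α) = ZMod.stdAddChar (∑ j, α j *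
      ((p : ZMod (p ^ N)) ^ m * ((φ j).eval (s : ZMod (p ^ N)) -
        (φ j).eval (t : ZMod (p ^ N))))) := by
  rw [wave, wave, ← AddChar.map_neg_eq_conj, ← AddChar.map_add_eq_mul, ← sub_eq_add_neg, ← mul_sub,
    ← sum_sub_distrib, mul_sum]
  simp only [← mul_sub, mul_left_comm]

theorem pow_dvd_of_pow_mul_eq_zero (h : N = m + n) {z : ℤ}
    (hz : (p : ZMod (p ^ N)) ^ m * z = 0) : (p : ℤ) ^ n ∣ z := by
  have hp : (p : ℤ) ^ m ≠ 0 := pow_ne_zero m (by exact_mod_cast (Fact.out : p.Prime).ne_zero)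
  rw [← mul_dvd_mul_iff_left hp, ← pow_add, ← h]
  have hdvd := (ZMod.intCast_zmod_eq_zero_iff_dvd ((p : ℤ) ^ m * z) (p ^ N)).1
    (by push_cast; exact hz)
  exact_mod_cast hdvd

theorem sum_wave_mul_conj_eq_zero {φ : Fin 1 → (ZMod (p ^ N))[X]}
    (hφ : NearMoment (p : ZMod (p ^ N)) φ) (hN : N = m + n) {s t : ℤ}
    (hst : ¬ s ≡ t [ZMOD (p : ℤ) ^ n]) :
    ∑ α, wave φ m s α * (starRingEnd ℂ) (wave φ m t α) = 0 := by
  simp_rw [wave_mul_conj]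
  rw [sum_stdAddChar_sum_mul, if_neg]
  intro h
  refine hst (Int.modEq_iff_dvd.2 ?_).symm
  obtain ⟨ψ, hψ⟩ := hφ 0
  obtain ⟨w, hw⟩ := sub_dvd_eval_sub (s : ZMod (p ^ N)) (t : ZMod (p ^ N)) ψ
  have hnilpotent : (p : ZMod (p ^ N)) ^ N = 0 := by exact_mod_cast ZMod.natCast_self (p ^ N)
  have hunit : IsUnit (1 + (p : ZMod (p ^ N)) * w) :=
    IsNilpotent.isUnit_one_add ⟨N, by rw [mul_pow, hnilpotent, zero_mul]⟩
  have hphase : (p : ZMod (p ^ N)) ^ m * ((φ 0).eval (s : ZMod (p ^ N)) -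
      (φ 0).eval (t : ZMod (p ^ N))) = 0 := congrFun h 0
  simp only [hψ, eval_add, eval_X, eval_mul, eval_C, Fin.val_zero, zero_add, pow_one] at hphase
  refine pow_dvd_of_pow_mul_eq_zero hN (hunit.mul_left_eq_zero.1 ?_)
  push_cast
  linear_combination hphase - p ^ m * p * hw

variable [DecidableEq ι]

variable (ι p) in
theorem decouples_one (n : ℕ) : Decouples ι p 1 n 1 := by
  intro N _ hnN φ hφ x A S
  refine hasDecoupling_two_of_orthogonal fun B hB C hC hBC i hi j hj => ?_
  have hij : ¬ x i ≡ x j [ZMOD (p : ℤ) ^ n] :=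
    transversal_of_mem_residueClasses hB hC hBC i hi j hj
  have horth := sum_wave_mul_conj_eq_zero hφ (show N = N - n * 1 + n by omega) hij
  calc ∑ α, waveFamily φ (N - n * 1) x A i α * (starRingEnd ℂ) (waveFamily φ (N - n * 1) x A j α)
      = A i * (starRingEnd ℂ) (A j) * ∑ α, wave φ (N - n * 1) (x i) α *
          (starRingEnd ℂ) (wave φ (N - n * 1) (x j) α) := by
        rw [mul_sum]
        exact sum_congr rfl fun α _ => by rw [waveFamily, waveFamily, map_mul]; ring
    _ = 0 := by rw [horth, mul_zero]

variable (ι p) in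
theorem decouples_trivial (hk : k ≠ 0) (n : ℕ) : Decouples ι p k n ((p : ℝ) ^ n) := by
  intro N _ _ φ _ x A S
  refine hasDecoupling_of_card_le (by nlinarith [Nat.pos_of_ne_zero hk]) zero_le_one ?_
  exact_mod_cast card_residueClasses_le x (pow_pos (Fact.out : p.Prime).pos n) S

end BaseCases

/-! ### Bilinear decoupling -/

theorem rpow_convex_combination {y : ℝ} (hy : 0 ≤ y) {θ a₁ a₂ : ℝ} (h0 : 0 ≤ θ) (h1 : θ ≤ 1)
    (ha₁ : 0 ≤ a₁) (ha₂ : 0 ≤ a₂) :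
    y ^ (θ * a₁ + (1 - θ) * a₂) = (y ^ a₁) ^ θ * (y ^ a₂) ^ (1 - θ) := by
  rw [← Real.rpow_mul hy, ← Real.rpow_mul hy, mul_comm a₁, mul_comm a₂,
    ← Real.rpow_add_of_nonneg hy (by positivity) (by positivity)]

theorem pow_convex_combination {y : ℝ} (hy : 0 ≤ y) {θ : ℝ} (h0 : 0 ≤ θ) (h1 : θ ≤ 1)
    {w w₁ w₂ : ℕ} (hw : (w : ℝ) = θ * w₁ + (1 - θ) * w₂) :
    y ^ w = (y ^ w₁) ^ θ * (y ^ w₂) ^ (1 - θ) := by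
  simpa only [← hw, Real.rpow_natCast] using
    rpow_convex_combination hy h0 h1 w₁.cast_nonneg w₂.cast_nonneg

theorem sum_pow_mul_pow_le {V : Type*} (A : Finset V) {s t : V → ℝ} (hs : 0 ≤ s) (ht : 0 ≤ t)
    {θ : ℝ} (h0 : 0 < θ) (h1 : θ < 1) {u v u₁ v₁ u₂ v₂ : ℕ} (hu : (u : ℝ) = θ * u₁ + (1 - θ) * u₂)
    (hv : (v : ℝ) = θ * v₁ + (1 - θ) * v₂) :
    ∑ α ∈ A, s α ^ u * t α ^ v ≤
      (∑ α ∈ A, s α ^ u₁ * t α ^ v₁) ^ θ * (∑ α ∈ A, s α ^ u₂ * t α ^ v₂) ^ (1 - θ) := by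
  have hst : ∀ u v, 0 ≤ fun α => s α ^ u * t α ^ v := fun u v α =>
    mul_nonneg (pow_nonneg (hs α) u) (pow_nonneg (ht α) v)
  refine Eq.trans_le (sum_congr rfl fun α _ => ?_)
    (sum_rpow_mul_rpow_le A (hst u₁ v₁) (hst u₂ v₂) h0 h1)
  rw [pow_convex_combination (hs α) h0.le h1.le hu, pow_convex_combination (ht α) h0.le h1.le hv,
    mul_mul_mul_comm, Real.mul_rpow (pow_nonneg (hs α) _) (pow_nonneg (ht α) _),
    Real.mul_rpow (pow_nonneg (hs α) _) (pow_nonneg (ht α) _)]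

section Bilinear

variable {V ι : Type*} [Fintype V] [DecidableEq ι]

/-- The mixed mean value of two pieces of a sum, which come from residue classes modulo `q₁` and
`q₂` that are distinct modulo `q`, is controlled by the residue classes modulo `r`; the two pieces
enter with exponents `u` and `v`. -/
def BilinearDecoupling (P : ℕ) (g : ι → V → ℂ) (x : ι → ℤ) (q r q₁ q₂ : ℤ) (u v : ℕ) (E : ℝ) :
    Prop :=
  ∀ S T : Finset ι, CongruentOn x q₁ S → CongruentOn x q₂ T → Transversal x q S T →
    ∑ α, ‖∑ i ∈ S, g i α‖ ^ u * ‖∑ i ∈ T, g i α‖ ^ v ≤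
      E ^ P * sqNormSum P 1 g (residueClasses x r S) ^ ((u : ℝ) / 2) *
        sqNormSum P 1 g (residueClasses x r T) ^ ((v : ℝ) / 2)

namespace BilinearDecoupling

variable {P u v u₁ v₁ u₂ v₂ : ℕ} {g : ι → V → ℂ} {x : ι → ℤ} {q r q₁ q₁' q₂ : ℤ}
  {E E' E₁ E₂ D θ : ℝ}

theorem mono (h : BilinearDecoupling P g x q r q₁ q₂ u v E) (hE : 0 ≤ E) (hEE' : E ≤ E') :
    BilinearDecoupling P g x q r q₁ q₂ u v E' := by
  intro S T hS hT hST
  have hS0 : 0 ≤ sqNormSum P 1 g (residueClasses x r S) := sqNormSum_nonneg zero_le_one _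
  have hT0 : 0 ≤ sqNormSum P 1 g (residueClasses x r T) := sqNormSum_nonneg zero_le_one _
  refine (h S T hS hT hST).trans ?_
  gcongr

theorem swap (h : BilinearDecoupling P g x q r q₁ q₂ u v E) :
    BilinearDecoupling P g x q r q₂ q₁ v u E := by
  intro S T hS hT hST
  have h' := h T S hT hS hST.symm
  rw [mul_right_comm] at h'
  simpa only [mul_comm (‖∑ i ∈ T, g i _‖ ^ _)] using h'

variable (q q₂) in
theorem of_hasDecoupling
    (h : ∀ S, CongruentOn x q₁ S → HasDecoupling P 1 g (residueClasses x r S) E) :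
    BilinearDecoupling P g x q r q₁ q₂ P 0 E := by
  intro S T hS _ _
  simpa [HasDecoupling, moment] using h S hS

theorem interpolate (h₁ : BilinearDecoupling P g x q r q₁ q₂ u₁ v₁ E₁)
    (h₂ : BilinearDecoupling P g x q r q₁ q₂ u₂ v₂ E₂) (hE₁ : 0 ≤ E₁) (hE₂ : 0 ≤ E₂)
    (h0 : 0 < θ) (h1 : θ < 1) (hu : (u : ℝ) = θ * u₁ + (1 - θ) * u₂)
    (hv : (v : ℝ) = θ * v₁ + (1 - θ) * v₂) :
    BilinearDecoupling P g x q r q₁ q₂ u v (E₁ ^ θ * E₂ ^ (1 - θ)) := by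
  intro S T hS hT hST
  set s : V → ℝ := fun α => ‖∑ i ∈ S, g i α‖
  set t : V → ℝ := fun α => ‖∑ i ∈ T, g i α‖
  set Y := sqNormSum P 1 g (residueClasses x r S)
  set Z := sqNormSum P 1 g (residueClasses x r T)
  have hY : 0 ≤ Y := sqNormSum_nonneg zero_le_one _
  have hZ : 0 ≤ Z := sqNormSum_nonneg zero_le_one _
  have hst : ∀ u v, 0 ≤ ∑ α, s α ^ u * t α ^ v := fun u v => sum_nonneg fun α _ => by positivity
  have hhalf : ∀ {y : ℝ}, 0 ≤ y → ∀ {w w₁ w₂ : ℕ}, (w : ℝ) = θ * w₁ + (1 - θ) * w₂ →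
      y ^ ((w : ℝ) / 2) = (y ^ ((w₁ : ℝ) / 2)) ^ θ * (y ^ ((w₂ : ℝ) / 2)) ^ (1 - θ) :=
    fun hy w w₁ w₂ hw => by
      rw [← rpow_convex_combination hy h0.le h1.le (by positivity) (by positivity), hw]
      ring_nf
  calc ∑ α, s α ^ u * t α ^ v
      ≤ (∑ α, s α ^ u₁ * t α ^ v₁) ^ θ * (∑ α, s α ^ u₂ * t α ^ v₂) ^ (1 - θ) :=
        sum_pow_mul_pow_le univ (fun α => norm_nonneg _) (fun α => norm_nonneg _) h0 h1 hu hv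
    _ ≤ (E₁ ^ P * Y ^ ((u₁ : ℝ) / 2) * Z ^ ((v₁ : ℝ) / 2)) ^ θ *
          (E₂ ^ P * Y ^ ((u₂ : ℝ) / 2) * Z ^ ((v₂ : ℝ) / 2)) ^ (1 - θ) := by
        have h1' : 0 ≤ 1 - θ := by linarith
        exact mul_le_mul (Real.rpow_le_rpow (hst u₁ v₁) (h₁ S T hS hT hST) h0.le)
          (Real.rpow_le_rpow (hst u₂ v₂) (h₂ S T hS hT hST) h1')
          (Real.rpow_nonneg (hst u₂ v₂) _) (by positivity)
    _ = (E₁ ^ θ * E₂ ^ (1 - θ)) ^ P * Y ^ ((u : ℝ) / 2) * Z ^ ((v : ℝ) / 2) := by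
        rw [hhalf hY hu, hhalf hZ hv, mul_pow, Real.rpow_pow_comm hE₁, Real.rpow_pow_comm hE₂,
          Real.mul_rpow (by positivity) (by positivity),
          Real.mul_rpow (by positivity) (by positivity),
          Real.mul_rpow (by positivity) (by positivity),
          Real.mul_rpow (by positivity) (by positivity)]
        ring

theorem refine_left (h : BilinearDecoupling P g x q r q₁' q₂ u v E) (hE : 0 ≤ E) (hr : q₁' ∣ r)
    (hu : u ≠ 0) (huP : u ≤ P) (hD : 1 ≤ D)
    (hdec : ∀ S T, CongruentOn x q₁ S → CongruentOn x q₂ T → Transversal x q S T →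
      HasDecoupling u (fun α => ‖∑ i ∈ T, g i α‖ ^ v) g (residueClasses x q₁' S) D) :
    BilinearDecoupling P g x q r q₁ q₂ u v (E * D) := by
  intro S T hS hT hST
  set W : V → ℝ := fun α => ‖∑ i ∈ T, g i α‖ ^ v
  have hW : 0 ≤ W := fun α => by positivity
  have hmoment : ∀ B, ∑ α, ‖∑ i ∈ B, g i α‖ ^ u * ‖∑ i ∈ T, g i α‖ ^ v = moment u W g B :=
    fun B => sum_congr rfl fun α _ => mul_comm _ _
  set Z := sqNormSum P 1 g (residueClasses x r T) ^ ((v : ℝ) / 2)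
  have hZ : 0 ≤ Z := Real.rpow_nonneg (sqNormSum_nonneg zero_le_one _) _
  have hY : ∀ B, 0 ≤ sqNormSum P 1 g (residueClasses x r B) := fun B =>
    sqNormSum_nonneg zero_le_one _
  have hpiece : ∀ B ∈ (residueClasses x q₁' S).parts, moment u W g B ^ (2 / (u : ℝ)) ≤
      (E ^ P * Z) ^ (2 / (u : ℝ)) * sqNormSum P 1 g (residueClasses x r B) := by
    intro B hB
    have hBT : Transversal x q B T := hST.mono ((residueClasses x q₁' S).subset hB) subset_rfl
    have hbound : moment u W g B ≤
        E ^ P * Z * sqNormSum P 1 g (residueClasses x r B) ^ ((u : ℝ) / 2) := by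
      rw [mul_right_comm, ← hmoment]
      exact h B T (congruentOn_of_mem_residueClasses hB) hT hBT
    refine (Real.rpow_le_rpow (moment_nonneg hW B) hbound (by positivity)).trans_eq ?_
    rw [Real.mul_rpow (by positivity) (Real.rpow_nonneg (hY B) _), ← inv_div (u : ℝ),
      Real.rpow_rpow_inv (hY B) (by positivity)]
  have hpieces : sqNormSum u W g (residueClasses x q₁' S) ≤
      (E ^ P * Z) ^ (2 / (u : ℝ)) * sqNormSum P 1 g (residueClasses x r S) := by
    refine (sum_le_sum hpiece).trans_eq ?_
    rw [← mul_sum]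
    exact congrArg _
      (sum_residueClasses_residueClasses hr fun J => moment P 1 g J ^ (2 / (P : ℝ)))
  have hS0 := sqNormSum_nonneg (P := u) (g := g) hW (residueClasses x q₁' S)
  rw [hmoment]
  calc moment u W g S
      ≤ D ^ u * sqNormSum u W g (residueClasses x q₁' S) ^ ((u : ℝ) / 2) := hdec S T hS hT hST
    _ ≤ D ^ P * ((E ^ P * Z) ^ (2 / (u : ℝ)) *
          sqNormSum P 1 g (residueClasses x r S)) ^ ((u : ℝ) / 2) := by gcongr
    _ = (E * D) ^ P * sqNormSum P 1 g (residueClasses x r S) ^ ((u : ℝ) / 2) * Z := by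
        rw [Real.mul_rpow (by positivity) (hY S), rpow_two_div_rpow hu (by positivity), mul_pow]
        ring

end BilinearDecoupling

end Bilinear

section BilinearOfDegree

variable {V ι : Type*} [Fintype V] [DecidableEq ι] {p k n : ℕ} {g : ι → V → ℂ} {x : ι → ℤ}
  {l a b : ℕ} {E E₁ E₂ : ℝ}

variable (p k n g x l a b E) in
/-- The bilinear decoupling inequality in mean of order `k (k + 1)` into residue classes modulo
`p ^ n`, in which a piece from a class modulo `p ^ a` enters with the critical exponent `l (l + 1)`
of degree `l`, and a piece from a class modulo `p ^ b` with the remaining exponent. -/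
def BilinearOfDegree : Prop :=
  BilinearDecoupling (k * (k + 1)) g x p (p ^ n) (p ^ a) (p ^ b) (l * (l + 1))
    (k * (k + 1) - l * (l + 1)) E

theorem cast_sub_mul_succ (hlk : l ≤ k) :
    ((k * (k + 1) - l * (l + 1) : ℕ) : ℝ) = k * (k + 1) - l * (l + 1) := by
  rw [Nat.cast_sub (by gcongr)]
  push_cast
  ring

theorem BilinearOfDegree.interpolate (hl : l ≠ 0) (hlk : l < k) (hE₁ : 0 ≤ E₁) (hE₂ : 0 ≤ E₂)
    (h₁ : BilinearOfDegree p k n g x (k - l) b a E₁)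
    (h₂ : BilinearOfDegree p k n g x (l - 1) a b E₂) :
    BilinearOfDegree p k n g x l a b
      (E₁ ^ (1 / ((k : ℝ) - l + 1)) * E₂ ^ (1 - 1 / ((k : ℝ) - l + 1))) := by
  have hlk' : (l : ℝ) + 1 ≤ k := by exact_mod_cast hlk
  have hpos : (0 : ℝ) < (k : ℝ) - l + 1 := by linarith
  have hl1 : ((l - 1 : ℕ) : ℝ) = l - 1 := by push_cast [Nat.one_le_iff_ne_zero.2 hl]; ring
  have hkl : ((k - l : ℕ) : ℝ) = k - l := Nat.cast_sub hlk.le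
  refine BilinearDecoupling.interpolate h₁.swap h₂ hE₁ hE₂ (one_div_pos.2 hpos) ?_ ?_ ?_
  · rw [div_lt_one hpos]; linarith
  · rw [cast_sub_mul_succ (Nat.sub_le k l)]
    push_cast [hl1, hkl]
    field_simp
    ring
  · rw [cast_sub_mul_succ hlk.le, cast_sub_mul_succ (by omega)]
    push_cast [hl1, hkl]
    field_simp
    ring

theorem BilinearOfDegree.of_hasDecoupling (hl : l ≠ 0) (hlk : l < k) (hE₁ : 0 ≤ E₁) (hE₂ : 0 ≤ E₂)
    (h₁ : ∀ S, CongruentOn x ((p : ℤ) ^ a) S →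
      HasDecoupling (k * (k + 1)) 1 g (residueClasses x ((p : ℤ) ^ n) S) E₁)
    (h₂ : ∀ S, CongruentOn x ((p : ℤ) ^ b) S →
      HasDecoupling (k * (k + 1)) 1 g (residueClasses x ((p : ℤ) ^ n) S) E₂) :
    BilinearOfDegree p k n g x l a b (E₁ ^ ((l * (l + 1) : ℝ) / (k * (k + 1))) *
      E₂ ^ (1 - (l * (l + 1) : ℝ) / (k * (k + 1)))) := by
  have hlk' : (l : ℝ) < k := by exact_mod_cast hlk
  have hk : (0 : ℝ) < k := l.cast_nonneg.trans_lt hlk'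
  refine BilinearDecoupling.interpolate (.of_hasDecoupling _ _ h₁)
    (BilinearDecoupling.of_hasDecoupling _ _ h₂).swap hE₁ hE₂ ?_ ?_ ?_ ?_
  · positivity
  · rw [div_lt_one (by positivity)]
    gcongr
  · push_cast
    field_simp
    ring
  · rw [cast_sub_mul_succ hlk.le]
    push_cast
    field_simp
    ring

end BilinearOfDegree

section Waves

variable {ι : Type*} [DecidableEq ι] {p k n N l a a' b : ℕ} [Fact p.Prime] {D E : ℝ}
  {φ : Fin k → (ZMod (p ^ N))[X]} {x : ι → ℤ} {A : ι → ℂ}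

theorem Decouples.hasDecoupling_of_congruentOn (hD : Decouples ι p k (n - b) D) (hD0 : 0 ≤ D)
    (hk : k ≠ 0) (hp : k < p) (hN : 0 < N) (hnN : n * k ≤ N)
    (hφ : NearMoment (p : ZMod (p ^ N)) φ) (hb : 1 ≤ b) (hbn : b ≤ n) {S : Finset ι}
    (hS : CongruentOn x ((p : ℤ) ^ b) S) :
    HasDecoupling (k * (k + 1)) 1 (waveFamily φ (N - n * k) x A)
      (residueClasses x ((p : ℤ) ^ n) S) D := by
  have hempty : CongruentOn x ((p : ℤ) ^ (n * k)) ∅ := by simp [CongruentOn]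
  simpa only [pow_zero] using! hD.weighted hD0 hk (zero_add k).symm hp hN hnN hφ hb hbn le_rfl
    (by omega) hS hempty (by simp [Transversal]) 0 (A := A)

theorem Decouples.refine_left (hD : Decouples ι p l (a' - a) D) (hD1 : 1 ≤ D) (hl : l ≠ 0)
    (hlk : l < k) (hp : k < p) (hN : 0 < N) (hnN : n * k ≤ N)
    (hφ : NearMoment (p : ZMod (p ^ N)) φ) (ha : 1 ≤ a) (haa' : a ≤ a') (ha' : a' ≤ n)
    (hb : l * a' ≤ (k - l + 1) * b) (hE : 0 ≤ E)
    (h : BilinearOfDegree p k n (waveFamily φ (N - n * k) x A) x l a' b E) :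
    BilinearOfDegree p k n (waveFamily φ (N - n * k) x A) x l a b (E * D) :=
  BilinearDecoupling.refine_left h hE (pow_dvd_pow _ ha') (by positivity) (by gcongr) hD1
    fun S T hS hT hST => hD.weighted (d := k - l) (zero_le_one.trans hD1) hl (by omega) hp hN hnN
      hφ ha haa' (by gcongr) (by linarith) hS hT hST _

end Waves

section BilinearBound

/-- The shape of the constants in the bilinear inequalities: the bound `A * q ^ (η * n)`, improved
by `q ^ (η * G)` at the cost of the power `L ^ K`. -/
noncomputable def bilinearBound (A q η n L G K : ℝ) : ℝ := A * q ^ (η * (n - G)) * L ^ K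

variable {A q η n L : ℝ}

theorem bilinearBound_nonneg (hA : 0 ≤ A) (hq : 0 ≤ q) (hL : 0 ≤ L) (G K : ℝ) :
    0 ≤ bilinearBound A q η n L G K :=
  mul_nonneg (mul_nonneg hA (Real.rpow_nonneg hq _)) (Real.rpow_nonneg hL _)

theorem bilinearBound_mono (hA : 0 ≤ A) (hq : 1 ≤ q) (hη : 0 ≤ η) (hL : 1 ≤ L) {G G' K K' : ℝ}
    (hG : G' ≤ G) (hK : K ≤ K') :
    bilinearBound A q η n L G K ≤ bilinearBound A q η n L G' K' := by
  unfold bilinearBound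
  gcongr

theorem bilinearBound_rpow_mul_rpow (hA : 0 < A) (hq : 0 < q) (hL : 0 < L) (G G' K K' θ : ℝ) :
    bilinearBound A q η n L G K ^ θ * bilinearBound A q η n L G' K' ^ (1 - θ) =
      bilinearBound A q η n L (θ * G + (1 - θ) * G') (θ * K + (1 - θ) * K') := by
  have hpos : ∀ G K, bilinearBound A q η n L G K =
      Real.exp (Real.log A + Real.log q * (η * (n - G)) + Real.log L * K) := fun G K => by
    rw [bilinearBound, Real.exp_add, Real.exp_add, Real.exp_log hA, Real.rpow_def_of_pos hq,
      Real.rpow_def_of_pos hL]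
  rw [hpos, hpos, hpos, ← Real.exp_mul, ← Real.exp_mul, ← Real.exp_add]
  ring_nf

theorem bilinearBound_mul (hL : 0 < L) (G K : ℝ) :
    bilinearBound A q η n L G K * L = bilinearBound A q η n L G (K + 1) := by
  rw [bilinearBound, bilinearBound, Real.rpow_add hL, Real.rpow_one, mul_assoc]

end BilinearBound

section Iteration

/-- The gain, in units of `b`, after `m` iterations in the bilinear inequality of degree `l`. -/
noncomputable def gain (k m l : ℕ) : ℝ :=
  (m : ℝ) * l * ((k : ℝ) - l) / (k : ℝ) ^ 2 + ((k : ℝ) - l) / k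

theorem gain_zero_right {k : ℕ} (hk : k ≠ 0) (m : ℕ) : gain k m 0 = 1 := by
  simp [gain, hk]

theorem gain_zero_left_le {k l : ℕ} (hlk : l < k) :
    gain k 0 l ≤ 1 - (l * (l + 1) : ℝ) / (k * (k + 1)) := by
  have hlk' : (0 : ℝ) ≤ k - l := sub_nonneg.2 (by exact_mod_cast hlk.le)
  have hk : (0 : ℝ) < k := by exact_mod_cast (Nat.zero_le l).trans_lt hlk
  have hdiff : 1 - (l * (l + 1) : ℝ) / (k * (k + 1)) - gain k 0 l =
      l * (k - l) / (k * (k + 1)) := by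
    unfold gain
    field_simp
    push_cast
    ring
  exact sub_nonneg.1 (hdiff ▸ by positivity)

theorem gain_succ_le {k l : ℕ} (m : ℕ) (hl : l ≠ 0) (hlk : l < k) {e : ℝ} (he : 0 ≤ e) :
    gain k (m + 1) l * (l * e) ≤
      1 / ((k : ℝ) - l + 1) * (gain k m (k - l) * (((k : ℝ) - l + 1) * e)) +
        (1 - 1 / ((k : ℝ) - l + 1)) * (gain k (m + 1) (l - 1) * (l * e)) := by
  have hlk' : (l : ℝ) + 1 ≤ k := by exact_mod_cast hlk
  have hk : (0 : ℝ) < k := by linarith [l.cast_nonneg (α := ℝ)]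
  have hpos : (0 : ℝ) < (k : ℝ) - l + 1 := by linarith
  have hdiff : 1 / ((k : ℝ) - l + 1) * (gain k m (k - l) * (((k : ℝ) - l + 1) * e)) +
      (1 - 1 / ((k : ℝ) - l + 1)) * (gain k (m + 1) (l - 1) * (l * e)) -
        gain k (m + 1) l * (l * e) = l / (k : ℝ) ^ 2 * (l * e) := by
    unfold gain
    push_cast [Nat.one_le_iff_ne_zero.2 hl, hlk.le]
    field_simp
    ring
  exact sub_nonneg.1 (hdiff ▸ by positivity)

variable {V ι : Type*} [Fintype V] [DecidableEq ι] {p k n Z : ℕ} {g : ι → V → ℂ} {x : ι → ℤ}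
  {A η L : ℝ} {l a b e m : ℕ}

variable (a) in
theorem bilinearOfDegree_zero (hp : 1 ≤ p) (hA : 0 ≤ A) (hη : 0 ≤ η) (hL : 1 ≤ L) (hk : k ≠ 0)
    (h : ∀ S, CongruentOn x ((p : ℤ) ^ b) S → HasDecoupling (k * (k + 1)) 1 g
      (residueClasses x ((p : ℤ) ^ n) S) (bilinearBound A p η n L b 0)) (m : ℕ) :
    BilinearOfDegree p k n g x 0 a b (bilinearBound A p η n L (gain k m 0 * b) (k * m)) := by
  have hp' : (1 : ℝ) ≤ p := by exact_mod_cast hp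
  have h' : BilinearOfDegree p k n g x 0 a b (bilinearBound A p η n L b 0) := by
    simpa only [BilinearOfDegree, zero_mul, tsub_zero] using
      (BilinearDecoupling.of_hasDecoupling _ _ h).swap
  refine h'.mono (bilinearBound_nonneg hA p.cast_nonneg (by linarith) _ _) ?_
  exact bilinearBound_mono hA hp' hη hL (by rw [gain_zero_right hk, one_mul]) (by positivity)

theorem bilinearOfDegree_of_hasDecoupling (hp : 1 ≤ p) (hA : 0 < A) (hη : 0 ≤ η) (hL : 1 ≤ L)
    (hl : l ≠ 0) (hlk : l < k)
    (ha : ∀ S, CongruentOn x ((p : ℤ) ^ a) S → HasDecoupling (k * (k + 1)) 1 g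
      (residueClasses x ((p : ℤ) ^ n) S) (bilinearBound A p η n L a 0))
    (hb : ∀ S, CongruentOn x ((p : ℤ) ^ b) S → HasDecoupling (k * (k + 1)) 1 g
      (residueClasses x ((p : ℤ) ^ n) S) (bilinearBound A p η n L b 0)) :
    BilinearOfDegree p k n g x l a b (bilinearBound A p η n L (gain k 0 l * b) 0) := by
  have hp' : (1 : ℝ) ≤ p := by exact_mod_cast hp
  have hnonneg := bilinearBound_nonneg (n := n) (η := η) hA.le p.cast_nonneg (zero_le_one.trans hL)
  have h := BilinearOfDegree.of_hasDecoupling hl hlk (hnonneg a 0) (hnonneg b 0) ha hb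
  rw [bilinearBound_rpow_mul_rpow hA (by linarith) (by linarith)] at h
  refine h.mono (hnonneg _ _) (bilinearBound_mono hA.le hp' hη hL ?_ (by simp))
  calc gain k 0 l * b ≤ (1 - (l * (l + 1) : ℝ) / (k * (k + 1))) * b := by
        gcongr
        exact gain_zero_left_le hlk
    _ ≤ (l * (l + 1) : ℝ) / (k * (k + 1)) * a + (1 - (l * (l + 1) : ℝ) / (k * (k + 1))) * b :=
        le_add_of_nonneg_left (by positivity)

theorem BilinearOfDegree.iteration_step (hp : 1 ≤ p) (hA : 0 < A) (hη : 0 ≤ η) (hL : 1 ≤ L)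
    (hl : l ≠ 0) (hlk : l < k)
    (h₁ : BilinearOfDegree p k n g x (k - l) (l * e) ((k - l + 1) * e)
      (bilinearBound A p η n L (gain k m (k - l) * ((k - l + 1) * e : ℕ)) (k * m)))
    (h₂ : BilinearOfDegree p k n g x (l - 1) ((k - l + 1) * e) (l * e)
      (bilinearBound A p η n L (gain k (m + 1) (l - 1) * (l * e : ℕ)) (k * (m + 1 : ℕ))))
    (hrefine : ∀ E, 0 ≤ E → BilinearOfDegree p k n g x l ((k - l + 1) * e) (l * e) E →
      BilinearOfDegree p k n g x l a (l * e) (E * L)) :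
    BilinearOfDegree p k n g x l a (l * e)
      (bilinearBound A p η n L (gain k (m + 1) l * (l * e : ℕ)) (k * (m + 1 : ℕ))) := by
  have hp' : (1 : ℝ) ≤ p := by exact_mod_cast hp
  have hlk' : (l : ℝ) + 1 ≤ k := by exact_mod_cast hlk
  have hnonneg := bilinearBound_nonneg (n := n) (η := η) hA.le p.cast_nonneg (zero_le_one.trans hL)
  have h := hrefine _ (mul_nonneg (Real.rpow_nonneg (hnonneg _ _) _)
    (Real.rpow_nonneg (hnonneg _ _) _)) (h₁.interpolate hl hlk (hnonneg _ _) (hnonneg _ _) h₂)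
  rw [bilinearBound_rpow_mul_rpow hA (by linarith) (by linarith), bilinearBound_mul (by linarith)]
    at h
  refine h.mono (hnonneg _ _) (bilinearBound_mono hA.le hp' hη hL ?_ ?_)
  · push_cast [hlk.le]
    exact gain_succ_le m hl hlk e.cast_nonneg
  · have hcost : 1 ≤ 1 / ((k : ℝ) - l + 1) * k := by
      rw [one_div_mul_eq_div, one_le_div (by linarith)]
      have : (1 : ℝ) ≤ l := by exact_mod_cast Nat.one_le_iff_ne_zero.2 hl
      linarith
    push_cast
    linarith

theorem exists_eq_mul_of_factorial_pow_dvd (hl : l ≠ 0) (hlk : l ≤ k)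
    (h : k.factorial ^ (m + 1) ∣ b) : ∃ e, b = l * e ∧ k.factorial ^ m ∣ e := by
  obtain ⟨c, rfl⟩ := h
  obtain ⟨f, hf⟩ : l ∣ k.factorial := Nat.dvd_factorial (Nat.pos_of_ne_zero hl) hlk
  exact ⟨k.factorial ^ m * (f * c), by rw [pow_succ]; nth_rewrite 2 [hf]; ring,
    dvd_mul_right _ _⟩

theorem complementary_scale_le {k l : ℕ} (h : l ≤ k) (e : ℕ) :
    (k - l) * (l * e) ≤ (k - (k - l) + 1) * ((k - l + 1) * e) := by
  rw [Nat.sub_sub_self h, ← mul_assoc, ← mul_assoc, mul_comm (l + 1)]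
  gcongr <;> omega

theorem lower_scale_le (k l e : ℕ) :
    l * ((k - (l + 1) + 1) * e) ≤ (k - l + 1) * ((l + 1) * e) := by
  rw [← mul_assoc, ← mul_assoc, mul_comm l]
  gcongr <;> omega

theorem BilinearOfDegree.iterate (hp : 1 ≤ p) (hA : 0 < A) (hη : 0 ≤ η) (hL : 1 ≤ L) (hZ : Z ≤ n)
    (hdec : ∀ b, 1 ≤ b → b ≤ n → ∀ S, CongruentOn x ((p : ℤ) ^ b) S →
      HasDecoupling (k * (k + 1)) 1 g (residueClasses x ((p : ℤ) ^ n) S)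
        (bilinearBound A p η n L b 0))
    (hrefine : ∀ l a a' b E, l ≠ 0 → l < k → 1 ≤ a → a ≤ a' → a' ≤ Z →
      l * a' ≤ (k - l + 1) * b → 0 ≤ E → BilinearOfDegree p k n g x l a' b E →
      BilinearOfDegree p k n g x l a b (E * L)) (m : ℕ) :
    ∀ l a b, l < k → 1 ≤ a → a ≤ n → 1 ≤ b → k.factorial ^ m ∣ b → k ^ m * b ≤ Z →
      l * a ≤ (k - l + 1) * b →
      BilinearOfDegree p k n g x l a b (bilinearBound A p η n L (gain k m l * b) (k * m)) := by
  have hle : ∀ {l m b : ℕ}, l < k → k ^ m * b ≤ Z → b ≤ Z := fun hk h =>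
    (Nat.le_mul_of_pos_left _ (pow_pos (by omega) _)).trans h
  induction m with
  | zero =>
    intro l a b hlk ha han hb _ hbZ _
    have hbn : b ≤ n := (hle hlk hbZ).trans hZ
    rcases eq_or_ne l 0 with rfl | hl
    · exact bilinearOfDegree_zero a hp hA.le hη hL (by omega) (hdec b hb hbn) 0
    · simpa using bilinearOfDegree_of_hasDecoupling hp hA hη hL hl hlk (hdec a ha han)
        (hdec b hb hbn)
  | succ m ih =>
    intro l
    induction l with
    | zero =>
      intro a b hk _ _ hb _ hbZ _
      exact bilinearOfDegree_zero a hp hA.le hη hL (by omega)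
        (hdec b hb ((hle hk hbZ).trans hZ)) (m + 1)
    | succ l ihl =>
      intro a b hlk ha _ hb hdvd hbZ hab
      obtain ⟨e, rfl, hdvd'⟩ := exists_eq_mul_of_factorial_pow_dvd l.succ_ne_zero hlk.le hdvd
      have he : 1 ≤ e := Nat.pos_of_mul_pos_left hb
      have hab' : (l + 1) * ((k - (l + 1) + 1) * e) = (k - (l + 1) + 1) * ((l + 1) * e) :=
        mul_left_comm ..
      have ha' : 1 ≤ (k - (l + 1) + 1) * e := Nat.mul_pos (by omega) he
      have haa' : a ≤ (k - (l + 1) + 1) * e :=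
        Nat.le_of_mul_le_mul_left (hab.trans_eq hab'.symm) l.succ_pos
      have ha'Z : k ^ m * ((k - (l + 1) + 1) * e) ≤ Z := by
        refine le_trans ?_ hbZ
        rw [pow_succ, mul_assoc]
        gcongr
        · omega
        · exact Nat.le_mul_of_pos_left _ l.succ_pos
      have h₁ := ih (k - (l + 1)) ((l + 1) * e) ((k - (l + 1) + 1) * e) (by omega) hb
        ((hle hlk hbZ).trans hZ) ha' (dvd_mul_of_dvd_right hdvd' _) ha'Z
        (complementary_scale_le hlk.le e)
      have h₂ := ihl ((k - (l + 1) + 1) * e) ((l + 1) * e) (by omega) ha'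
        ((hle hlk ha'Z).trans hZ) hb hdvd hbZ (lower_scale_le k l e)
      exact BilinearOfDegree.iteration_step hp hA hη hL l.succ_ne_zero hlk h₁ h₂ fun E =>
        hrefine (l + 1) a _ _ E l.succ_ne_zero hlk ha haa' (hle hlk ha'Z) hab'.le

end Iteration

/-! ### Broad-narrow analysis and induction on scales -/

section BroadNarrow

variable {V ι : Type*} [Fintype V] [DecidableEq ι] {P : ℕ} {W : V → ℝ} {g : ι → V → ℂ}
  {x : ι → ℤ} {S : Finset ι} {D : ℝ}

theorem norm_sum_pow_le_residueClasses {q m : ℕ} (hq : 0 < q) (hm : m ≠ 0) (x : ι → ℤ) (z : ι → ℂ)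
    (S : Finset ι) :
    ‖∑ i ∈ S, z i‖ ^ m ≤
      (q : ℝ) ^ m * ∑ B ∈ (residueClasses x q S).parts, ‖∑ i ∈ B, z i‖ ^ m := by
  rw [← sum_parts (residueClasses x q S)]
  refine (norm_sum_pow_le _ _ hm).trans ?_
  gcongr
  exact card_residueClasses_le x hq S

theorem sqNormSum_residueClasses_le {q r : ℤ} (hW : 0 ≤ W) (hqr : q ∣ r) {B : Finset ι}
    (hB : B ∈ (residueClasses x q S).parts) :
    sqNormSum P W g (residueClasses x r B) ≤ sqNormSum P W g (residueClasses x r S) :=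
  sum_le_sum_of_subset_of_nonneg (residueClasses_parts_subset hqr hB) fun C _ _ =>
    Real.rpow_nonneg (moment_nonneg hW C) _

theorem sum_moment_residueClasses_le {q r : ℤ} (hP : 2 ≤ P) (hW : 0 ≤ W) (hD : 0 ≤ D)
    (hqr : q ∣ r) (h : ∀ B ∈ (residueClasses x q S).parts,
      HasDecoupling P W g (residueClasses x r B) D) :
    ∑ B ∈ (residueClasses x q S).parts, moment P W g B ≤
      D ^ P * sqNormSum P W g (residueClasses x r S) ^ ((P : ℝ) / 2) := by
  have hP' : 1 ≤ (P : ℝ) / 2 := by rw [one_le_div two_pos]; exact_mod_cast hP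
  calc ∑ B ∈ (residueClasses x q S).parts, moment P W g B
      ≤ ∑ B ∈ (residueClasses x q S).parts,
          D ^ P * sqNormSum P W g (residueClasses x r B) ^ ((P : ℝ) / 2) := sum_le_sum h
    _ ≤ D ^ P * (∑ B ∈ (residueClasses x q S).parts,
          sqNormSum P W g (residueClasses x r B)) ^ ((P : ℝ) / 2) := by
        rw [← mul_sum]
        gcongr
        exact sum_rpow_le_rpow_sum _ (fun B => sqNormSum_nonneg hW (residueClasses x r B)) hP'
    _ = D ^ P * sqNormSum P W g (residueClasses x r S) ^ ((P : ℝ) / 2) := by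
        simp only [sqNormSum, sum_residueClasses_residueClasses hqr]

variable {q s : ℕ} {r : ℤ} {E : ℝ}

theorem BilinearDecoupling.sum_le_of_transversal {u v : ℕ} {T : Finset ι}
    (h : BilinearDecoupling P g x q r s s u v E) (hs : 0 < s) (hsr : (s : ℤ) ∣ r) (hE : 0 ≤ E)
    (hu : u ≠ 0) (hv : v ≠ 0) (hST : Transversal x q S T) :
    ∑ α, ‖∑ i ∈ S, g i α‖ ^ u * ‖∑ i ∈ T, g i α‖ ^ v ≤
      (s : ℝ) ^ (u + v + 2) * (E ^ P * sqNormSum P 1 g (residueClasses x r S) ^ ((u : ℝ) / 2) *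
        sqNormSum P 1 g (residueClasses x r T) ^ ((v : ℝ) / 2)) := by
  set 𝓢 := residueClasses x s S
  set 𝓣 := residueClasses x s T
  set R := E ^ P * sqNormSum P 1 g (residueClasses x r S) ^ ((u : ℝ) / 2) *
    sqNormSum P 1 g (residueClasses x r T) ^ ((v : ℝ) / 2) with hR
  have hnonneg : ∀ B, 0 ≤ sqNormSum P 1 g (residueClasses x r B) := fun B =>
    sqNormSum_nonneg zero_le_one _
  have hR0 : 0 ≤ R := mul_nonneg (mul_nonneg (by positivity) (Real.rpow_nonneg (hnonneg S) _))
    (Real.rpow_nonneg (hnonneg T) _)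
  have hpiece : ∀ B ∈ 𝓢.parts, ∀ C ∈ 𝓣.parts,
      ∑ α, ‖∑ i ∈ B, g i α‖ ^ u * ‖∑ i ∈ C, g i α‖ ^ v ≤ R := by
    intro B hB C hC
    refine (h B C (congruentOn_of_mem_residueClasses hB) (congruentOn_of_mem_residueClasses hC)
      (hST.mono (𝓢.subset hB) (𝓣.subset hC))).trans ?_
    have := hnonneg B
    have := hnonneg C
    have := hnonneg S
    rw [hR]
    gcongr <;> exact sqNormSum_residueClasses_le zero_le_one hsr ‹_›
  calc ∑ α, ‖∑ i ∈ S, g i α‖ ^ u * ‖∑ i ∈ T, g i α‖ ^ v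
      ≤ ∑ α, ((s : ℝ) ^ u * ∑ B ∈ 𝓢.parts, ‖∑ i ∈ B, g i α‖ ^ u) *
          ((s : ℝ) ^ v * ∑ C ∈ 𝓣.parts, ‖∑ i ∈ C, g i α‖ ^ v) := by
        gcongr with α
        · exact norm_sum_pow_le_residueClasses hs hu x _ S
        · exact norm_sum_pow_le_residueClasses hs hv x _ T
    _ = (s : ℝ) ^ (u + v) * ∑ B ∈ 𝓢.parts, ∑ C ∈ 𝓣.parts,
          ∑ α, ‖∑ i ∈ B, g i α‖ ^ u * ‖∑ i ∈ C, g i α‖ ^ v := by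
        simp_rw [sum_comm (t := univ)]
        rw [mul_sum]
        exact sum_congr rfl fun α _ => by rw [mul_mul_mul_comm, ← pow_add, sum_mul_sum]
    _ ≤ (s : ℝ) ^ (u + v) * (s * (s * R)) := by
        gcongr
        refine (sum_le_card_nsmul _ _ _ fun B hB => sum_le_card_nsmul _ _ _ (hpiece B hB)).trans ?_
        rw [nsmul_eq_mul, nsmul_eq_mul]
        gcongr <;> exact card_residueClasses_le x hs _
    _ = (s : ℝ) ^ (u + v + 2) * R := by ring

theorem BilinearDecoupling.sum_residueClasses_le {u v : ℕ}
    (h : BilinearDecoupling P g x q r s s u v E) (hq : 0 < q) (hqr : (q : ℤ) ∣ r) (hs : 0 < s)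
    (hsr : (s : ℤ) ∣ r) (hE : 0 ≤ E) (hu : u ≠ 0) (hv : v ≠ 0) (huv : u + v = P) :
    ∑ α, ∑ B ∈ (residueClasses x q S).parts, ∑ C ∈ (residueClasses x q S).parts.erase B,
        ‖∑ i ∈ C, g i α‖ ^ u * ‖∑ i ∈ B, g i α‖ ^ v ≤
      (q : ℝ) ^ 2 * (s : ℝ) ^ (P + 2) * E ^ P *
        sqNormSum P 1 g (residueClasses x r S) ^ ((P : ℝ) / 2) := by
  set 𝓑 := (residueClasses x q S).parts
  set R := (s : ℝ) ^ (P + 2) * (E ^ P * sqNormSum P 1 g (residueClasses x r S) ^ ((P : ℝ) / 2))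
    with hR
  have hnonneg : ∀ B, 0 ≤ sqNormSum P 1 g (residueClasses x r B) := fun B =>
    sqNormSum_nonneg zero_le_one _
  have hR0 : 0 ≤ R := mul_nonneg (by positivity) (mul_nonneg (by positivity)
    (Real.rpow_nonneg (hnonneg S) _))
  have hpair : ∀ B ∈ 𝓑, ∀ C ∈ 𝓑.erase B,
      ∑ α, ‖∑ i ∈ C, g i α‖ ^ u * ‖∑ i ∈ B, g i α‖ ^ v ≤ R := by
    intro B hB C hC
    obtain ⟨hCB, hC⟩ := mem_erase.1 hC
    have hexp : (P : ℝ) / 2 = u / 2 + v / 2 := by rw [← huv]; push_cast; ring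
    refine (h.sum_le_of_transversal hs hsr hE hu hv
      (transversal_of_mem_residueClasses hC hB hCB)).trans ?_
    rw [hR, huv, hexp, Real.rpow_add_of_nonneg (hnonneg S) (by positivity) (by positivity),
      mul_assoc (E ^ P)]
    have := hnonneg B
    have := hnonneg C
    have := hnonneg S
    gcongr <;> exact sqNormSum_residueClasses_le zero_le_one hqr ‹_›
  have hcard : #𝓑 ≤ q := card_residueClasses_le x hq S
  calc ∑ α, ∑ B ∈ 𝓑, ∑ C ∈ 𝓑.erase B, ‖∑ i ∈ C, g i α‖ ^ u * ‖∑ i ∈ B, g i α‖ ^ v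
      = ∑ B ∈ 𝓑, ∑ C ∈ 𝓑.erase B, ∑ α, ‖∑ i ∈ C, g i α‖ ^ u * ‖∑ i ∈ B, g i α‖ ^ v := by
        rw [sum_comm]
        exact sum_congr rfl fun B _ => sum_comm
    _ ≤ ∑ _B ∈ 𝓑, q * R := by
        refine sum_le_sum fun B hB => (sum_le_card_nsmul _ _ _ (hpair B hB)).trans ?_
        rw [nsmul_eq_mul]
        gcongr
        exact card_erase_le.trans hcard
    _ ≤ q * (q * R) := by
        rw [sum_const, nsmul_eq_mul]
        gcongr
    _ = _ := by rw [hR]; ring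

theorem moment_le_narrow_add_broad {u v : ℕ} {τ : ℝ} (hq : 0 < q) (hqr : (q : ℤ) ∣ r)
    (hs : 0 < s) (hsr : (s : ℤ) ∣ r) (hD : 0 ≤ D) (hE : 0 ≤ E) (hτ : 0 < τ) (hu : u ≠ 0)
    (hv : v ≠ 0) (huv : u + v = P)
    (hnarrow : ∀ B ∈ (residueClasses x q S).parts, HasDecoupling P 1 g (residueClasses x r B) D)
    (hbroad : BilinearDecoupling P g x q r s s u v E) :
    moment P 1 g S ≤ ((1 + q * τ) ^ P * D ^ P +
      (q : ℝ) ^ P * (τ ^ u)⁻¹ * ((q : ℝ) ^ 2 * (s : ℝ) ^ (P + 2) * E ^ P)) *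
        sqNormSum P 1 g (residueClasses x r S) ^ ((P : ℝ) / 2) := by
  set 𝓑 := (residueClasses x q S).parts
  have hcard : (#𝓑 : ℝ) ≤ q := by exact_mod_cast card_residueClasses_le x hq S
  calc moment P 1 g S
      ≤ ∑ α, ((1 + q * τ) ^ P * ∑ B ∈ 𝓑, ‖∑ i ∈ B, g i α‖ ^ P +
          (q : ℝ) ^ P * (τ ^ u)⁻¹ * ∑ B ∈ 𝓑, ∑ C ∈ 𝓑.erase B,
            ‖∑ i ∈ C, g i α‖ ^ u * ‖∑ i ∈ B, g i α‖ ^ v) := by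
        refine sum_le_sum fun α _ => ?_
        rw [Pi.one_apply, one_mul, ← sum_parts (residueClasses x q S), ← huv]
        exact norm_sum_pow_le_narrow_add_broad _ _ hcard hτ hv
    _ = (1 + q * τ) ^ P * ∑ B ∈ 𝓑, moment P 1 g B + (q : ℝ) ^ P * (τ ^ u)⁻¹ *
          ∑ α, ∑ B ∈ 𝓑, ∑ C ∈ 𝓑.erase B, ‖∑ i ∈ C, g i α‖ ^ u * ‖∑ i ∈ B, g i α‖ ^ v := by
        simp only [moment, Pi.one_apply, one_mul]
        rw [sum_add_distrib, ← mul_sum, ← mul_sum, sum_comm]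
    _ ≤ (1 + q * τ) ^ P * (D ^ P * sqNormSum P 1 g (residueClasses x r S) ^ ((P : ℝ) / 2)) +
          (q : ℝ) ^ P * (τ ^ u)⁻¹ * ((q : ℝ) ^ 2 * (s : ℝ) ^ (P + 2) * E ^ P *
            sqNormSum P 1 g (residueClasses x r S) ^ ((P : ℝ) / 2)) := by
        gcongr
        · exact sum_moment_residueClasses_le (by omega) zero_le_one hD hqr hnarrow
        · exact hbroad.sum_residueClasses_le hq hqr hs hsr hE hu hv huv
    _ = _ := by ring

end BroadNarrow

section Parameters

variable {q η : ℝ}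

theorem exists_iteration_parameters {k P : ℕ} (hk : 2 ≤ k) (hP : 0 < P) (hη : 0 < η) :
    ∃ M : ℕ, ∃ ε : ℝ, 0 < ε ∧ (P : ℝ) + 4 ≤ η * gain k M 1 * P ∧
      ε * (k : ℝ) ^ M * (k * M) * P ≤ 1 := by
  have hk1 : 0 < (k : ℝ) - 1 := sub_pos.2 (by exact_mod_cast hk)
  have hgain (M : ℕ) : gain k M 1 = M * (((k : ℝ) - 1) / (k : ℝ) ^ 2) + ((k : ℝ) - 1) / k := by
    rw [gain]
    push_cast
    ring
  obtain ⟨M, hM⟩ := exists_nat_ge (((P : ℝ) + 4) / (η * (((k : ℝ) - 1) / (k : ℝ) ^ 2) * P))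
  rw [div_le_iff₀ (by positivity)] at hM
  obtain ⟨ε, hε, hε'⟩ := exists_pos_mul_lt one_pos ((k : ℝ) ^ M * (k * M) * P)
  refine ⟨M, ε, hε, hM.trans ?_, by linarith⟩
  have : 0 ≤ η * (((k : ℝ) - 1) / k) * P := by positivity
  linear_combination this - η * P * hgain M

theorem exists_dvd_mul_rpow_neg_le (hq : 1 < q) (c : ℝ) {δ : ℝ} (hδ : 0 < δ) {F : ℕ} (hF : 0 < F) :
    ∃ b : ℕ, 1 ≤ b ∧ F ∣ b ∧ c * q ^ (-(b : ℝ)) ≤ δ := by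
  obtain ⟨b, hb⟩ := pow_unbounded_of_one_lt (c / δ) hq
  refine ⟨F * (b + 1), Nat.mul_pos hF b.succ_pos, dvd_mul_right _ _, ?_⟩
  rw [Real.rpow_neg (by linarith), Real.rpow_natCast, ← div_eq_mul_inv, div_le_iff₀ (by positivity),
    ← div_le_iff₀' hδ]
  exact hb.le.trans (pow_le_pow_right₀ hq.le (by nlinarith))

theorem pow_mul_bilinearBound_pow_le {P b : ℕ} {A C G K κ ε n : ℝ} (hq : 1 < q) (hA : 0 < A)
    (hC : 1 ≤ C) (hG : (P : ℝ) + 4 ≤ η * G * P) (hε : ε * κ * K * P ≤ 1) :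
    (q ^ b) ^ (P + 2) * bilinearBound A q η n (C * q ^ (ε * (κ * b))) (G * b) K ^ P ≤
      C ^ (K * P) * q ^ (-(b : ℝ)) * (A * q ^ (η * n)) ^ P := by
  obtain ⟨c, rfl⟩ : ∃ c, A = Real.exp c := ⟨_, (Real.exp_log hA).symm⟩
  obtain ⟨d, rfl⟩ : ∃ d, C = Real.exp d := ⟨_, (Real.exp_log (by linarith)).symm⟩
  obtain ⟨e, rfl⟩ : ∃ e, q = Real.exp e := ⟨_, (Real.exp_log (by linarith)).symm⟩
  have he : 0 ≤ e * b := mul_nonneg (Real.one_lt_exp_iff.1 hq).le b.cast_nonneg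
  simp only [bilinearBound, ← Real.rpow_natCast, ← Real.exp_mul, ← Real.exp_add, Real.exp_le_exp]
  push_cast
  linear_combination e * b * hG + e * b * hε

theorem exists_broad_narrow_parameters {k P : ℕ} (hk : 2 ≤ k) (hP : 0 < P) (hq : 1 < q)
    (hη : 0 < η) :
    ∃ M : ℕ, ∃ ε : ℝ, 0 < ε ∧ ∀ C : ℝ, 1 ≤ C → ∃ b : ℕ, 1 ≤ b ∧ k.factorial ^ M ∣ b ∧
      ∃ τ : ℝ, 0 < τ ∧ ∀ A n : ℝ, 0 < A →
        (1 + q * τ) ^ P * (A * q ^ (η * (n - 1))) ^ P + q ^ P * (τ ^ 2)⁻¹ * (q ^ 2 *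
          (q ^ b) ^ (P + 2) * bilinearBound A q η n (C * q ^ (ε * (k ^ M * b)))
            (gain k M 1 * b) (k * M) ^ P) ≤ (A * q ^ (η * n)) ^ P := by
  have hq0 : 0 < q := by linarith
  obtain ⟨M, ε, hε, hG, hεM⟩ := exists_iteration_parameters hk hP hη
  refine ⟨M, ε, hε, fun C hC => ?_⟩
  obtain ⟨τ, hτ⟩ : ∃ τ, 1 + q * τ = q ^ (η / 2) := ⟨(q ^ (η / 2) - 1) / q, by field_simp; ring⟩
  have hτ0 : 0 < τ := by
    have : 1 < q ^ (η / 2) := Real.one_lt_rpow hq (by positivity)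
    exact pos_of_mul_pos_right (by linarith : 0 < q * τ) hq0.le
  have hδ : 0 < 1 - (q ^ (-(η / 2))) ^ P :=
    sub_pos.2 <| pow_lt_one₀ (by positivity)
      (Real.rpow_lt_one_of_one_lt_of_neg hq (by linarith)) hP.ne'
  obtain ⟨b, hb, hFb, hsmall⟩ := exists_dvd_mul_rpow_neg_le hq
    (q ^ P * (τ ^ 2)⁻¹ * q ^ 2 * C ^ ((k : ℝ) * M * P)) hδ (pow_pos k.factorial_pos M)
  refine ⟨b, hb, hFb, τ, hτ0, fun A n hA => ?_⟩
  have hnarrow : (1 + q * τ) * (A * q ^ (η * (n - 1))) = q ^ (-(η / 2)) * (A * q ^ (η * n)) := by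
    rw [hτ, mul_left_comm, mul_left_comm _ A, ← Real.rpow_add hq0, ← Real.rpow_add hq0]
    ring_nf
  have hbroad := pow_mul_bilinearBound_pow_le (b := b) (n := n) hq hA hC hG hεM
  set D := A * q ^ (η * n)
  set E := bilinearBound A q η n (C * q ^ (ε * (k ^ M * b))) (gain k M 1 * b) (k * M)
  calc (1 + q * τ) ^ P * (A * q ^ (η * (n - 1))) ^ P +
        q ^ P * (τ ^ 2)⁻¹ * (q ^ 2 * (q ^ b) ^ (P + 2) * E ^ P)
      = (q ^ (-(η / 2))) ^ P * D ^ P +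
          q ^ P * (τ ^ 2)⁻¹ * q ^ 2 * ((q ^ b) ^ (P + 2) * E ^ P) := by
        rw [← mul_pow, hnarrow, mul_pow]
        ring
    _ ≤ (q ^ (-(η / 2))) ^ P * D ^ P +
          q ^ P * (τ ^ 2)⁻¹ * q ^ 2 * (C ^ ((k : ℝ) * M * P) * q ^ (-(b : ℝ)) * D ^ P) := by gcongr
    _ = ((q ^ (-(η / 2))) ^ P +
          q ^ P * (τ ^ 2)⁻¹ * q ^ 2 * C ^ ((k : ℝ) * M * P) * q ^ (-(b : ℝ))) * D ^ P := by ring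
    _ ≤ 1 * D ^ P := by
        gcongr
        linarith
    _ = D ^ P := one_mul _

end Parameters

section InductionOnScales

variable {ι : Type*} [DecidableEq ι] {p : ℕ} [Fact p.Prime] {k n M b : ℕ} {η A L D τ : ℝ}

theorem Decouples.of_lower_scales (hk : 2 ≤ k) (hkp : k < p) (hη : 0 ≤ η) (hA : 0 < A)
    (hL : 1 ≤ L) (hb : 1 ≤ b) (hFb : k.factorial ^ M ∣ b) (hn : k ^ M * b ≤ n) (hτ : 0 < τ)
    (hlow : ∀ l, l ≠ 0 → l < k → ∀ j ≤ k ^ M * b, Decouples ι p l j L)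
    (ih : ∀ n' < n, Decouples ι p k n' (A * (p : ℝ) ^ (η * n')))
    (hD : (1 + p * τ) ^ (k * (k + 1)) * (A * (p : ℝ) ^ (η * (n - 1))) ^ (k * (k + 1)) +
      (p : ℝ) ^ (k * (k + 1)) * (τ ^ 2)⁻¹ * ((p : ℝ) ^ 2 * ((p : ℝ) ^ b) ^ (k * (k + 1) + 2) *
        bilinearBound A p η n L (gain k M 1 * b) (k * M) ^ (k * (k + 1))) ≤
          D ^ (k * (k + 1))) :
    Decouples ι p k n D := by
  intro N hN hnN φ hφ x a S
  have hp : 1 < p := (Fact.out : p.Prime).one_lt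
  have hbn : b ≤ n := (Nat.le_mul_of_pos_left _ (by positivity)).trans hn
  set g := waveFamily φ (N - n * k) x a
  have hdec : ∀ c, 1 ≤ c → c ≤ n → ∀ S, CongruentOn x ((p : ℤ) ^ c) S →
      HasDecoupling (k * (k + 1)) 1 g (residueClasses x ((p : ℤ) ^ n) S)
        (A * (p : ℝ) ^ (η * (n - c))) := by
    intro c hc hcn S hS
    have h := ih (n - c) (by omega)
    rw [Nat.cast_sub hcn] at h
    exact h.hasDecoupling_of_congruentOn (by positivity) (by omega) hkp hN hnN hφ hc hcn hS
  have hbilinear : BilinearOfDegree p k n g x 1 b b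
      (bilinearBound A p η n L (gain k M 1 * b) (k * M)) := by
    refine BilinearOfDegree.iterate hp.le hA hη hL hn
      (fun c hc hcn S hS => by simpa [bilinearBound] using hdec c hc hcn S hS)
      (fun l c c' b' E hl hlk hc hcc' hc'Z hle hE h => ?_) M 1 b b hk hb hbn hb hFb le_rfl
      (by gcongr; omega)
    exact Decouples.refine_left (hlow l hl hlk _ (by omega)) hL hl hlk hkp hN hnN hφ hc hcc'
      (hc'Z.trans hn) hle hE h
  have hexp : 1 * (1 + 1) + (k * (k + 1) - 1 * (1 + 1)) = k * (k + 1) := by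
    have : 6 ≤ k * (k + 1) := by nlinarith
    omega
  have hmain := moment_le_narrow_add_broad (S := S) (r := (p : ℤ) ^ n) (q := p) (s := p ^ b)
    (by omega) (dvd_pow_self _ (by omega)) (by positivity) (by exact_mod_cast pow_dvd_pow p hbn)
    (by positivity) (bilinearBound_nonneg hA.le p.cast_nonneg (zero_le_one.trans hL) _ _) hτ
    (by omega) (by nlinarith) hexp
    (fun B hB => hdec 1 le_rfl (hb.trans hbn) B
      (by simpa using congruentOn_of_mem_residueClasses hB))
    (by simpa [BilinearOfDegree] using hbilinear)
  refine hmain.trans (mul_le_mul_of_nonneg_right ?_ ?_)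
  · simpa using hD
  · exact Real.rpow_nonneg (sqNormSum_nonneg zero_le_one _) _

theorem exists_uniform_decouples {ε : ℝ} (h : ∀ l, l ≠ 0 → l < k →
      ∃ A : ℝ, 1 ≤ A ∧ ∀ n : ℕ, Decouples ι p l n (A * (p : ℝ) ^ (ε * n))) :
    ∃ C : ℝ, 1 ≤ C ∧ ∀ l, l ≠ 0 → l < k →
      ∀ n : ℕ, Decouples ι p l n (C * (p : ℝ) ^ (ε * n)) := by
  choose! A hA1 hA using h
  have hA0 : ∀ l ∈ {l ∈ range k | l ≠ 0}, 0 ≤ A l := fun l hl => by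
    obtain ⟨hlk, hl⟩ := mem_filter.1 hl
    exact zero_le_one.trans (hA1 l hl (mem_range.1 hlk))
  refine ⟨1 + ∑ l ∈ range k with l ≠ 0, A l, by linarith [sum_nonneg hA0], fun l hl hlk n => ?_⟩
  have hmem : l ∈ {l ∈ range k | l ≠ 0} := mem_filter.2 ⟨mem_range.2 hlk, hl⟩
  refine (hA l hl hlk n).mono (mul_nonneg (hA0 l hmem) (by positivity)) ?_
  gcongr
  linarith [single_le_sum hA0 hmem]

variable (ι p) in
theorem exists_decouples (hk : k ≠ 0) (hkp : k < p) (hη : 0 < η) :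
    ∃ A : ℝ, 1 ≤ A ∧ ∀ n : ℕ, Decouples ι p k n (A * (p : ℝ) ^ (η * n)) := by
  have hp : (1 : ℝ) < p := by exact_mod_cast (Fact.out : p.Prime).one_lt
  have hrpow : ∀ {ε : ℝ} {j : ℕ}, 0 < ε → 1 ≤ (p : ℝ) ^ (ε * j) := fun hε =>
    Real.one_le_rpow hp.le (by positivity)
  induction k using Nat.strong_induction_on generalizing η with
  | _ k ihk =>
  obtain rfl | hk2 := (Nat.one_le_iff_ne_zero.2 hk).eq_or_lt
  · exact ⟨1, le_rfl, fun n => (decouples_one ι p n).mono zero_le_one (by simpa using hrpow hη)⟩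
  obtain ⟨M, ε, hε, hparameters⟩ :=
    exists_broad_narrow_parameters hk2 (Nat.mul_pos hk2.pos k.succ_pos) hp hη
  obtain ⟨C, hC, hlow⟩ := exists_uniform_decouples (ι := ι) (p := p) (k := k) (ε := ε)
    fun l hl hlk => ihk l hlk hl (hlk.trans hkp) hε
  obtain ⟨b, hb, hFb, τ, hτ, hclose⟩ := hparameters C hC
  refine ⟨(p : ℝ) ^ (k ^ M * b), one_le_pow₀ hp.le, fun n => ?_⟩
  induction n using Nat.strong_induction_on with
  | _ n ih =>
  rcases lt_or_ge n (k ^ M * b) with hn | hn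
  · refine (decouples_trivial ι p hk n).mono (by positivity) ?_
    exact (pow_le_pow_right₀ hp.le hn.le).trans (le_mul_of_one_le_right (by positivity) (hrpow hη))
  · refine Decouples.of_lower_scales (L := C * (p : ℝ) ^ (ε * (k ^ M * b))) hk2 hkp hη.le
      (by positivity) ?_ hb hFb hn hτ (fun l hl hlk j hj => ?_) ih (hclose _ n (by positivity))
    · exact one_le_mul_of_one_le_of_one_le hC (Real.one_le_rpow hp.le (by positivity))
    · refine (hlow l hl hlk j).mono (by positivity) ?_
      gcongr
      · exact hp.le
      · exact_mod_cast hj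

end InductionOnScales

/-! ### Counting solutions of the Vinogradov system -/

section Counting

theorem sum_norm_sum_stdAddChar_sq {q k : ℕ} [NeZero q] {κ : Type*} (T : Finset κ)
    (b : κ → Fin k → ZMod q) :
    ∑ α : Fin k → ZMod q, ‖∑ x ∈ T, (ZMod.stdAddChar (∑ j, α j * b x j) : ℂ)‖ ^ 2 =
      Fintype.card (Fin k → ZMod q) * #{xy ∈ T ×ˢ T | b xy.1 = b xy.2} := by
  have hcomplex : ((∑ α : Fin k → ZMod q,
      ‖∑ x ∈ T, (ZMod.stdAddChar (∑ j, α j * b x j) : ℂ)‖ ^ 2 : ℝ) : ℂ) =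
      ((Fintype.card (Fin k → ZMod q) * #{xy ∈ T ×ˢ T | b xy.1 = b xy.2} : ℝ) : ℂ) := by
    push_cast
    simp_rw [← Complex.mul_conj', map_sum, sum_mul_sum, ← AddChar.map_neg_eq_conj,
      ← AddChar.map_add_eq_mul, ← sub_eq_add_neg, ← sum_sub_distrib, ← mul_sub, ← sum_product']
    rw [sum_product_right]
    have horthogonal (xy : κ × κ) : ∑ α : Fin k → ZMod q,
        ZMod.stdAddChar (∑ j, α j * (b xy.1 j - b xy.2 j)) =
          if b xy.1 = b xy.2 then (Fintype.card (Fin k → ZMod q) : ℂ) else 0 := by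
      simpa only [sub_eq_zero, Pi.sub_apply] using sum_stdAddChar_sum_mul (b xy.1 - b xy.2)
    simp_rw [horthogonal]
    rw [← sum_filter, sum_const, nsmul_eq_mul, mul_comm]
  exact_mod_cast hcomplex

theorem sum_pow_le_card_mul_rpow {V : Type*} [Fintype V] {f : V → ℝ} (hf : 0 ≤ f) {m P : ℕ}
    (hm : m ≠ 0) (hmP : m ≤ P) {M : ℝ} (hM : 0 ≤ M) (h : ∑ α, f α ^ P ≤ Fintype.card V * M) :
    ∑ α, f α ^ m ≤ Fintype.card V * M ^ ((m : ℝ) / P) := by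
  have hm0 : (0 : ℝ) < m := by positivity
  have hP0 : (0 : ℝ) < P := by exact_mod_cast (Nat.pos_of_ne_zero hm).trans_le hmP
  have hmP' : 1 ≤ (P : ℝ) / m := (one_le_div hm0).2 (by exact_mod_cast hmP)
  have hpow (α : V) : (f α ^ m) ^ ((P : ℝ) / m) = f α ^ P := by
    rw [← Real.rpow_natCast_mul (hf α), mul_div_cancel₀ _ hm0.ne', Real.rpow_natCast]
  rw [← Real.rpow_le_rpow_iff (sum_nonneg fun α _ => pow_nonneg (hf α) m) (by positivity)
    (div_pos hP0 hm0)]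
  calc (∑ α, f α ^ m) ^ ((P : ℝ) / m)
      ≤ (Fintype.card V : ℝ) ^ ((P : ℝ) / m - 1) * ∑ α, f α ^ P := by
        simpa only [hpow, card_univ] using Real.rpow_sum_le_const_mul_sum_rpow_of_nonneg univ hmP'
          fun α _ => pow_nonneg (hf α) m
    _ ≤ (Fintype.card V : ℝ) ^ ((P : ℝ) / m - 1) * (Fintype.card V * M) := by gcongr
    _ = (Fintype.card V * M ^ ((m : ℝ) / P)) ^ ((P : ℝ) / m) := by
        rw [Real.mul_rpow (by positivity) (by positivity), ← Real.rpow_mul hM,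
          div_mul_div_cancel₀ hP0.ne', div_self hm0.ne', Real.rpow_one, ← mul_assoc,
          ← Real.rpow_add_one' (by positivity) (by linarith), sub_add_cancel]

/-- The moment curve `t ↦ (t, t², …, tᵏ)`. -/
noncomputable def momentCurve (R : Type*) [CommRing R] (k : ℕ) : Fin k → R[X] :=
  fun j => X ^ ((j : ℕ) + 1)

theorem nearMoment_momentCurve {R : Type*} [CommRing R] (π : R) (k : ℕ) :
    NearMoment π (momentCurve R k) :=
  fun _ => ⟨0, by simp [momentCurve]⟩

/-- Vinogradov's exponential sum `∑ e(θ₁ i + θ₂ i² + ⋯ + θₖ iᵏ)` over the integers `i ∈ [1, X]`, at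
the frequencies `θⱼ = αⱼ / p ^ N`. -/
noncomputable def vinogradovSum (p N k : ℕ) [Fact p.Prime] (X : ℝ) (α : Fin k → ZMod (p ^ N)) : ℂ :=
  ∑ i ∈ Icc 1 ⌊X⌋, wave (momentCurve (ZMod (p ^ N)) k) 0 i α

variable {p N k s n : ℕ} [Fact p.Prime] {X M D : ℝ}

theorem vinogradovSum_pow (s : ℕ) (X : ℝ) (α : Fin k → ZMod (p ^ N)) :
    vinogradovSum p N k X α ^ s = ∑ x ∈ Fintype.piFinset fun _ : Fin s => Icc 1 ⌊X⌋,
      ZMod.stdAddChar (∑ j, α j * ∑ i, (x i : ZMod (p ^ N)) ^ ((j : ℕ) + 1)) := by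
  rw [vinogradovSum, sum_pow']
  refine sum_congr rfl fun x _ => ?_
  simp only [mul_sum, wave, momentCurve, pow_zero, one_mul, eval_pow, eval_X]
  rw [sum_comm]
  exact (map_prod ZMod.stdAddChar.toMonoidHom
    (fun i => Multiplicative.ofAdd (∑ j, α j * (x i : ZMod (p ^ N)) ^ ((j : ℕ) + 1))) univ).symm

variable (p N) in
theorem card_mul_Jcount_le (s k : ℕ) (X : ℝ) :
    (Fintype.card (Fin k → ZMod (p ^ N)) : ℝ) * Jcount s k X ≤
      ∑ α, ‖vinogradovSum p N k X α‖ ^ (2 * s) := by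
  simp_rw [mul_comm 2 s, pow_mul, ← norm_pow _ s, vinogradovSum_pow]
  rw [sum_norm_sum_stdAddChar_sq]
  gcongr
  rw [Jcount, ← Set.ncard_coe_finset]
  refine Set.ncard_le_ncard ?_ (finite_toSet _)
  rintro ⟨x, y⟩ ⟨hx, hy, hxy⟩
  have hmem {z : Fin s → ℤ} (hz : ∀ i, 1 ≤ z i ∧ (z i : ℝ) ≤ X) :
      z ∈ Fintype.piFinset fun _ : Fin s => Icc 1 ⌊X⌋ :=
    Fintype.mem_piFinset.2 fun i => mem_Icc.2 ⟨(hz i).1, Int.le_floor.2 (hz i).2⟩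
  refine mem_coe.2 (mem_filter.2 ⟨mk_mem_product (hmem hx) (hmem hy), ?_⟩)
  ext j
  have hj := hxy ((j : ℕ) + 1) (mem_Icc.2 ⟨by omega, by omega⟩)
  rw [sum_sub_distrib, sub_eq_zero] at hj
  exact_mod_cast congrArg (Int.cast : ℤ → ZMod (p ^ N)) hj

theorem card_Icc_floor_le (hX : 0 ≤ X) : (#(Icc 1 ⌊X⌋) : ℝ) ≤ X := by
  rw [Int.card_Icc, add_sub_cancel_right, Int.floor_toNat]
  exact Nat.floor_le hX

theorem norm_vinogradovSum_le (hX : 0 ≤ X) (α : Fin k → ZMod (p ^ N)) :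
    ‖vinogradovSum p N k X α‖ ≤ X :=
  calc ‖vinogradovSum p N k X α‖ ≤ ∑ _i ∈ Icc 1 ⌊X⌋, (1 : ℝ) :=
        norm_sum_le_of_le _ fun _ _ => (AddChar.norm_apply _ _).le
    _ ≤ X := by simpa using card_Icc_floor_le hX

theorem Jcount_le_pow_mul (hs : k * (k + 1) ≤ 2 * s) (hX : 0 ≤ X)
    (h : ∑ α, ‖vinogradovSum p N k X α‖ ^ (k * (k + 1)) ≤
      Fintype.card (Fin k → ZMod (p ^ N)) * M) :
    Jcount s k X ≤ X ^ (2 * s - k * (k + 1)) * M := by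
  refine le_of_mul_le_mul_left ?_ (Nat.cast_pos.2 (Fintype.card_pos (α := Fin k → ZMod (p ^ N))))
  calc Fintype.card (Fin k → ZMod (p ^ N)) * (Jcount s k X : ℝ)
      ≤ ∑ α, ‖vinogradovSum p N k X α‖ ^ (2 * s) := card_mul_Jcount_le p N s k X
    _ ≤ ∑ α, X ^ (2 * s - k * (k + 1)) * ‖vinogradovSum p N k X α‖ ^ (k * (k + 1)) := by
        refine sum_le_sum fun α _ => ?_
        rw [← pow_sub_mul_pow _ hs]
        gcongr
        exact norm_vinogradovSum_le hX α
    _ ≤ X ^ (2 * s - k * (k + 1)) * (Fintype.card (Fin k → ZMod (p ^ N)) * M) := by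
        rw [← mul_sum]
        gcongr
    _ = Fintype.card (Fin k → ZMod (p ^ N)) * (X ^ (2 * s - k * (k + 1)) * M) :=
        mul_left_comm _ _ _

theorem Jcount_le_rpow (hs : s ≠ 0) (hsk : 2 * s ≤ k * (k + 1)) (hM : 0 ≤ M)
    (h : ∑ α, ‖vinogradovSum p N k X α‖ ^ (k * (k + 1)) ≤
      Fintype.card (Fin k → ZMod (p ^ N)) * M) :
    Jcount s k X ≤ M ^ (((2 * s : ℕ) : ℝ) / (k * (k + 1) : ℕ)) :=
  le_of_mul_le_mul_left ((card_mul_Jcount_le p N s k X).trans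
    (sum_pow_le_card_mul_rpow (fun _ => norm_nonneg _) (by omega) hsk hM h))
    (Nat.cast_pos.2 Fintype.card_pos)

theorem card_eq_one_of_mem_residueClasses {S : Finset ℤ} {a q : ℤ} (hS : S ⊆ Ioc a (a + q))
    {B : Finset ℤ} (hB : B ∈ (residueClasses id q S).parts) : #B = 1 := by
  obtain ⟨i, hi⟩ := (residueClasses id q S).nonempty_of_mem_parts hB
  refine card_eq_one.2 ⟨i, eq_singleton_iff_unique_mem.2 ⟨hi, fun j hj => ?_⟩⟩
  have hi' := mem_Ioc.1 (hS ((residueClasses id q S).subset hB hi))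
  have hj' := mem_Ioc.1 (hS ((residueClasses id q S).subset hB hj))
  have hdvd : q ∣ j - i := (congruentOn_of_mem_residueClasses hB i hi j hj).dvd
  exact sub_eq_zero.1 (Int.eq_zero_of_abs_lt_dvd hdvd (abs_lt.2 ⟨by omega, by omega⟩))

theorem moment_one_of_card_eq_one {φ : Fin k → (ZMod (p ^ N))[X]} {m P : ℕ} {B : Finset ℤ}
    (hB : #B = 1) :
    moment P 1 (waveFamily φ m id 1) B = Fintype.card (Fin k → ZMod (p ^ N)) := by
  obtain ⟨i, rfl⟩ := card_eq_one.1 hB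
  simp [moment, waveFamily, wave, AddChar.norm_apply]

theorem Decouples.sum_norm_vinogradovSum_pow_le (hD : Decouples ℤ p k n D) (hk : k ≠ 0)
    (hn : n ≠ 0) (hX : 0 ≤ X) (hXn : X ≤ (p : ℝ) ^ n) :
    ∑ α, ‖vinogradovSum p (n * k) k X α‖ ^ (k * (k + 1)) ≤
      Fintype.card (Fin k → ZMod (p ^ (n * k))) *
        (D ^ (k * (k + 1)) * X ^ (((k * (k + 1) : ℕ) : ℝ) / 2)) := by
  set P := k * (k + 1)
  set K : ℝ := (Fintype.card (Fin k → ZMod (p ^ (n * k))) : ℝ)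
  set g := waveFamily (momentCurve (ZMod (p ^ (n * k))) k) 0 id 1
  set 𝓑 := residueClasses id ((p : ℤ) ^ n) (Icc 1 ⌊X⌋)
  have hP : P ≠ 0 := by positivity
  have hDP : 0 ≤ D ^ P := (Nat.even_mul_succ_self k).pow_nonneg D
  have hsub : Icc 1 ⌊X⌋ ⊆ Ioc 0 (0 + (p : ℤ) ^ n) := by
    have hfloor : ⌊X⌋ ≤ (p : ℤ) ^ n := by exact_mod_cast (Int.floor_le X).trans hXn
    exact fun i hi => mem_Ioc.2 ⟨by grind, by grind⟩
  have hdecoupling : HasDecoupling P 1 g 𝓑 D := by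
    simpa only [Nat.sub_self] using hD (n * k) (by positivity) le_rfl _
      (nearMoment_momentCurve _ k) id 1 (Icc 1 ⌊X⌋)
  have hsq : sqNormSum P 1 g 𝓑 ≤ X * K ^ (2 / (P : ℝ)) := by
    rw [sqNormSum, sum_congr rfl fun B hB => by
      rw [moment_one_of_card_eq_one (card_eq_one_of_mem_residueClasses hsub hB)], sum_const,
      nsmul_eq_mul]
    gcongr
    exact (Nat.cast_le.2 𝓑.card_parts_le_card).trans (card_Icc_floor_le hX)
  calc ∑ α, ‖vinogradovSum p (n * k) k X α‖ ^ P
      = moment P 1 g (Icc 1 ⌊X⌋) := by simp [moment, g, waveFamily, vinogradovSum]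
    _ ≤ D ^ P * sqNormSum P 1 g 𝓑 ^ ((P : ℝ) / 2) := hdecoupling
    _ ≤ D ^ P * (X * K ^ (2 / (P : ℝ))) ^ ((P : ℝ) / 2) := by
        gcongr
        exact sqNormSum_nonneg zero_le_one 𝓑
    _ = K * (D ^ P * X ^ ((P : ℝ) / 2)) := by
        rw [Real.mul_rpow hX (by positivity), rpow_two_div_rpow hP (by positivity)]
        ring

variable (p) in
theorem exists_sum_norm_vinogradovSum_pow_le (hk : k ≠ 0) (hkp : k < p) {ε : ℝ} (hε : 0 < ε) :
    ∃ C : ℝ, 1 ≤ C ∧ ∀ X : ℝ, 1 ≤ X → ∃ N, ∑ α, ‖vinogradovSum p N k X α‖ ^ (k * (k + 1)) ≤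
      Fintype.card (Fin k → ZMod (p ^ N)) *
        (C * X ^ (((k * (k + 1) : ℕ) : ℝ) / 2 + ε)) := by
  set P := k * (k + 1)
  have hp1 : (1 : ℝ) < p := by exact_mod_cast (Fact.out : p.Prime).one_lt
  have hp0 : (0 : ℝ) ≤ p := Nat.cast_nonneg p
  have hP : (0 : ℝ) < P := by positivity
  obtain ⟨A, hA, hdec⟩ := exists_decouples ℤ p hk hkp (div_pos hε hP)
  refine ⟨A ^ P * (p : ℝ) ^ ε, one_le_mul_of_one_le_of_one_le (one_le_pow₀ hA)
    (Real.one_le_rpow hp1.le hε.le), fun X hX => ?_⟩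
  have hX0 : 0 < X := by linarith
  obtain ⟨n, hnX, hXn⟩ := exists_nat_pow_near hX hp1
  refine ⟨(n + 1) * k,
    ((hdec (n + 1)).sum_norm_vinogradovSum_pow_le hk n.succ_ne_zero hX0.le hXn.le).trans ?_⟩
  have hloss : ((p : ℝ) ^ (ε / P * ((n + 1 : ℕ) : ℝ))) ^ P ≤ (p : ℝ) ^ ε * X ^ ε := by
    rw [← Real.rpow_mul_natCast hp0, mul_right_comm, div_mul_cancel₀ _ hP.ne', mul_comm,
      Real.rpow_natCast_mul hp0, ← Real.mul_rpow hp0 hX0.le, pow_succ']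
    gcongr
  refine mul_le_mul_of_nonneg_left ?_ (Nat.cast_nonneg _)
  calc (A * (p : ℝ) ^ (ε / P * ((n + 1 : ℕ) : ℝ))) ^ P * X ^ ((P : ℝ) / 2)
      ≤ A ^ P * ((p : ℝ) ^ ε * X ^ ε) * X ^ ((P : ℝ) / 2) := by
        rw [mul_pow]
        gcongr
    _ = A ^ P * (p : ℝ) ^ ε * X ^ ((P : ℝ) / 2 + ε) := by
        rw [Real.rpow_add hX0]
        ring

end Counting

theorem exists_Jcount_le {k s : ℕ} (hk : k ≠ 0) (hs : s ≠ 0) {ε : ℝ} (hε : 0 < ε) :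
    ∃ C : ℝ, 0 < C ∧ ∀ X : ℝ, 1 ≤ X →
      Jcount s k X ≤ C * X ^ (2 * (s : ℝ) - min (s : ℝ) (((k * (k + 1) : ℕ) : ℝ) / 2) + ε) := by
  obtain ⟨p, hkp, hp⟩ := Nat.exists_infinite_primes (k + 1)
  have : Fact p.Prime := ⟨hp⟩
  obtain ⟨C, hC, h⟩ := exists_sum_norm_vinogradovSum_pow_le p hk hkp hε
  have hC0 : 0 < C := by linarith
  refine ⟨C, hC0, fun X hX => ?_⟩
  have hX0 : 0 < X := by linarith
  obtain ⟨N, hN⟩ := h X hX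
  rcases le_total (k * (k + 1)) (2 * s) with hle | hle
  · have hle' : ((k * (k + 1) : ℕ) : ℝ) ≤ 2 * s := by exact_mod_cast hle
    refine (Jcount_le_pow_mul hle hX0.le hN).trans_eq ?_
    rw [min_eq_right (by linarith), mul_left_comm, ← Real.rpow_natCast X, ← Real.rpow_add hX0,
      Nat.cast_sub hle]
    push_cast
    ring_nf
  · have hle' : 2 * (s : ℝ) ≤ ((k * (k + 1) : ℕ) : ℝ) := by exact_mod_cast hle
    have hP : (0 : ℝ) < ((k * (k + 1) : ℕ) : ℝ) := by positivity
    set θ : ℝ := ((2 * s : ℕ) : ℝ) / (k * (k + 1) : ℕ)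
    have hθ1 : θ ≤ 1 := (div_le_one hP).2 (by exact_mod_cast hle)
    have hθP : θ * (k * (k + 1) : ℕ) = 2 * s := by
      rw [div_mul_cancel₀ _ hP.ne', Nat.cast_mul, Nat.cast_ofNat]
    calc (Jcount s k X : ℝ) ≤ (C * X ^ (((k * (k + 1) : ℕ) : ℝ) / 2 + ε)) ^ θ :=
          Jcount_le_rpow hs hle (by positivity) hN
      _ = C ^ θ * X ^ (s + ε * θ) := by
          rw [Real.mul_rpow hC0.le (by positivity), ← Real.rpow_mul hX0.le]
          congr 2
          linear_combination hθP / 2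
      _ ≤ C ^ (1 : ℝ) * X ^ (s + ε) := by
          gcongr
          exact mul_le_of_le_one_right hε.le hθ1
      _ = C * X ^ (2 * (s : ℝ) - min (s : ℝ) (((k * (k + 1) : ℕ) : ℝ) / 2) + ε) := by
          rw [min_eq_left (by linarith), Real.rpow_one, two_mul, add_sub_cancel_right]

theorem intCast_mul_sub_one_nonneg (n : ℤ) : (0 : ℝ) ≤ n * (n - 1) := by
  have h : 0 ≤ n * (n - 1) := by
    rcases le_or_gt n 0 with hn | hn
    · exact mul_nonneg_of_nonpos_of_nonpos hn (by omega)
    · exact mul_nonneg hn.le (by omega)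
  exact_mod_cast h

theorem kappa_le_mul {k r t : ℕ} (ht : 1 ≤ t) (hr : 1 ≤ r) (hrt : k ≤ r + t) :
    kappa k r t ≤ r * (t + 1) := by
  have ht' : (1 : ℝ) ≤ t := by exact_mod_cast ht
  have hr' : (1 : ℝ) ≤ r := by exact_mod_cast hr
  have hrt' : (k : ℝ) ≤ r + t := by exact_mod_cast hrt
  have hquotient : 0 ≤ ((t : ℝ) + r - k) * ((2 * r - 2) / (t - 1)) :=
    mul_nonneg (by linarith) (div_nonneg (by linarith) (by linarith))
  have hconsecutive := intCast_mul_sub_one_nonneg (t + r - k)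
  push_cast at hconsecutive
  unfold kappa
  linarith

theorem kappa_le_triangular {k r t : ℕ} (ht : 2 ≤ t) (htk : t ≤ k) (hrt : k ≤ r + t) :
    kappa k r t ≤ ((k * (k + 1) : ℕ) : ℝ) / 2 := by
  have ht' : (2 : ℝ) ≤ t := by exact_mod_cast ht
  have htk' : (t : ℝ) ≤ k := by exact_mod_cast htk
  have hrt' : (k : ℝ) ≤ r + t := by exact_mod_cast hrt
  have hd := intCast_mul_sub_one_nonneg (k - t)
  have hu := intCast_mul_sub_one_nonneg (k - r + 1)
  push_cast at hd hu
  set m : ℝ := t + r - k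
  set d : ℝ := k - t
  set u : ℝ := k - r
  have hquotient : (2 * (r : ℝ) - 2) / (t - 1) = 2 + 2 * ((d - u) / (t - 1)) := by
    field_simp [show (t : ℝ) - 1 ≠ 0 by linarith]
    ring
  have hkey : -(u * (u + 1) + d * (d - 1)) ≤ 2 * (m * ((d - u) / (t - 1))) := by
    rcases le_or_gt u d with hud | hdu
    · have hfrac : 0 ≤ m * ((d - u) / (t - 1)) :=
        mul_nonneg (by linarith) (div_nonneg (by linarith) (by linarith))
      linarith
    · have hu1 : 1 ≤ u := by
        have hrt : r < t := by exact_mod_cast (by linarith : (r : ℝ) < t)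
        have hrk : (r : ℝ) + 1 ≤ k := by exact_mod_cast hrt.trans_le htk
        linarith
      have hfrac : d - u ≤ m * ((d - u) / (t - 1)) := by
        rw [mul_div_assoc', le_div_iff₀ (by linarith)]
        nlinarith
      nlinarith
  rw [kappa, hquotient]
  push_cast
  linear_combination hkey / 2

end Vinogradov

theorem theorem1_3_general (k r t : ℕ) (ht : 2 ≤ t) (htk : t ≤ k) (hr : 1 ≤ r) (hrt : k ≤ r + t)
    (ε : ℝ) (hε : 0 < ε) :
    ∃ C : ℝ, 0 < C ∧ ∀ X : ℝ, 1 ≤ X →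
      (Jcount (r * (t + 1)) k X : ℝ) ≤
        C * X ^ (2 * (r : ℝ) * ((t : ℝ) + 1) - kappa k r t + ε) := by
  obtain ⟨C, hC, h⟩ := Vinogradov.exists_Jcount_le (k := k) (s := r * (t + 1)) (by omega)
    (by positivity) hε
  refine ⟨C, hC, fun X hX => (h X hX).trans ?_⟩
  have hκ := le_min (Vinogradov.kappa_le_mul (one_le_two.trans ht) hr hrt)
    (Vinogradov.kappa_le_triangular ht htk hrt)
  refine mul_le_mul_of_nonneg_left (Real.rpow_le_rpow_of_exponent_le hX ?_) hC.le
  push_cast at hκ ⊢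
  linarith

/-- Theorem 1.3: under the conditions (1.6) on k, r, t one has
J_{r(t+1),k}(X) ≤ C X^{2r(t+1) - κ + ε}. -/
theorem theorem1_3 (k r t : ℕ) (hk : 2 ≤ k)
    (ht1 : max 2 (((k : ℝ) - 1) / 2) ≤ (t : ℝ)) (ht2 : t ≤ k)
    (hr1 : 1 ≤ r) (hr2 : r ≤ k) (hrt : k ≤ r + t) (ε : ℝ) (hε : 0 < ε) :
    ∃ C : ℝ, 0 < C ∧ ∀ X : ℝ, 1 ≤ X →
      (Jcount (r * (t + 1)) k X : ℝ) ≤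
        C * X ^ (2 * (r : ℝ) * ((t : ℝ) + 1) - kappa k r t + ε) :=
  theorem1_3_general k r t (by exact_mod_cast (le_max_left _ _).trans ht1) ht2 hr1 hrt ε hε
end

section
/- Let k, r, t be natural numbers with k ≥ 2, max{2, (k−1)/2} ≤ t ≤ k, 1 ≤ r ≤ k and r + t ≥ k, and put μ = (1/2)(t+r−k)(t+r−k−1) and ν = (1/2)(t+r−k)(k+r−t−1). There exists a constant C₀ = C₀(k) such that for every prime p > C₀ and all integers a, b with 0 ≤ a < b and b ≥ (k−t−1)a, one has B_{a,b}^{r,t}(p) ≤ k!·p^{μb + νa}. -/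
noncomputable section

/-- The set Ξ_c^r(ξ): r-tuples of integers in [1, p^{c+1}], congruent to ξ mod p^c,
and pairwise distinct modulo p^{c+1}. -/
def XiSet (p r c : ℕ) (ξ : ℤ) : Set (Fin r → ℤ) :=
  {v | (∀ i, 1 ≤ v i ∧ v i ≤ (p : ℤ) ^ (c + 1)) ∧
       (∀ i, Int.ModEq ((p : ℤ) ^ c) (v i) ξ) ∧
       Function.Injective fun i => ((v i : ZMod (p ^ (c + 1))))}

/-- The solution set B_{a,b}^r(m;ξ,η) of the system of congruences (3.1):
r-tuples z with 1 ≤ z_i ≤ p^{kb}, satisfying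
∑_i (z_i - η)^j ≡ m_j (mod p^{jb}) for 1 ≤ j ≤ k, with z congruent modulo p^{a+1}
to some member of Ξ_a^r(ξ) (for a = 0 the tuple ξ is replaced by 0, the congruence is
modulo p, and additionally z_i is not congruent to η mod p).  Here the index j of m
is shifted: m j codes m_{j+1}. -/
def Bset (p r k a b : ℕ) (m : Fin k → ℤ) (ξ η : ℤ) : Set (Fin r → ℤ) :=
  {z | (∀ i, 1 ≤ z i ∧ z i ≤ (p : ℤ) ^ (k * b)) ∧
       (∀ j : Fin k,
          Int.ModEq ((p : ℤ) ^ (((j : ℕ) + 1) * b)) (∑ i, (z i - η) ^ ((j : ℕ) + 1)) (m j)) ∧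
       (∃ v ∈ XiSet p r a (if a = 0 then 0 else ξ),
          ∀ i, Int.ModEq ((p : ℤ) ^ (a + 1)) (z i) (v i)) ∧
       (a = 0 → ∀ i, ¬ Int.ModEq (p : ℤ) (z i) η)}

/-- The number of equivalence classes of B_{a,b}^r(m;ξ,η) under componentwise
congruence modulo p^{tb}, i.e. card C_{a,b}^{r,t}(m;ξ,η). -/
def numClasses (p r t k a b : ℕ) (m : Fin k → ℤ) (ξ η : ℤ) : ℕ :=
  Set.ncard
    ((fun (z : Fin r → ℤ) (i : Fin r) => ((z i : ZMod (p ^ (t * b))))) '' Bset p r k a b m ξ η)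

/-- μ = (1/2)(t+r-k)(t+r-k-1). -/
def muC (k r t : ℕ) : ℝ := (1/2) * ((t : ℝ) + r - k) * ((t : ℝ) + r - k - 1)

/-- ν = (1/2)(t+r-k)(k+r-t-1). -/
def nuC (k r t : ℕ) : ℝ := (1/2) * ((t : ℝ) + r - k) * ((k : ℝ) + r - t - 1)

/-!
Write `k = t + d` and `r = d + s`. A solution has the form `z_i = η + ζ + p ^ a y_i` with `ζ` and
all `z_i - η` units modulo `p` and the `y_i` distinct modulo `p`, and the classes modulo
`p ^ (t * b)` of the `z` are those of the `y` modulo `p ^ (t * b - a)`.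

Integrating `k! X ^ (k-1-j) (X - ζ) ^ j` from `ζ` gives a combination of `X ^ (k-j), …, X ^ k` and a
constant whose value at `ζ + p ^ a y` is `p ^ ((j+1) * a) * ψ_j(y)`. Hence the system determines
`∑ ψ_j(y_i)` modulo `p ^ (t * b - a)` for all `j < r`, once one has fixed the missing digits of the
power sums of degrees `t - i` (`p ^ (i * b)` choices) and of the sums of `ψ_{d+i}`
(`p ^ ((d+i) * a)` choices), for `i < s`; these choices multiply to `p ^ (μb + νa)`.

Given those data, Newton's identities leave at most `r!` possibilities for `y` modulo `p`: if
`a > 0`, then `ψ_j` reduces modulo `p` to a nonzero multiple of `X ^ (j+1)`, and if `a = 0`, the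
power sums of the `ζ + y_i` are known modulo `p`. The
Jacobian of the sums `∑ ψ_j(y_i)` is a homogeneous Vandermonde matrix in `ζ + p ^ a y_i` and `y_i`,
invertible modulo `p`, so by Hensel's lemma each possibility lifts in at most one way to
`p ^ (t * b - a)`.
-/

open Polynomial
open scoped Nat

section PowerSums

variable {ι R : Type*} [Fintype ι] [CommRing R] {x y : ι → R}

theorem exists_perm_of_map_univ_eq {α : Type*} {x y : ι → α}
    (h : Finset.univ.val.map x = Finset.univ.val.map y) : ∃ σ : Equiv.Perm ι, x = y ∘ σ := by
  classical
  have hcard (c : α) : Fintype.card {i // x i = c} = Fintype.card {i // y i = c} := by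
    have hcount := congrArg (Multiset.count c) h
    simp only [Multiset.count_map, eq_comm (a := c)] at hcount
    rw [Fintype.card_subtype, Fintype.card_subtype]
    exact hcount
  let e := Equiv.ofFiberEquiv fun c => Fintype.equivOfCardEq (hcard c)
  exact ⟨e, funext fun i => (Equiv.ofFiberEquiv_map _ i).symm⟩

theorem natCast_ne_zero_of_factorial_ne_zero {N n : ℕ} (hN : (N ! : R) ≠ 0) (hn : 1 ≤ n)
    (hnN : n ≤ N) : (n : R) ≠ 0 := fun h =>
  hN (zero_dvd_iff.mp (h ▸ Nat.cast_dvd_cast (Nat.dvd_factorial hn hnN)))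

variable [IsDomain R]

theorem aeval_esymm_eq_of_forall_sum_pow_eq {N : ℕ} (hN : (N ! : R) ≠ 0)
    (h : ∀ n, 1 ≤ n → n ≤ N → ∑ i, x i ^ n = ∑ i, y i ^ n) (n : ℕ) (hn : n ≤ N) :
    MvPolynomial.aeval x (MvPolynomial.esymm ι R n) =
      MvPolynomial.aeval y (MvPolynomial.esymm ι R n) := by
  induction n using Nat.strong_induction_on with
  | _ n ih =>
    obtain rfl | hpos := Nat.eq_zero_or_pos n
    · simp
    have newton (z : ι → R) := congrArg (MvPolynomial.aeval z) (MvPolynomial.mul_esymm_eq_sum ι R n)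
    simp only [map_mul, map_natCast, map_pow, map_neg, map_one, map_sum, MvPolynomial.psum,
      MvPolynomial.aeval_X] at newton
    apply mul_left_cancel₀ (natCast_ne_zero_of_factorial_ne_zero hN hpos hn)
    rw [newton, newton]
    congr 1
    refine Finset.sum_congr rfl fun c hc => ?_
    obtain ⟨hc, hlt⟩ := Finset.mem_filter.mp hc
    rw [Finset.HasAntidiagonal.mem_antidiagonal] at hc
    rw [ih c.1 hlt (by lia), h c.2 (by lia) (by lia)]

theorem exists_perm_of_forall_sum_pow_eq (hR : ((Fintype.card ι)! : R) ≠ 0)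
    (h : ∀ n, 1 ≤ n → n ≤ Fintype.card ι → ∑ i, x i ^ n = ∑ i, y i ^ n) :
    ∃ σ : Equiv.Perm ι, x = y ∘ σ := by
  have hprod : ((Finset.univ.val.map x).map fun a => X - C a).prod =
      ((Finset.univ.val.map y).map fun a => X - C a).prod := by
    simp only [Multiset.prod_X_sub_X_eq_sum_esymm, Multiset.card_map, Finset.card_val,
      Finset.card_univ]
    refine Finset.sum_congr rfl fun n hn => ?_
    rw [← MvPolynomial.aeval_esymm_eq_multiset_esymm ι R,
      ← MvPolynomial.aeval_esymm_eq_multiset_esymm ι R,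
      aeval_esymm_eq_of_forall_sum_pow_eq hR h n (Finset.mem_range_succ_iff.mp hn)]
  have hroots := congrArg roots hprod
  rw [roots_multiset_prod_X_sub_C, roots_multiset_prod_X_sub_C] at hroots
  exact exists_perm_of_map_univ_eq hroots

end PowerSums

section Hensel

variable {p : ℕ}

theorem eval_add_modEq (f : ℤ[X]) (x h : ℤ) :
    f.eval (x + h) ≡ f.eval x + (derivative f).eval x * h [ZMOD h ^ 2] := by
  obtain ⟨c, hc⟩ := f.binomExpansion x h
  rw [hc]
  simp

variable [Fact p.Prime] {ι : Type*} [Fintype ι] [DecidableEq ι] {ψ : ι → ℤ[X]} {y y' : ι → ℤ}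

theorem modEq_pow_succ_of_sum_eval_modEq
    (hdet : (Matrix.of fun j i => (((derivative (ψ j)).eval (y i) : ℤ) : ZMod p)).det ≠ 0)
    {s : ℕ} (hs : 1 ≤ s) (hy : ∀ i, y i ≡ y' i [ZMOD p ^ s])
    (h : ∀ j, ∑ i, (ψ j).eval (y i) ≡ ∑ i, (ψ j).eval (y' i) [ZMOD p ^ (s + 1)]) (i : ι) :
    y i ≡ y' i [ZMOD p ^ (s + 1)] := by
  have hp0 : (p : ℤ) ^ s ≠ 0 := pow_ne_zero _ (mod_cast (Fact.out : p.Prime).ne_zero)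
  choose q hq using fun i => (hy i).dvd
  obtain rfl : y' = fun i => y i + p ^ s * q i := funext fun i => by rw [← hq i]; ring
  have hlinear (j : ι) : (p : ℤ) ∣ ∑ i, (derivative (ψ j)).eval (y i) * q i := by
    have htaylor (i : ι) : (ψ j).eval (y i + p ^ s * q i) ≡
        (ψ j).eval (y i) + p ^ s * ((derivative (ψ j)).eval (y i) * q i) [ZMOD p ^ (s + 1)] := by
      rw [mul_left_comm]
      refine (eval_add_modEq (ψ j) (y i) (p ^ s * q i)).of_dvd ?_
      rw [mul_pow, ← pow_mul]
      exact (pow_dvd_pow _ (by lia)).mul_right _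
    have hsum := (h j).trans (Int.ModEq.sum fun i _ => htaylor i)
    rw [Finset.sum_add_distrib, ← Finset.mul_sum, Int.left_modEq_add_iff, pow_succ] at hsum
    exact Int.dvd_of_mul_dvd_mul_left hp0 hsum
  have hkernel : (Matrix.of fun j i => (((derivative (ψ j)).eval (y i) : ℤ) : ZMod p)).mulVec
      (fun i => (q i : ZMod p)) = 0 := by
    funext j
    simpa [Matrix.mulVec, dotProduct] using (ZMod.intCast_zmod_eq_zero_iff_dvd _ p).mpr (hlinear j)
  have hq0 := congrFun (Matrix.eq_zero_of_mulVec_eq_zero hdet hkernel) i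
  have hpq : (p : ℤ) ∣ q i := (ZMod.intCast_zmod_eq_zero_iff_dvd _ p).mp hq0
  rw [Int.modEq_iff_dvd, add_sub_cancel_left, pow_succ]
  exact mul_dvd_mul_left _ hpq

theorem modEq_pow_of_sum_eval_modEq
    (hdet : (Matrix.of fun j i => (((derivative (ψ j)).eval (y i) : ℤ) : ZMod p)).det ≠ 0)
    (hy : ∀ i, y i ≡ y' i [ZMOD p]) {N : ℕ}
    (h : ∀ j, ∑ i, (ψ j).eval (y i) ≡ ∑ i, (ψ j).eval (y' i) [ZMOD p ^ N]) (i : ι) :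
    y i ≡ y' i [ZMOD p ^ N] := by
  obtain rfl | hN := Nat.eq_zero_or_pos N
  · simp [Int.modEq_one]
  induction N, hN using Nat.le_induction generalizing i with
  | base => simpa using hy i
  | succ s hs ih =>
    exact modEq_pow_succ_of_sum_eval_modEq hdet hs
      (ih fun j => (h j).of_dvd (pow_dvd_pow _ s.le_succ)) h i

end Hensel

theorem det_mul_pow_mul_pow_ne_zero {R : Type*} [CommRing R] [IsDomain R] {r k : ℕ} (hrk : r ≤ k)
    {c ζ q : R} (hc : c ≠ 0) (hζ : ζ ≠ 0) {y : Fin r → R} (hy : Function.Injective y)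
    (hu : ∀ i, ζ + q * y i ≠ 0) :
    (Matrix.of fun j i : Fin r => c * (ζ + q * y i) ^ (k - 1 - j : ℕ) * y i ^ (j : ℕ)).det ≠ 0 := by
  have hfactor : (Matrix.of fun j i : Fin r =>
      c * (ζ + q * y i) ^ (k - 1 - j : ℕ) * y i ^ (j : ℕ)) =
      (Matrix.of fun i j => (c * (ζ + q * y i) ^ (k - r)) *
        Matrix.projVandermonde y (fun i => ζ + q * y i) i j).transpose := by
    ext j i
    simp only [Matrix.of_apply, Matrix.transpose_apply, Matrix.projVandermonde_apply, Fin.val_rev]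
    rw [show k - 1 - (j : ℕ) = (k - r) + (r - (j + 1)) by lia, pow_add]
    ring
  rw [hfactor, Matrix.det_transpose, Matrix.det_mul_column, Matrix.det_projVandermonde]
  refine mul_ne_zero (Finset.prod_ne_zero_iff.mpr fun i _ => mul_ne_zero hc (pow_ne_zero _ (hu i)))
    (Finset.prod_ne_zero_iff.mpr fun i _ => Finset.prod_ne_zero_iff.mpr fun j hj => ?_)
  rw [show y j * (ζ + q * y i) - y i * (ζ + q * y j) = ζ * (y j - y i) by ring]
  exact mul_ne_zero hζ (sub_ne_zero.mpr (hy.ne (Finset.mem_Ioi.mp hj).ne'))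

section ScaledPrimitive

variable {R : Type*} [CommRing R]

/-- The antiderivative without constant term of a polynomial of degree less than `k`, multiplied
by `k !` so that no division in `R` is needed. The terms of degree at least `k` are dropped. -/
def scaledPrimitive (k : ℕ) (P : R[X]) : R[X] :=
  ∑ n ∈ Finset.range k, C (((k ! / (n + 1) : ℕ) : R) * P.coeff n) * X ^ (n + 1)

theorem derivative_scaledPrimitive {k : ℕ} {P : R[X]} (hP : P.natDegree < k) :
    derivative (scaledPrimitive k P) = C (k ! : R) * P := by
  conv_rhs => rw [P.as_sum_range_C_mul_X_pow' hP]
  rw [scaledPrimitive, derivative_sum, Finset.mul_sum]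
  refine Finset.sum_congr rfl fun n hn => ?_
  have hcancel : ((k ! / (n + 1) : ℕ) : R) * (n + 1 : ℕ) = k ! := by
    rw [← Nat.cast_mul, Nat.div_mul_cancel
      (Nat.dvd_factorial n.succ_pos (Nat.succ_le_of_lt (Finset.mem_range.mp hn)))]
  rw [derivative_C_mul_X_pow, ← hcancel, add_tsub_cancel_right]
  simp only [C_mul]
  ring

theorem natDegree_scaledPrimitive_le (k : ℕ) (P : R[X]) : (scaledPrimitive k P).natDegree ≤ k :=
  natDegree_sum_le_of_forall_le _ _ fun _ hn =>
    (natDegree_C_mul_X_pow_le _ _).trans (Nat.succ_le_of_lt (Finset.mem_range.mp hn))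

theorem X_pow_succ_dvd_scaledPrimitive {m : ℕ} (k : ℕ) {P : R[X]} (h : X ^ m ∣ P) :
    X ^ (m + 1) ∣ scaledPrimitive k P := by
  refine Finset.dvd_sum fun n _ => ?_
  obtain hn | hn := lt_or_ge n m
  · simp [X_pow_dvd_iff.mp h n hn]
  · exact (pow_dvd_pow X (Nat.succ_le_succ hn)).mul_left _

theorem eval_zero_scaledPrimitive (k : ℕ) (P : R[X]) : (scaledPrimitive k P).eval 0 = 0 := by
  simp [scaledPrimitive, eval_finsetSum]

theorem map_scaledPrimitive {S : Type*} [CommRing S] (f : R →+* S) (k : ℕ) (P : R[X]) :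
    (scaledPrimitive k P).map f = scaledPrimitive k (P.map f) := by
  simp [scaledPrimitive, Polynomial.map_sum]

theorem scaledPrimitive_C_mul_X_pow {k j : ℕ} (hj : j < k) (a : R) :
    scaledPrimitive k (C a * X ^ j) = C (((k ! / (j + 1) : ℕ) : R) * a) * X ^ (j + 1) := by
  rw [scaledPrimitive, Finset.sum_eq_single_of_mem j (Finset.mem_range.mpr hj)]
  · simp
  · intro n _ hn
    simp [coeff_X_pow, hn]

/-- The combination `f_j` of the monomials `X ^ (k - j), …, X ^ k` whose expansion around `ζ` has
no terms of degree `1, …, j`. -/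
def centredCombination (k : ℕ) (ζ : R) (j : ℕ) : R[X] :=
  scaledPrimitive k (X ^ (k - 1 - j) * (X - C ζ) ^ j)

/-- The polynomial `ψ_j` with `f_j (ζ + q y) = f_j ζ + q ^ (j + 1) ψ_j (y)`, where `f_j` is
`centredCombination k ζ j`. -/
def rescaledCombination (k : ℕ) (ζ q : R) (j : ℕ) : R[X] :=
  scaledPrimitive k ((C ζ + C q * X) ^ (k - 1 - j) * X ^ j)

theorem natDegree_centredCombination_le (k : ℕ) (ζ : R) (j : ℕ) :
    (centredCombination k ζ j).natDegree ≤ k :=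
  natDegree_scaledPrimitive_le k _

theorem X_pow_dvd_centredCombination {k j : ℕ} (hj : j < k) (ζ : R) :
    X ^ (k - j) ∣ centredCombination k ζ j := by
  rw [show k - j = k - 1 - j + 1 by lia]
  exact X_pow_succ_dvd_scaledPrimitive k (dvd_mul_right _ _)

theorem derivative_centredCombination {k j : ℕ} (hj : j < k) (ζ : R) :
    derivative (centredCombination k ζ j) = C (k ! : R) * (X ^ (k - 1 - j) * (X - C ζ) ^ j) := by
  refine derivative_scaledPrimitive ?_
  have : (X ^ (k - 1 - j) * (X - C ζ) ^ j).natDegree ≤ (k - 1 - j) + j := by compute_degree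
  lia

theorem derivative_rescaledCombination {k j : ℕ} (hj : j < k) (ζ q : R) :
    derivative (rescaledCombination k ζ q j) =
      C (k ! : R) * ((C ζ + C q * X) ^ (k - 1 - j) * X ^ j) := by
  refine derivative_scaledPrimitive ?_
  have : ((C ζ + C q * X) ^ (k - 1 - j) * X ^ j).natDegree ≤ (k - 1 - j) + j := by compute_degree
  lia

theorem centredCombination_comp [IsDomain R] [CharZero R] {k j : ℕ} (hj : j < k) (ζ q : R) :
    (centredCombination k ζ j).comp (C ζ + C q * X) =
      C ((centredCombination k ζ j).eval ζ) + C (q ^ (j + 1)) * rescaledCombination k ζ q j := by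
  set D := (centredCombination k ζ j).comp (C ζ + C q * X) -
    C (q ^ (j + 1)) * rescaledCombination k ζ q j with hD
  have hderiv : derivative D = 0 := by
    rw [hD, derivative_sub, derivative_comp, derivative_C_mul, derivative_centredCombination hj,
      derivative_rescaledCombination hj]
    simp only [derivative_add, derivative_C, derivative_mul, zero_mul, derivative_X, mul_one,
      zero_add, map_natCast, mul_comp, natCast_comp, pow_comp, X_comp, sub_comp, C_comp,
      add_sub_cancel_left, map_pow]
    ring
  have hconst : D.eval 0 = (centredCombination k ζ j).eval ζ := by
    simp [hD, rescaledCombination, eval_zero_scaledPrimitive]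
  rw [← hconst, ← coeff_zero_eq_eval_zero, ← eq_C_of_derivative_eq_zero hderiv, hD, sub_add_cancel]

theorem eval_rescaledCombination_zero {k j : ℕ} (hj : j < k) (ζ y : R) :
    (rescaledCombination k ζ 0 j).eval y =
      ((k ! / (j + 1) : ℕ) : R) * ζ ^ (k - 1 - j) * y ^ (j + 1) := by
  rw [rescaledCombination, C_0, zero_mul, add_zero, ← C_pow, scaledPrimitive_C_mul_X_pow hj]
  simp

theorem map_rescaledCombination {S : Type*} [CommRing S] (f : R →+* S) (k : ℕ) (ζ q : R) (j : ℕ) :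
    (rescaledCombination k ζ q j).map f = rescaledCombination k (f ζ) (f q) j := by
  simp [rescaledCombination, map_scaledPrimitive]

end ScaledPrimitive

theorem sum_eval_modEq_of_forall_sum_pow_modEq {ι : Type*} [Fintype ι] {k m : ℕ} {f : ℤ[X]}
    (hdeg : f.natDegree ≤ k) (hX : X ^ m ∣ f) {M : ℤ} {u u' : ι → ℤ}
    (h : ∀ n, m ≤ n → n ≤ k → ∑ i, u i ^ n ≡ ∑ i, u' i ^ n [ZMOD M]) :
    ∑ i, f.eval (u i) ≡ ∑ i, f.eval (u' i) [ZMOD M] := by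
  have hsum (v : ι → ℤ) : ∑ i, f.eval (v i) =
      ∑ n ∈ Finset.range (k + 1), f.coeff n * ∑ i, v i ^ n := by
    simp only [eval_eq_sum_range' (Nat.lt_succ_of_le hdeg), Finset.mul_sum]
    exact Finset.sum_comm
  rw [hsum, hsum]
  refine Int.ModEq.sum fun n hn => ?_
  obtain hnm | hmn := lt_or_ge n m
  · simp [X_pow_dvd_iff.mp hX n hnm]
  · exact (h n hmn (Finset.mem_range_succ_iff.mp hn)).mul_left _

theorem sum_rescaledCombination_modEq {ι : Type*} [Fintype ι] {k j : ℕ} (hj : j < k) {p : ℕ}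
    (hp : p ≠ 0) {a M : ℕ} {ζ : ℤ} {y y' : ι → ℤ}
    (h : ∀ n, k - j ≤ n → n ≤ k →
      ∑ i, (ζ + p ^ a * y i) ^ n ≡ ∑ i, (ζ + p ^ a * y' i) ^ n [ZMOD p ^ M]) :
    ∑ i, (rescaledCombination k ζ (p ^ a) j).eval (y i) ≡
      ∑ i, (rescaledCombination k ζ (p ^ a) j).eval (y' i) [ZMOD p ^ (M - (j + 1) * a)] := by
  obtain hM | hM := lt_or_ge M ((j + 1) * a)
  · simp [Nat.sub_eq_zero_of_le hM.le, Int.modEq_one]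
  have hexpand (v : ι → ℤ) : ∑ i, (centredCombination k ζ j).eval (ζ + p ^ a * v i) =
      ∑ _i : ι, (centredCombination k ζ j).eval ζ +
        p ^ ((j + 1) * a) * ∑ i, (rescaledCombination k ζ (p ^ a) j).eval (v i) := by
    rw [Finset.mul_sum, ← Finset.sum_add_distrib]
    refine Finset.sum_congr rfl fun i _ => ?_
    have := congrArg (eval (v i)) (centredCombination_comp hj ζ ((p : ℤ) ^ a))
    rw [eval_comp] at this
    simpa [← pow_mul, mul_comm a] using this
  have hcentred := sum_eval_modEq_of_forall_sum_pow_modEq (natDegree_centredCombination_le k ζ j)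
    (X_pow_dvd_centredCombination hj ζ) h
  rw [hexpand, hexpand, ← Nat.add_sub_cancel' hM, pow_add] at hcentred
  exact (Int.ModEq.add_left_cancel' _ hcentred).mul_left_cancel'
    (pow_ne_zero _ (mod_cast hp))
section RescaledTuples

variable {p k r : ℕ} {ζ : ℤ} {y y' : Fin r → ℤ}

theorem intCast_zmod_ne_zero (hζ : ¬ (p : ℤ) ∣ ζ) : (ζ : ZMod p) ≠ 0 := by
  rwa [Ne, ZMod.intCast_zmod_eq_zero_iff_dvd]

variable [Fact p.Prime]

theorem factorial_cast_zmod_ne_zero (hk : k < p) : (k ! : ZMod p) ≠ 0 := by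
  rw [Ne, ZMod.natCast_eq_zero_iff, (Fact.out : p.Prime).dvd_factorial]
  exact hk.not_ge

theorem modEq_of_sum_rescaledCombination_modEq (hk : k < p) (hrk : r ≤ k) (hζ : ¬ (p : ℤ) ∣ ζ)
    {q : ℤ} (hinj : Function.Injective fun i => (y i : ZMod p))
    (hunit : ∀ i, ¬ (p : ℤ) ∣ ζ + q * y i) (hy : ∀ i, y i ≡ y' i [ZMOD p]) {N : ℕ}
    (h : ∀ j : Fin r, ∑ i, (rescaledCombination k ζ q j).eval (y i) ≡
      ∑ i, (rescaledCombination k ζ q j).eval (y' i) [ZMOD p ^ N]) (i : Fin r) :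
    y i ≡ y' i [ZMOD p ^ N] := by
  refine modEq_pow_of_sum_eval_modEq ?_ hy h i
  have hdet := det_mul_pow_mul_pow_ne_zero hrk (factorial_cast_zmod_ne_zero hk)
    (intCast_zmod_ne_zero hζ) hinj (q := (q : ZMod p))
    (fun i => by simpa using intCast_zmod_ne_zero (hunit i))
  convert hdet using 4 with j i
  rw [derivative_rescaledCombination (j.isLt.trans_le hrk)]
  simp [mul_assoc]

theorem exists_perm_of_sum_rescaledCombination_modEq (hk : k < p) (hrk : r ≤ k)
    (hζ : ¬ (p : ℤ) ∣ ζ) {q : ℤ} (hq : (p : ℤ) ∣ q)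
    (h : ∀ j : Fin r, ∑ i, (rescaledCombination k ζ q j).eval (y i) ≡
      ∑ i, (rescaledCombination k ζ q j).eval (y' i) [ZMOD p]) :
    ∃ σ : Equiv.Perm (Fin r), (fun i => (y i : ZMod p)) = (fun i => (y' i : ZMod p)) ∘ σ := by
  refine exists_perm_of_forall_sum_pow_eq
    (by simpa using factorial_cast_zmod_ne_zero (hrk.trans_lt hk)) fun n hn hnr => ?_
  obtain ⟨j, rfl⟩ := Nat.exists_eq_add_of_le' hn
  rw [Fintype.card_fin] at hnr
  have hjk : j < k := by lia
  have hleading (v : Fin r → ℤ) :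
      ((∑ i, (rescaledCombination k ζ q j).eval (v i) : ℤ) : ZMod p) =
        ((k ! / (j + 1) : ℕ) : ZMod p) * (ζ : ZMod p) ^ (k - 1 - j) *
          ∑ i, (v i : ZMod p) ^ (j + 1) := by
    rw [Int.cast_sum, Finset.mul_sum]
    refine Finset.sum_congr rfl fun i _ => ?_
    have hq0 : (q : ZMod p) = 0 := (ZMod.intCast_zmod_eq_zero_iff_dvd q p).mpr hq
    rw [← eval_rescaledCombination_zero hjk, ← hq0]
    have := eval_map_apply (f := Int.castRingHom (ZMod p)) (p := rescaledCombination k ζ q j) (v i)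
    rw [map_rescaledCombination] at this
    exact this.symm
  have hfactor : ((k ! / (j + 1) : ℕ) : ZMod p) ≠ 0 := fun h0 =>
    factorial_cast_zmod_ne_zero hk <| by
      rw [← Nat.div_mul_cancel (Nat.dvd_factorial j.succ_pos hjk), Nat.cast_mul, h0, zero_mul]
  have hj := (ZMod.intCast_eq_intCast_iff _ _ p).mpr (h ⟨j, hnr⟩)
  rw [hleading, hleading] at hj
  exact mul_left_cancel₀ (mul_ne_zero hfactor (pow_ne_zero _ (intCast_zmod_ne_zero hζ))) hj

theorem exists_perm_of_sum_pow_add_modEq (hr : r < p)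
    (h : ∀ n, 1 ≤ n → n ≤ r → ∑ i, (ζ + y i) ^ n ≡ ∑ i, (ζ + y' i) ^ n [ZMOD p]) :
    ∃ σ : Equiv.Perm (Fin r), (fun i => (y i : ZMod p)) = (fun i => (y' i : ZMod p)) ∘ σ := by
  obtain ⟨σ, hσ⟩ := exists_perm_of_forall_sum_pow_eq (x := fun i => (ζ : ZMod p) + y i)
    (y := fun i => (ζ : ZMod p) + y' i) (by simpa using factorial_cast_zmod_ne_zero hr)
    fun n hn hnr => by
      simpa using (ZMod.intCast_eq_intCast_iff _ _ p).mpr (h n hn (by simpa using hnr))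
  exact ⟨σ, funext fun i => add_left_cancel (congrFun hσ i)⟩

end RescaledTuples

/-- The residue modulo `p ^ f` of the quotient of `x` by `p ^ e`: the base-`p` digits of `x` in
positions `e, …, e + f - 1`. -/
def digits (p e f : ℕ) (x : ℤ) : ZMod (p ^ f) :=
  (x / (p : ℤ) ^ e : ℤ)

theorem modEq_pow_add_of_digits_eq {p e f : ℕ} {x y : ℤ} (h : x ≡ y [ZMOD p ^ e])
    (hdigits : digits p e f x = digits p e f y) : x ≡ y [ZMOD p ^ (e + f)] := by
  have hquot : x / (p : ℤ) ^ e ≡ y / (p : ℤ) ^ e [ZMOD p ^ f] := by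
    exact_mod_cast (ZMod.intCast_eq_intCast_iff _ _ _).mp hdigits
  rw [← Int.mul_ediv_add_emod x (p ^ e), ← Int.mul_ediv_add_emod y (p ^ e), h.eq, pow_add]
  exact hquot.mul_left'.add_right _

section Counting

variable {α β γ : Type*}

theorem ncard_image_le_ncard_image {f : α → β} {g : α → γ} {U : Set α} (hf : (f '' U).Finite)
    (h : ∀ u ∈ U, ∀ u' ∈ U, f u = f u' → g u = g u') : (g '' U).ncard ≤ (f '' U).ncard := by
  obtain rfl | ⟨u₀, -⟩ := U.eq_empty_or_nonempty
  · simp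
  have : Nonempty α := ⟨u₀⟩
  have himage : g '' U = (g ∘ Function.invFunOn f U) '' (f '' U) := by
    rw [Set.image_image]
    exact Set.image_congr fun u hu => h u hu _ (Function.invFunOn_apply_mem hu)
      (Function.invFunOn_apply_eq hu).symm
  rw [himage]
  exact Set.ncard_image_le hf

theorem ncard_image_prod_le_factorial_mul_card {ι F : Type*} [Fintype ι] [Finite γ] {U : Set α}
    {D : α → γ} {x : α → ι → F}
    (h : ∀ u ∈ U, ∀ u' ∈ U, D u = D u' → ∃ σ : Equiv.Perm ι, x u = x u' ∘ σ) :
    ((fun u => (D u, x u)) '' U).ncard ≤ (Fintype.card ι)! * Nat.card γ := by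
  obtain rfl | ⟨u₀, -⟩ := U.eq_empty_or_nonempty
  · simp
  have hbase (g : γ) : ∃ w : ι → F, ∀ u ∈ U, D u = g → ∃ σ : Equiv.Perm ι, x u = w ∘ σ := by
    by_cases hg : ∃ u ∈ U, D u = g
    · obtain ⟨u, hu, rfl⟩ := hg
      exact ⟨x u, fun u' hu' hD => h u' hu' u hu hD⟩
    · exact ⟨x u₀, fun u hu hD => (hg ⟨u, hu, hD⟩).elim⟩
  choose base hbase using hbase
  have hsubset : (fun u => (D u, x u)) '' U ⊆
      Set.range fun c : Equiv.Perm ι × γ => (c.2, base c.2 ∘ c.1) := by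
    rintro _ ⟨u, hu, rfl⟩
    obtain ⟨σ, hσ⟩ := hbase _ u hu rfl
    exact ⟨(σ, D u), by simp [hσ]⟩
  calc ((fun u => (D u, x u)) '' U).ncard
      ≤ (Set.range fun c : Equiv.Perm ι × γ => (c.2, base c.2 ∘ c.1)).ncard :=
        Set.ncard_le_ncard hsubset (Set.finite_range _)
    _ ≤ Nat.card (Equiv.Perm ι × γ) := Finite.card_range_le _
    _ = (Fintype.card ι)! * Nat.card γ := by
      rw [Nat.card_prod, Nat.card_perm, Nat.card_eq_fintype_card]

end Counting

/-- The agreement of the first `k` power sums of two tuples to the precision of the system of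
congruences (3.1): the `n`-th power sums are congruent modulo `p ^ (n * b)`. -/
def PowerSumsModEq {r : ℕ} (p k b : ℕ) (u u' : Fin r → ℤ) : Prop :=
  ∀ n, 1 ≤ n → n ≤ k → ∑ i, u i ^ n ≡ ∑ i, u' i ^ n [ZMOD p ^ (n * b)]

/-- The digits of a tuple `u = ζ + p ^ a y` that its power sums leave free, for `k = t + d` and
`r = d + s`: those that complete the power sums of degree `t - i` to precision `p ^ (t * b)`, and
those that complete the sums of the values of `ψ_{d + i}` to precision `p ^ (t * b - a)`. -/
def freeDigits {r : ℕ} (p t d s a b : ℕ) (ζ : ℤ) (y : Fin r → ℤ) :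
    ((i : Fin s) → ZMod (p ^ ((i : ℕ) * b))) × ((i : Fin s) → ZMod (p ^ ((d + (i : ℕ)) * a))) :=
  (fun i => digits p ((t - i) * b) (i * b) (∑ l, (ζ + p ^ a * y l) ^ (t - i : ℕ)),
   fun i => digits p (t * b - (d + i + 1) * a) ((d + i) * a)
     (∑ l, (rescaledCombination (t + d) ζ (p ^ a) (d + i)).eval (y l)))

section FreeDigits

variable {p t d s a b : ℕ} {ζ : ℤ}

theorem sum_pow_modEq_of_freeDigits_eq {r : ℕ} {y y' : Fin r → ℤ} (hst : s ≤ t)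
    (hpow : PowerSumsModEq p (t + d) b (fun i => ζ + p ^ a * y i) (fun i => ζ + p ^ a * y' i))
    (hdigits : freeDigits p t d s a b ζ y = freeDigits p t d s a b ζ y')
    {n : ℕ} (hn : t < n + s) (hnk : n ≤ t + d) :
    ∑ i, (ζ + p ^ a * y i) ^ n ≡ ∑ i, (ζ + p ^ a * y' i) ^ n [ZMOD p ^ (t * b)] := by
  have hsum := hpow n (by lia) hnk
  obtain htn | hnt := le_or_gt t n
  · exact hsum.of_dvd (pow_dvd_pow _ (Nat.mul_le_mul_right b htn))
  · have hdigit := congrFun (congrArg Prod.fst hdigits) ⟨t - n, by lia⟩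
    simp only [freeDigits, Nat.sub_sub_self hnt.le] at hdigit
    have := modEq_pow_add_of_digits_eq hsum hdigit
    rwa [← add_mul, Nat.add_sub_cancel' hnt.le] at this

theorem card_freeDigits :
    Nat.card (((i : Fin s) → ZMod (p ^ ((i : ℕ) * b))) ×
      ((i : Fin s) → ZMod (p ^ ((d + (i : ℕ)) * a)))) =
      p ^ (∑ i ∈ Finset.range s, i * b + ∑ i ∈ Finset.range s, (d + i) * a) := by
  simp only [Nat.card_prod, Nat.card_pi, Nat.card_zmod, Finset.prod_pow_eq_pow_sum, ← pow_add,
    Finset.sum_range]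

variable [hp : Fact p.Prime] {y y' : Fin (d + s) → ℤ}

theorem sum_rescaledCombination_modEq_of_freeDigits_eq (hst : s ≤ t) (hda : d * a ≤ b + a)
    (hpow : PowerSumsModEq p (t + d) b (fun i => ζ + p ^ a * y i) (fun i => ζ + p ^ a * y' i))
    (hdigits : freeDigits p t d s a b ζ y = freeDigits p t d s a b ζ y') (j : Fin (d + s)) :
    ∑ i, (rescaledCombination (t + d) ζ (p ^ a) j).eval (y i) ≡
      ∑ i, (rescaledCombination (t + d) ζ (p ^ a) j).eval (y' i) [ZMOD p ^ (t * b - a)] := by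
  induction j using Fin.addCases with
  | left j =>
    have hprec : t * b - a ≤ (t + 1) * b - (j + 1) * a := by
      have : ((j : ℕ) + 1) * a ≤ d * a := Nat.mul_le_mul_right a j.isLt
      rw [Nat.succ_mul t]
      omega
    refine Int.ModEq.of_dvd (pow_dvd_pow _ hprec) (sum_rescaledCombination_modEq
      (by lia) hp.out.ne_zero fun n hn hnk => ?_)
    exact (hpow n (by lia) hnk).of_dvd (pow_dvd_pow _ (Nat.mul_le_mul_right b (by lia)))
  | right i =>
    have hprec : t * b - a ≤ t * b - (d + i + 1) * a + (d + i) * a := by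
      rw [Nat.succ_mul]
      omega
    have hcoarse := sum_rescaledCombination_modEq (k := t + d) (j := d + i) (by lia)
      hp.out.ne_zero fun n hn hnk =>
        sum_pow_modEq_of_freeDigits_eq hst hpow hdigits (by lia) hnk
    rw [Fin.val_natAdd]
    exact (modEq_pow_add_of_digits_eq hcoarse (congrFun (congrArg Prod.snd hdigits) i)).of_dvd
      (pow_dvd_pow _ hprec)

theorem exists_perm_of_freeDigits_eq (hst : s ≤ t) (hkp : t + d < p) (hatb : a < t * b)
    (hda : d * a ≤ b + a) (hζ : ¬ (p : ℤ) ∣ ζ)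
    (hpow : PowerSumsModEq p (t + d) b (fun i => ζ + p ^ a * y i) (fun i => ζ + p ^ a * y' i))
    (hdigits : freeDigits p t d s a b ζ y = freeDigits p t d s a b ζ y') :
    ∃ σ : Equiv.Perm (Fin (d + s)),
      (fun i => (y i : ZMod p)) = (fun i => (y' i : ZMod p)) ∘ σ := by
  obtain rfl | ha := eq_or_ne a 0
  · have hb : b ≠ 0 := by rintro rfl; simp at hatb
    refine exists_perm_of_sum_pow_add_modEq (ζ := ζ) (by lia) fun n hn hnr => ?_
    have := (hpow n hn (by lia)).of_dvd (dvd_pow_self (p : ℤ) (by positivity))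
    simpa using this
  · exact exists_perm_of_sum_rescaledCombination_modEq hkp (by lia) hζ (dvd_pow_self _ ha)
      fun j => (sum_rescaledCombination_modEq_of_freeDigits_eq hst hda hpow hdigits j).of_dvd
        (dvd_pow_self _ (by lia))

theorem ncard_residues_le (hst : s ≤ t) (hkp : t + d < p) (hda : d * a ≤ b + a)
    (hζ : ¬ (p : ℤ) ∣ ζ) {Y : Set (Fin (d + s) → ℤ)}
    (hpow : ∀ y ∈ Y, ∀ y' ∈ Y,
      PowerSumsModEq p (t + d) b (fun i => ζ + p ^ a * y i) (fun i => ζ + p ^ a * y' i))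
    (hinj : ∀ y ∈ Y, Function.Injective fun i => (y i : ZMod p))
    (hunit : ∀ y ∈ Y, ∀ i, ¬ (p : ℤ) ∣ ζ + p ^ a * y i) :
    ((fun y i => (y i : ZMod (p ^ (t * b - a)))) '' Y).ncard ≤
      (d + s)! * p ^ (∑ i ∈ Finset.range s, i * b + ∑ i ∈ Finset.range s, (d + i) * a) := by
  have : NeZero p := ⟨hp.out.ne_zero⟩
  obtain hatb | hatb := le_or_gt (t * b) a
  · rw [Nat.sub_eq_zero_of_le hatb, pow_zero]
    exact (Set.ncard_le_one_of_subsingleton _).trans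
      (Nat.mul_pos (Nat.factorial_pos _) (pow_pos hp.out.pos _))
  have hclass := ncard_image_le_ncard_image (U := Y)
    (f := fun y => (freeDigits p t d s a b ζ y, fun i => (y i : ZMod p)))
    (g := fun y i => (y i : ZMod (p ^ (t * b - a)))) (Set.toFinite _)
    fun y hy y' hy' heq => funext fun i => by
      obtain ⟨hdigits, hmod⟩ := Prod.mk.inj heq
      refine (ZMod.intCast_eq_intCast_iff _ _ _).mpr ?_
      push_cast
      exact modEq_of_sum_rescaledCombination_modEq hkp (by lia) hζ (hinj y hy) (hunit y hy)
        (fun i => (ZMod.intCast_eq_intCast_iff _ _ _).mp (congrFun hmod i))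
        (sum_rescaledCombination_modEq_of_freeDigits_eq hst hda (hpow y hy y' hy') hdigits) i
  refine hclass.trans ((ncard_image_prod_le_factorial_mul_card fun y hy y' hy' hdigits =>
    exists_perm_of_freeDigits_eq hst hkp hatb hda hζ (hpow y hy y' hy') hdigits).trans_eq ?_)
  rw [card_freeDigits, Fintype.card_fin]

end FreeDigits

section Bset

variable {p r t k a b : ℕ} {m : Fin k → ℤ} {ξ η ζ : ℤ} {z z' : Fin r → ℤ}

theorem powerSumsModEq_of_mem_Bset (hz : z ∈ Bset p r k a b m ξ η)
    (hz' : z' ∈ Bset p r k a b m ξ η) :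
    PowerSumsModEq p k b (fun i => z i - η) (fun i => z' i - η) := by
  intro n hn hnk
  obtain ⟨j, rfl⟩ := Nat.exists_eq_add_of_le' hn
  exact (hz.2.1 ⟨j, hnk⟩).trans (hz'.2.1 ⟨j, hnk⟩).symm

theorem injective_of_mem_Bset (hz : z ∈ Bset p r k a b m ξ η) :
    Function.Injective fun i => (z i : ZMod (p ^ (a + 1))) := by
  obtain ⟨-, -, ⟨v, ⟨-, -, hv⟩, hzv⟩, -⟩ := hz
  convert hv using 2 with i
  exact (ZMod.intCast_eq_intCast_iff _ _ _).mpr (by simpa using hzv i)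

theorem modEq_of_mem_Bset (ha : a ≠ 0) (hz : z ∈ Bset p r k a b m ξ η) (i : Fin r) :
    z i ≡ ξ [ZMOD p ^ a] := by
  obtain ⟨-, -, ⟨v, ⟨-, hv, -⟩, hzv⟩, -⟩ := hz
  rw [if_neg ha] at hv
  exact ((hzv i).of_dvd (pow_dvd_pow _ a.le_succ)).trans (hv i)

theorem not_dvd_sub_of_mem_Bset (hξη : a ≠ 0 → ¬ η ≡ ξ [ZMOD p])
    (hz : z ∈ Bset p r k a b m ξ η) (i : Fin r) : ¬ (p : ℤ) ∣ z i - η := by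
  rw [← Int.modEq_iff_dvd]
  obtain rfl | ha := eq_or_ne a 0
  · exact fun h => hz.2.2.2 rfl i h.symm
  · exact fun h => hξη ha (h.trans ((modEq_of_mem_Bset ha hz i).of_dvd (dvd_pow_self _ ha)))

theorem exists_unit_centre (hp : p.Prime) (hξη : a ≠ 0 → ¬ η ≡ ξ [ZMOD p]) :
    ∃ ζ : ℤ, ¬ (p : ℤ) ∣ ζ ∧
      ∀ z : Fin r → ℤ, z ∈ Bset p r k a b m ξ η → ∀ i, (p : ℤ) ^ a ∣ z i - (η + ζ) := by
  obtain rfl | ha := eq_or_ne a 0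
  · exact ⟨1, fun h => hp.one_lt.ne' (Int.natCast_dvd_natCast.mp h |> Nat.dvd_one.mp), by simp⟩
  · refine ⟨ξ - η, fun h => hξη ha (Int.modEq_iff_dvd.mpr h), fun z hz i => ?_⟩
    rw [add_sub_cancel]
    exact (modEq_of_mem_Bset ha hz i).symm.dvd

theorem injective_of_add_pow_mul_mem_Bset (c : ℤ) {y : Fin r → ℤ}
    (hy : (fun i => c + p ^ a * y i) ∈ Bset p r k a b m ξ η) :
    Function.Injective fun i => (y i : ZMod p) := by
  intro i i' hii'
  apply injective_of_mem_Bset hy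
  refine (ZMod.intCast_eq_intCast_iff _ _ _).mpr ?_
  push_cast
  rw [pow_succ]
  exact ((ZMod.intCast_eq_intCast_iff _ _ _).mp hii').mul_left'.add_left c

theorem numClasses_le_ncard_rescaled (hp : p ≠ 0) {c : ℤ}
    (hc : ∀ z ∈ Bset p r k a b m ξ η, ∀ i, (p : ℤ) ^ a ∣ z i - c) :
    numClasses p r t k a b m ξ η ≤ ((fun y i => (y i : ZMod (p ^ (t * b - a)))) ''
      {y : Fin r → ℤ | (fun i => c + p ^ a * y i) ∈ Bset p r k a b m ξ η}).ncard := by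
  have : NeZero p := ⟨hp⟩
  have hrescale : Bset p r k a b m ξ η = (fun y i => c + (p : ℤ) ^ a * y i) ''
      {y : Fin r → ℤ | (fun i => c + p ^ a * y i) ∈ Bset p r k a b m ξ η} := by
    refine (Set.image_preimage_eq_of_subset fun z hz => ?_).symm
    choose y hy using hc z hz
    exact ⟨y, funext fun i => by simp only [← hy i, add_sub_cancel]⟩
  rw [numClasses, hrescale, Set.image_image, ← hrescale]
  refine ncard_image_le_ncard_image (Set.toFinite _) fun y _ y' _ hyy' => funext fun i => ?_
  have hmod := (ZMod.intCast_eq_intCast_iff _ _ _).mp (congrFun hyy' i)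
  refine (ZMod.intCast_eq_intCast_iff _ _ _).mpr ?_
  push_cast at hmod ⊢
  have := hmod.mul_left' (c := (p : ℤ) ^ a)
  rw [← pow_add] at this
  exact (this.of_dvd (pow_dvd_pow _ le_add_tsub)).add_left c

end Bset

theorem muC_mul_add_nuC_mul (t d s a b : ℕ) :
    muC (t + d) (d + s) t * b + nuC (t + d) (d + s) t * a =
      (∑ i ∈ Finset.range s, i * b + ∑ i ∈ Finset.range s, (d + i) * a : ℕ) := by
  induction s with
  | zero => simp [muC, nuC]
  | succ s ih =>
    simp only [muC, nuC, Finset.sum_range_succ, Nat.cast_add, Nat.cast_mul, Nat.cast_one] at ih ⊢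
    linear_combination ih

theorem lemma3_3_general {k r t p a b : ℕ} (ht : t ≤ k) (hr : r ≤ k) (hrt : k ≤ r + t)
    (hp : p.Prime) (hkp : k < p) (hab : ((k : ℝ) - t - 1) * a ≤ b) (m : Fin k → ℤ) {ξ η : ℤ}
    (hξη : a ≠ 0 → ¬ η ≡ ξ [ZMOD p]) :
    (numClasses p r t k a b m ξ η : ℝ) ≤ r ! * (p : ℝ) ^ (muC k r t * b + nuC k r t * a) := by
  have : Fact p.Prime := ⟨hp⟩
  obtain ⟨d, rfl⟩ := Nat.exists_eq_add_of_le ht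
  obtain ⟨s, rfl⟩ : ∃ s, r = d + s := Nat.exists_eq_add_of_le (by lia)
  have hda : d * a ≤ b + a := by
    have : (d : ℝ) * a ≤ b + a := by push_cast at hab; linarith
    exact_mod_cast this
  obtain ⟨ζ, hζ, hcentre⟩ := exists_unit_centre (r := d + s) (m := m) (b := b) hp hξη
  have hshift (y : Fin (d + s) → ℤ) (i : Fin (d + s)) :
      η + ζ + p ^ a * y i - η = ζ + p ^ a * y i := by ring
  have hcount := (numClasses_le_ncard_rescaled (t := t) hp.ne_zero hcentre).trans
    (ncard_residues_le (by lia) hkp hda hζ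
      (fun y hy y' hy' => by simpa only [hshift] using powerSumsModEq_of_mem_Bset hy hy')
      (fun y hy => injective_of_add_pow_mul_mem_Bset _ hy)
      (fun y hy i => by simpa only [hshift] using not_dvd_sub_of_mem_Bset hξη hy i))
  rw [muC_mul_add_nuC_mul, Real.rpow_natCast]
  exact_mod_cast hcount

/-- Lemma 3.3: under the conditions (1.6) on k, r, t, for p a sufficiently large prime
(in terms of k) and integers 0 ≤ a < b with b ≥ (k-t-1)a, one has
B_{a,b}^{r,t}(p) ≤ k! p^{μb + νa}; equivalently, every class count
card C_{a,b}^{r,t}(m;ξ,η), for parameters in the prescribed ranges, obeys this bound. -/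
theorem lemma3_3 (k r t : ℕ) (hk : 2 ≤ k)
    (ht1 : max 2 (((k : ℝ) - 1) / 2) ≤ (t : ℝ)) (ht2 : t ≤ k)
    (hr1 : 1 ≤ r) (hr2 : r ≤ k) (hrt : k ≤ r + t) :
    ∃ C₀ : ℝ, ∀ p : ℕ, p.Prime → C₀ < (p : ℝ) →
      ∀ a b : ℕ, a < b → ((k : ℝ) - t - 1) * a ≤ (b : ℝ) →
      ∀ (m : Fin k → ℤ) (ξ η : ℤ),
        ((a = 0 ∧ ξ = 0) ∨
          (1 ≤ a ∧ 1 ≤ ξ ∧ ξ ≤ (p : ℤ) ^ a ∧ ¬ Int.ModEq (p : ℤ) η ξ)) →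
        1 ≤ η → η ≤ (p : ℤ) ^ b →
        (∀ j, 1 ≤ m j ∧ m j ≤ (p : ℤ) ^ (k * b)) →
        (numClasses p r t k a b m ξ η : ℝ) ≤
          (Nat.factorial k : ℝ) * (p : ℝ) ^ (muC k r t * b + nuC k r t * a) := by
  refine ⟨k, fun p hp hkp a b _ hab m ξ η hξη _ _ _ => ?_⟩
  exact (lemma3_3_general ht2 hr2 hrt hp (mod_cast hkp) hab m (by grind)).trans (by gcongr)

end
end
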